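/- arXiv:1105.2792 — 2 statements merged into one kernel-verified Lean document; each statement's English description precedes it below -/
import Mathlib

section
/- Let F be a countable field and let (A_i)_{i∈I}, I ⊆ ℤ_{>0}, be a countable collection of countable subsets of F. Then there exists a field K such that F ⊆ K, K has transcendence degree 1 over F, K has infinite degree over F(t) for any t ∈ K transcendental over F (i.e. K is an infinite algebraic extension of F(t)), and every set A_i is first-order definable in K: for each i there is a first-order formula in the language of rings with parameters from K whose set of realizations in K is exactly A_i. -/
/-- A subset `s` of a field `K` is first-order definable over `K`: there is a first-order
formula in the language of rings, with parameters from `K`, whose set of realizations in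
`K` is exactly `s`. -/
def definableWithParams (K : Type*) [Field K] (s : Set K) : Prop :=
  letI := FirstOrder.Ring.compatibleRingOfRing K
  Set.Definable₁ (Set.univ : Set K) FirstOrder.Language.ring s

/-!
We may replace `F` by its algebraic closure. Let `t` be transcendental over `F`, let `Ω` be an
algebraic closure of `F(t)` and fix distinct primes `ℓ`, `p` and `r i`, all different from the
characteristic. The field `K ⊆ Ω` is a union of a generic chain of finitely generated fields, in
which `t - a` has an `r i`-th root exactly when `a ∉ A i`, while for `a ∈ A i` its value stays
indivisible by `r i` at the zeros of `t - a`. Every element of `K` becomes a `p`-th power, which no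
finitely generated field allows.

It remains to define the constants. If `1 + w z ^ ℓ` is an `ℓ`-th power then the value of `w` is
divisible by `ℓ` at every place where `w z ^ ℓ` does not vanish. In `K` the converse holds once sums
of two such `z` are allowed: it suffices to adjoin `ℓ`-th roots of `1 + w (e z) ^ ℓ` and
`1 + w ((1 - e) z) ^ ℓ` for a constant `e`, and all but finitely many `e` do this without making
values divisible which have to stay indivisible. This local condition at `z = 1` implies the one at
any constant `z`, as constants have no poles. If instead `x` is not constant, some `π`
vanishes at a pole of `x` to an order indivisible by `ℓ` and at most `ℓ` times that of the pole,
so `w = π / (1 - π) ^ ℓ` satisfies the condition at `1` but not at `x`.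
-/

namespace CountableDefinability

open IntermediateField Polynomial Topology

section Valuation

variable {F Ω Γ₀ : Type*} [Field F] [Field Ω] [Algebra F Ω]
  [LinearOrderedCommGroupWithZero Γ₀] {v : Valuation Ω Γ₀}

theorem isAlgebraic_adjoin_of_trdeg_le_one (hd : Algebra.trdeg F Ω ≤ 1) {x : Ω}
    (hx : Transcendental F x) (z : Ω) : IsAlgebraic (Algebra.adjoin F {x}) z := by
  have hind : AlgebraicIndependent F ((↑) : ({x} : Set Ω) → Ω) :=
    algebraicIndependent_unique_type_iff.2 hx
  have hbasis := hind.isTranscendenceBasis_of_trdeg_le_of_finite (by simpa using hd)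
  have := hbasis.isAlgebraic
  rw [Subtype.range_coe] at this
  exact this.isAlgebraic z

theorem valuation_aeval_le_one [v.IsTrivialOn F] {x : Ω} (hx : v x ≤ 1) (p : F[X]) :
    v (aeval x p) ≤ 1 := by
  rw [aeval_eq_sum_range]
  refine v.map_sum_le fun i _ => ?_
  rw [Algebra.smul_def, map_mul, map_pow]
  exact mul_le_one' (Valuation.IsTrivialOn.valuation_algebraMap_le_one _ _) (pow_le_one' hx _)

theorem exists_valuation_aeval_eq_pow [hv : v.IsTrivialOn F] {x : Ω} (hx : v x < 1)
    {p : F[X]} (hp : p ≠ 0) : ∃ k : ℕ, v (aeval x p) = v x ^ k := by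
  obtain ⟨q, hpq, hq⟩ := p.exists_eq_pow_rootMultiplicity_mul_and_not_dvd hp 0
  have hq0 : q.coeff 0 ≠ 0 := fun h => hq (by simpa using X_dvd_iff.2 h)
  have hlt : v (aeval x q.divX * x) < v (algebraMap F Ω (q.coeff 0)) := by
    rw [hv.eq_one _ hq0, map_mul]
    exact mul_lt_one_of_nonneg_of_lt_one_right (valuation_aeval_le_one hx.le _) zero_le hx
  have hvq : v (aeval x q) = 1 := by
    rw [← q.divX_mul_X_add, map_add, map_mul, aeval_X, aeval_C, v.map_add_eq_of_lt_right hlt,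
      hv.eq_one _ hq0]
  refine ⟨p.rootMultiplicity 0, ?_⟩
  conv_lhs => rw [hpq]
  simp [hvq]

-- The constant coefficient of an algebraic relation for `z` over `F[x]` is a multiple of `z`.
theorem exists_valuation_aeval_le [v.IsTrivialOn F] (hd : Algebra.trdeg F Ω ≤ 1) {x z : Ω}
    (htr : Transcendental F x) (hx : v x ≤ 1) (hz : v z ≤ 1) (hz0 : z ≠ 0) :
    ∃ p : F[X], p ≠ 0 ∧ v (aeval x p) ≤ v z := by
  have exists_aeval (a : Algebra.adjoin F {x}) : ∃ p : F[X], aeval x p = a := by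
    simpa [Algebra.adjoin_singleton_eq_range_aeval] using a.2
  obtain ⟨q, hq0, hq⟩ := (isAlgebraic_adjoin_of_trdeg_le_one hd htr
    z).exists_nonzero_coeff_and_aeval_eq_zero (mem_nonZeroDivisors_of_ne_zero hz0)
  obtain ⟨p, hp⟩ := exists_aeval (q.coeff 0)
  refine ⟨p, fun h => hq0 (Subtype.ext (by simp [← hp, h])), ?_⟩
  rw [← q.divX_mul_X_add, map_add, map_mul, aeval_X, aeval_C] at hq
  have hpq : aeval x p = -(aeval z q.divX * z) := by
    rw [hp]
    exact eq_neg_of_add_eq_zero_right hq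
  rw [hpq, Valuation.map_neg, map_mul, aeval_eq_sum_range]
  refine mul_le_of_le_one_left' (v.map_sum_le fun i _ => ?_)
  obtain ⟨r, hr⟩ := exists_aeval (q.divX.coeff i)
  rw [Algebra.smul_def, map_mul, map_pow]
  refine mul_le_one' ?_ (pow_le_one' hz i)
  exact (congrArg v hr).symm.trans_le (valuation_aeval_le_one hx r)

theorem exists_valuation_pow_le [v.IsTrivialOn F] (hd : Algebra.trdeg F Ω ≤ 1) {x z : Ω}
    (hx0 : x ≠ 0) (hx : v x < 1) (hz0 : z ≠ 0) : ∃ n : ℕ, v x ^ n ≤ v z := by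
  rcases le_total 1 (v z) with h | h
  · exact ⟨0, by simpa using h⟩
  obtain ⟨p, hp, hpz⟩ := exists_valuation_aeval_le hd
    (v.transcendental_of_ne_one F x hx0 hx.ne) hx.le h hz0
  obtain ⟨n, hn⟩ := exists_valuation_aeval_eq_pow hx hp
  exact ⟨n, hn ▸ hpz⟩

theorem exists_valuation_sub_algebraMap_lt_one [IsAlgClosed F] [hv : v.IsTrivialOn F]
    [v.IsNontrivial] (hd : Algebra.trdeg F Ω ≤ 1) {x : Ω} (hx : v x ≤ 1) :
    ∃ d : F, v (x - algebraMap F Ω d) < 1 := by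
  by_contra! hcon
  have valuation_sub_eq_one (d : F) : v (x - algebraMap F Ω d) = 1 :=
    ((v.map_sub _ _).trans
      (max_le hx (Valuation.IsTrivialOn.valuation_algebraMap_le_one v d))).antisymm (hcon d)
  have valuation_aeval_eq_one (p : F[X]) (hp : p ≠ 0) : v (aeval x p) = 1 := by
    rw [(IsAlgClosed.splits p).eq_prod_roots, map_mul, aeval_C, map_mul,
      hv.eq_one _ (leadingCoeff_ne_zero.2 hp), one_mul, map_multiset_prod, map_multiset_prod,
      Multiset.map_map, Multiset.map_map]
    refine Multiset.prod_eq_one fun a ha => ?_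
    obtain ⟨d, -, rfl⟩ := Multiset.mem_map.1 ha
    simp [valuation_sub_eq_one]
  have htr : Transcendental F x := fun ⟨p, hp, h⟩ => by
    simpa [h] using valuation_aeval_eq_one p hp
  obtain ⟨π, hπ0, hπ⟩ := Valuation.IsNontrivial.exists_lt_one (v := v)
  obtain ⟨p, hp, hle⟩ := exists_valuation_aeval_le hd htr hx hπ.le hπ0
  exact (hle.trans_lt hπ).ne (valuation_aeval_eq_one p hp)

-- Newton's iteration for `X ^ s - u ^ s`, starting from `x`.
theorem exists_valuation_sub_le_sq [hv : v.IsTrivialOn F] {K : IntermediateField F Ω} {u x : Ω}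
    {s : ℕ} (hs : (s : F) ≠ 0) (hu : u ^ s ∈ K) (hvu : v u = 1) (hx : x ∈ K)
    (hux : v (u - x) < 1) : ∃ y ∈ K, v (u - y) ≤ v (u - x) ^ 2 := by
  have hvx : v x = 1 := hvu ▸ Valuation.map_eq_of_sub_lt v (by rwa [v.map_sub_swap, hvu])
  have hs' : v (s : Ω) = 1 := by simpa using hv.eq_one _ hs
  obtain ⟨k, hk⟩ := powAddExpansion (⟨x, hvx.le⟩ : v.integer) ⟨u - x, hux.le⟩ s
  set e : Ω := s * x ^ (s - 1) with he
  have heK : e ∈ K := mul_mem (_root_.natCast_mem K s) (pow_mem hx _)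
  have hve : v e = 1 := by simp [he, hs', hvx]
  have he0 : e ≠ 0 := fun h => by simp [h] at hve
  have hexp : u ^ s = x ^ s + e * (u - x) + k * (u - x) ^ 2 := by
    simpa using congrArg Subtype.val hk
  refine ⟨x - (x ^ s - u ^ s) / e,
    sub_mem hx (div_mem (sub_mem (pow_mem hx s) hu) heK), ?_⟩
  have hsub : u - (x - (x ^ s - u ^ s) / e) = -(k * (u - x) ^ 2 / e) := by
    rw [hexp]
    field_simp
    ring
  rw [hsub, Valuation.map_neg, map_div₀, hve, div_one, map_mul, map_pow]
  exact mul_le_of_le_one_left' k.2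

theorem exists_valuation_sub_lt_of_valuation_eq_one [IsAlgClosed F] [v.IsTrivialOn F]
    [v.IsNontrivial] (hd : Algebra.trdeg F Ω ≤ 1) {K : IntermediateField F Ω} {u : Ω} {s : ℕ}
    (hs : (s : F) ≠ 0) (hu : u ^ s ∈ K) (hvu : v u = 1) {c : Ω} (hc : c ≠ 0) :
    ∃ x ∈ K, v (u - x) < v c := by
  obtain ⟨d, hud⟩ := exists_valuation_sub_algebraMap_lt_one hd hvu.le
  have newton (n : ℕ) : ∃ x ∈ K, v (u - x) ≤ v (u - algebraMap F Ω d) ^ (n + 1) := by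
    induction n with
    | zero => exact ⟨_, K.algebraMap_mem d, by simp⟩
    | succ n ih =>
      obtain ⟨x, hx, hxd⟩ := ih
      have hux : v (u - x) < 1 := hxd.trans_lt (pow_lt_one' hud n.succ_ne_zero)
      obtain ⟨y, hy, hyx⟩ := exists_valuation_sub_le_sq hs hu hvu hx hux
      refine ⟨y, hy, hyx.trans ?_⟩
      calc v (u - x) ^ 2 ≤ (v (u - algebraMap F Ω d) ^ (n + 1)) ^ 2 := by gcongr
        _ = v (u - algebraMap F Ω d) ^ ((n + 1) * 2) := (pow_mul _ _ _).symm
        _ ≤ v (u - algebraMap F Ω d) ^ (n + 1 + 1) :=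
          pow_le_pow_right_of_le_one' hud.le (by lia)
  by_cases hud0 : u - algebraMap F Ω d = 0
  · exact ⟨_, K.algebraMap_mem d, by simpa [hud0] using v.pos_iff.2 hc⟩
  obtain ⟨n, hn⟩ := exists_valuation_pow_le hd hud0 hud hc
  obtain ⟨x, hx, hxd⟩ := newton n
  refine ⟨x, hx, hxd.trans_lt (lt_of_lt_of_le ?_ hn)⟩
  exact pow_lt_pow_right_of_lt_one₀ (v.pos_iff.2 hud0) hud n.lt_succ_self

theorem mem_closure_of_forall_exists_valuation_sub_lt {s : Set Ω} {u : Ω}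
    (h : ∀ c ≠ 0, ∃ x ∈ s, v (u - x) < v c) : letI := Valued.mk' v; u ∈ closure s := by
  let := Valued.mk' v
  refine mem_closure_iff_nhds.2 fun U hU => ?_
  obtain ⟨γ, hγ⟩ := Valued.mem_nhds.1 hU
  obtain ⟨a, b, ha, hb, hab⟩ := Valued.v.exists_div_eq_of_unit γ
  obtain ⟨x, hx, hux⟩ := h (a / b) (div_ne_zero (v.pos_iff.1 ha) (v.pos_iff.1 hb))
  refine ⟨x, hγ ?_, hx⟩
  change Valued.v.restrict (x - u) < γ
  rw [← hab, ← map_div₀, Valuation.restrict_lt_iff, Valuation.map_sub_swap]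
  exact hux

theorem exists_aeval_eq_of_mem_sup_adjoin {K : IntermediateField F Ω} {u : Ω}
    (hu : IsAlgebraic K u) {z : Ω} (hz : z ∈ K ⊔ F⟮u⟯) : ∃ p : K[X], aeval u p = z := by
  rwa [← restrictScalars_adjoin_eq_sup, IntermediateField.mem_restrictScalars,
    ← mem_toSubalgebra, adjoin_simple_toSubalgebra_of_isAlgebraic hu,
    Algebra.adjoin_singleton_eq_range_aeval] at hz

theorem exists_valuation_eq_of_mem_sup_adjoin {K : IntermediateField F Ω} {u : Ω}
    (hu : IsAlgebraic K u) (hK : ∀ c ≠ 0, ∃ x ∈ K, v (u - x) < v c) {z : Ω}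
    (hz : z ∈ K ⊔ F⟮u⟯) : ∃ y ∈ K, v y = v z := by
  obtain ⟨p, rfl⟩ := exists_aeval_eq_of_mem_sup_adjoin hu hz
  by_cases hp : aeval u p = 0
  · exact ⟨0, K.zero_mem, by rw [hp]⟩
  let := Valued.mk' v
  have hnhds : {x | v (aeval x p) = v (aeval u p)} ∈ 𝓝 u :=
    p.continuous_aeval.continuousAt (Valued.locally_const (v.ne_zero_iff.2 hp))
  obtain ⟨x, hxp, hx⟩ := mem_closure_iff_nhds.1
    (mem_closure_of_forall_exists_valuation_sub_lt hK) _ hnhds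
  exact ⟨aeval (⟨x, hx⟩ : K) p, SetLike.coe_mem _,
    (congrArg v (aeval_algebraMap_apply Ω (⟨x, hx⟩ : K) p)).symm.trans hxp⟩

end Valuation

section ValueDvd

variable {F Ω Γ₀ : Type*} [Field F] [Field Ω] [Algebra F Ω]
  [LinearOrderedCommGroupWithZero Γ₀] {v : Valuation Ω Γ₀} {K L : IntermediateField F Ω}

/-- `ValueDvd v K n g` says that, in additive notation, the value of `g` is `n` times the value of
an element of `K`. -/
def ValueDvd (v : Valuation Ω Γ₀) (K : IntermediateField F Ω) (n : ℕ) (g : Ω) : Prop :=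
  ∃ y ∈ K, v y ^ n = v g

theorem ValueDvd.mono (hKL : K ≤ L) {n : ℕ} {g : Ω} : ValueDvd v K n g → ValueDvd v L n g :=
  fun ⟨y, hy, h⟩ => ⟨y, hKL hy, h⟩

theorem ValueDvd.of_pow_eq_pow {n a : ℕ} {g y : Ω} (hg : g ∈ K) (hg0 : g ≠ 0) (hy : y ∈ K)
    (h : v y ^ n = v g ^ a) (ha : a.Coprime n) : ValueDvd v K n g := by
  have hvg : v g ≠ 0 := v.ne_zero_iff.2 hg0
  have bezout : (a : ℤ) * a.gcdA n + n * a.gcdB n = 1 := by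
    rw [← Nat.gcd_eq_gcd_ab, ha]
    rfl
  refine ⟨y ^ a.gcdA n * g ^ a.gcdB n, mul_mem (zpow_mem hy _) (zpow_mem hg _), ?_⟩
  calc v (y ^ a.gcdA n * g ^ a.gcdB n) ^ n
      = (v y ^ n) ^ a.gcdA n * v g ^ (n * a.gcdB n) := by
        rw [map_mul, map_zpow₀, map_zpow₀, mul_pow, ← zpow_natCast, ← zpow_natCast,
          ← zpow_natCast, ← zpow_mul, ← zpow_mul, ← zpow_mul, mul_comm, mul_comm (n : ℤ),
          mul_comm (n : ℤ), mul_comm]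
    _ = v g ^ (a * a.gcdA n + n * a.gcdB n : ℤ) := by
        rw [h, ← zpow_natCast, ← zpow_mul, zpow_add₀ hvg]
    _ = v g := by rw [bezout, zpow_one]

theorem exists_valuation_sub_lt [IsAlgClosed F] [v.IsTrivialOn F] [v.IsNontrivial]
    (hd : Algebra.trdeg F Ω ≤ 1) {u : Ω} {s : ℕ} (hs : (s : F) ≠ 0) (hu : u ^ s ∈ K)
    (hus : ValueDvd v K s (u ^ s)) {c : Ω} (hc : c ≠ 0) : ∃ x ∈ K, v (u - x) < v c := by
  by_cases hu0 : u = 0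
  · exact ⟨0, K.zero_mem, by simpa [hu0] using v.pos_iff.2 hc⟩
  have hs0 : s ≠ 0 := fun h => hs (by simp [h])
  obtain ⟨y, hy, hyu⟩ := hus
  have hvy : v y = v u := by
    rwa [map_pow, pow_left_inj₀ zero_le zero_le hs0] at hyu
  have hy0 : y ≠ 0 := v.ne_zero_iff.1 (hvy ▸ v.ne_zero_iff.2 hu0)
  obtain ⟨x, hx, hux⟩ := exists_valuation_sub_lt_of_valuation_eq_one (v := v) hd hs
    (u := u / y) (div_pow u y s ▸ div_mem hu (pow_mem hy s))
    (by rw [map_div₀, hvy, div_self (v.ne_zero_iff.2 hu0)]) (div_ne_zero hc hy0)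
  refine ⟨y * x, mul_mem hy hx, ?_⟩
  rwa [map_div₀ v c, lt_div_iff₀ (v.pos_iff.2 hy0), ← map_mul, sub_mul, div_mul_cancel₀ u hy0,
    mul_comm x] at hux

theorem exists_valuation_aeval_eq_of_natDegree_lt {E : Type*} [Field E] [Algebra E Ω] {u : Ω}
    (hu0 : u ≠ 0) {n : ℕ} (hu : ∀ j, 0 < j → j < n → ∀ c : E, v (algebraMap E Ω c) ≠ v u ^ j)
    {f : E[X]} (hf : f ≠ 0) (hn : f.natDegree < n) :
    ∃ i, f.coeff i ≠ 0 ∧ v (aeval u f) = v (algebraMap E Ω (f.coeff i)) * v u ^ i := by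
  have hvu : v u ≠ 0 := v.ne_zero_iff.2 hu0
  let term (i : ℕ) : Γ₀ := v (algebraMap E Ω (f.coeff i)) * v u ^ i
  have term_ne {i j : ℕ} (hij : i < j) (hj : j ∈ f.support) : term i ≠ term j := by
    intro h
    have hj' : v (algebraMap E Ω (f.coeff j)) ≠ 0 := by simpa using hj
    refine hu (j - i) (by lia) (by have := le_natDegree_of_mem_supp j hj; lia)
      (f.coeff i / f.coeff j) ?_
    rw [map_div₀, map_div₀, div_eq_iff hj']
    refine mul_right_cancel₀ (pow_ne_zero i hvu) (h.trans ?_)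
    rw [mul_right_comm, ← pow_add, Nat.sub_add_cancel hij.le, mul_comm]
  have term_inj {i j : ℕ} (hi : i ∈ f.support) (hj : j ∈ f.support) (h : term i = term j) :
      i = j := by
    rcases lt_trichotomy i j with hij | hij | hij
    exacts [(term_ne hij hj h).elim, hij, (term_ne hij hi h.symm).elim]
  obtain ⟨i, hi, hmax⟩ := f.support.exists_max_image term (by simpa)
  refine ⟨i, mem_support_iff.1 hi, ?_⟩
  have hterm (j : ℕ) : v (algebraMap E Ω (f.coeff j) * u ^ j) = term j := by
    rw [map_mul, map_pow]
  rw [aeval_def, eval₂_eq_sum, Polynomial.sum_def, v.map_sum_eq_of_lt hi, hterm]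
  intro j hj
  rw [Finset.mem_sdiff, Finset.mem_singleton] at hj
  rw [hterm, hterm]
  exact (hmax j hj.1).lt_of_ne fun h => hj.2 (term_inj hj.1 hi h)

theorem exists_valuation_eq_pow_of_mem_sup_adjoin {u : Ω} {s : ℕ} (hs : s.Prime)
    (hu : u ^ s ∈ K) (hus : ¬ValueDvd v K s (u ^ s)) {z : Ω} (hz : z ∈ K ⊔ F⟮u⟯) :
    ∃ y ∈ K, v y = v z ^ s := by
  by_cases hz0 : z = 0
  · exact ⟨0, K.zero_mem, by simp [hz0, hs.ne_zero]⟩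
  have hu0 : u ≠ 0 := by
    rintro rfl
    exact hus ⟨0, K.zero_mem, by simp⟩
  have valuation_ne (j : ℕ) (hj : 0 < j) (hjs : j < s) (c : K) :
      v (algebraMap K Ω c) ≠ v u ^ j := by
    intro h
    refine hus (.of_pow_eq_pow hu (pow_ne_zero s hu0) c.2 (a := j) ?_
      (Nat.coprime_of_lt_prime hj.ne' hjs hs).symm)
    rw [map_pow, ← pow_mul, mul_comm, pow_mul, ← h]
    rfl
  let g : K[X] := X ^ s - C ⟨u ^ s, hu⟩
  have hg : g.Monic := monic_X_pow_sub_C _ hs.ne_zero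
  have hgu : aeval u g = 0 := by simp [g, IntermediateField.algebraMap_apply]
  obtain ⟨p, rfl⟩ := exists_aeval_eq_of_mem_sup_adjoin ⟨g, hg.ne_zero, hgu⟩ hz
  rw [← aeval_modByMonic_eq_self_of_root hgu] at hz0 ⊢
  have hdeg : (p %ₘ g).natDegree < s := by
    simpa [g, natDegree_X_pow_sub_C] using natDegree_modByMonic_lt p hg
      fun h => hs.ne_zero (by simpa [g, natDegree_X_pow_sub_C] using congrArg natDegree h)
  obtain ⟨i, -, hi⟩ := exists_valuation_aeval_eq_of_natDegree_lt hu0 valuation_ne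
    (f := p %ₘ g) (fun h => hz0 (by simp [h])) hdeg
  refine ⟨(p %ₘ g).coeff i ^ s * (u ^ s) ^ i,
    mul_mem (pow_mem (SetLike.coe_mem _) s) (pow_mem hu i), ?_⟩
  rw [hi, map_mul, map_pow, map_pow, map_pow, mul_pow, ← pow_mul, ← pow_mul, mul_comm s]
  rfl

theorem ValueDvd.of_sup_adjoin [IsAlgClosed F] [v.IsTrivialOn F] [v.IsNontrivial]
    (hd : Algebra.trdeg F Ω ≤ 1) {u g : Ω} {s n : ℕ} (hs : s.Prime) (hsF : (s : F) ≠ 0)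
    (hu : u ^ s ∈ K) (hg : g ∈ K) (hg0 : g ≠ 0)
    (hsn : s.Coprime n ∨ ValueDvd v K s (u ^ s)) (h : ValueDvd v (K ⊔ F⟮u⟯) n g) :
    ValueDvd v K n g := by
  obtain ⟨z, hz, hzg⟩ := h
  by_cases hus : ValueDvd v K s (u ^ s)
  · have halg : IsAlgebraic K u :=
      ⟨X ^ s - C ⟨u ^ s, hu⟩, X_pow_sub_C_ne_zero hs.pos _,
        by simp [IntermediateField.algebraMap_apply]⟩
    obtain ⟨y, hy, hyz⟩ := exists_valuation_eq_of_mem_sup_adjoin halg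
      (fun c hc => exists_valuation_sub_lt hd hsF hu hus hc) hz
    exact ⟨y, hy, hyz ▸ hzg⟩
  · obtain ⟨y, hy, hyz⟩ := exists_valuation_eq_pow_of_mem_sup_adjoin hs hu hus hz
    refine .of_pow_eq_pow hg hg0 hy ?_ (hsn.resolve_right hus)
    rw [hyz, ← hzg, ← pow_mul, ← pow_mul, mul_comm]

theorem exists_valuation_eq_zpow [v.IsTrivialOn F] {x : Ω} (hx0 : x ≠ 0) (hx : v x < 1) {a : Ω}
    (ha : a ∈ F⟮x⟯) (ha0 : a ≠ 0) : ∃ m : ℤ, v a = v x ^ m := by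
  obtain ⟨p, q, rfl⟩ := (mem_adjoin_simple_iff F a).1 ha
  have hp : p ≠ 0 := by rintro rfl; simp at ha0
  have hq : q ≠ 0 := by rintro rfl; simp at ha0
  obtain ⟨k, hk⟩ := exists_valuation_aeval_eq_pow hx hp
  obtain ⟨l, hl⟩ := exists_valuation_aeval_eq_pow hx hq
  exact ⟨k - l, by
    rw [map_div₀, hk, hl, zpow_sub₀ (v.ne_zero_iff.2 hx0), zpow_natCast, zpow_natCast]⟩

theorem le_natDegree_minpoly_of_valuation_pow_eq [v.IsTrivialOn F] {x y : Ω} (hx0 : x ≠ 0)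
    (hx : v x < 1) {n : ℕ} (hyx : v y ^ n = v x) (hy : IsAlgebraic F⟮x⟯ y) :
    n ≤ (minpoly F⟮x⟯ y).natDegree := by
  rcases n.eq_zero_or_pos with rfl | hn
  · exact Nat.zero_le _
  have hy0 : y ≠ 0 := by
    rintro rfl
    rw [map_zero, zero_pow hn.ne'] at hyx
    exact v.ne_zero_iff.2 hx0 hyx.symm
  have hvy : 0 < v y := v.pos_iff.2 hy0
  have hvy1 : v y ≠ 1 := fun h => hx.ne (by rw [← hyx, h, one_pow])
  have valuation_ne (j : ℕ) (hj : 0 < j) (hjn : j < n) (c : F⟮x⟯) :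
      v (algebraMap F⟮x⟯ Ω c) ≠ v y ^ j := by
    intro h
    have hc0 : (c : Ω) ≠ 0 := v.ne_zero_iff.1 (h ▸ pow_ne_zero j hvy.ne')
    obtain ⟨m, hm⟩ := exists_valuation_eq_zpow hx0 hx c.2 hc0
    have hpow : v y ^ (n * m : ℤ) = v y ^ (j : ℤ) := by
      rw [zpow_mul, zpow_natCast, hyx, ← hm, zpow_natCast]
      exact h
    have hnj : n ∣ j :=
      Int.natCast_dvd_natCast.1 ⟨m, (zpow_right_injective₀ hvy hvy1 hpow).symm⟩
    exact absurd (Nat.le_of_dvd hj hnj) hjn.not_ge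
  by_contra! hlt
  obtain ⟨i, hi, hval⟩ := exists_valuation_aeval_eq_of_natDegree_lt hy0 valuation_ne
    (minpoly.ne_zero hy.isIntegral) hlt
  rw [minpoly.aeval, map_zero] at hval
  exact mul_ne_zero (by simpa using hi) (pow_ne_zero i hvy.ne') hval.symm

theorem ValueDvd.le_one_of_adjoin [v.IsTrivialOn F] {x : Ω} (hx0 : x ≠ 0) (hx : v x < 1) {n : ℕ}
    (h : ValueDvd v F⟮x⟯ n x) : n ≤ 1 := by
  obtain ⟨y, hy, hyx⟩ := h
  have := le_natDegree_minpoly_of_valuation_pow_eq hx0 hx hyx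
    (isAlgebraic_algebraMap (⟨y, hy⟩ : F⟮x⟯))
  rwa [show y = algebraMap F⟮x⟯ Ω ⟨y, hy⟩ from rfl, minpoly.eq_X_sub_C, natDegree_X_sub_C] at this

theorem natDegree_minpoly_le_finrank {E : IntermediateField F Ω} [FiniteDimensional F E] {y : Ω}
    (hy : y ∈ E) : (minpoly F y).natDegree ≤ Module.finrank F E := by
  simpa only [IntermediateField.minpoly_eq] using minpoly.natDegree_le (A := F) (⟨y, hy⟩ : E)

theorem exists_forall_valueDvd_le [v.IsTrivialOn F] (hd : Algebra.trdeg F Ω ≤ 1) (hK : K.FG)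
    {x : Ω} (hx0 : x ≠ 0) (hx : v x < 1) : ∃ b : ℕ, ∀ n, ValueDvd v K n x → n ≤ b := by
  have halg (z : Ω) : IsAlgebraic F⟮x⟯ z := isAlgebraic_adjoin_iff.2
    (isAlgebraic_adjoin_of_trdeg_le_one hd (v.transcendental_of_ne_one F x hx0 hx.ne) z)
  obtain ⟨S, rfl⟩ := hK
  have : FiniteDimensional F⟮x⟯ (adjoin F⟮x⟯ (S : Set Ω)) :=
    finiteDimensional_adjoin fun z _ => (halg z).isIntegral
  have hle : adjoin F (S : Set Ω) ≤ (adjoin F⟮x⟯ (S : Set Ω)).restrictScalars F :=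
    adjoin_le_iff.2 (subset_adjoin F⟮x⟯ (S : Set Ω))
  refine ⟨Module.finrank F⟮x⟯ (adjoin F⟮x⟯ (S : Set Ω)), fun n ⟨y, hy, hyx⟩ => ?_⟩
  exact (le_natDegree_minpoly_of_valuation_pow_eq hx0 hx hyx (halg y)).trans
    (natDegree_minpoly_le_finrank (hle hy))

end ValueDvd

theorem exists_forall_not_valueDvd {F Ω Γ₀ : Type*} [Field F] [Field Ω] [Algebra F Ω]
    [LinearOrderedCommGroupWithZero Γ₀] {v : Valuation Ω Γ₀} [v.IsTrivialOn F]
    {K : IntermediateField F Ω} (hd : Algebra.trdeg F Ω ≤ 1) (hK : K.FG) {x : Ω} (hxK : x ∈ K)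
    (hx0 : x ≠ 0) (hx : v x < 1) :
    ∃ y ∈ K, v x ≤ v y ∧ v y < 1 ∧ ∀ n, 2 ≤ n → ¬ValueDvd v K n y := by
  obtain ⟨b, hb⟩ := exists_forall_valueDvd_le hd hK hx0 hx
  have hone : ValueDvd v K 1 x := ⟨x, hxK, pow_one _⟩
  obtain ⟨N, ⟨y, hy, hyx⟩, hmax⟩ : ∃ N, ValueDvd v K N x ∧ ∀ n, ValueDvd v K n x → n ≤ N :=
    ⟨sSup {n | ValueDvd v K n x}, Nat.sSup_mem ⟨1, hone⟩ ⟨b, hb⟩, fun _ => le_csSup ⟨b, hb⟩⟩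
  have hN : N ≠ 0 := Nat.one_le_iff_ne_zero.1 (hmax 1 hone)
  have hy1 : v y < 1 := (pow_lt_one_iff_of_nonneg zero_le hN).1 (hyx ▸ hx)
  refine ⟨y, hy, hyx ▸ pow_le_of_le_one zero_le hy1.le hN, hy1, fun n hn ⟨z, hz, hzy⟩ => ?_⟩
  have hle : n * N ≤ N := hmax _ ⟨z, hz, by rw [pow_mul, hzy, hyx]⟩
  exact hle.not_gt (lt_mul_of_one_lt_left hN.bot_lt hn)

section KummerSum

variable {F Ω Γ₀ : Type*} [Field F] [Field Ω] [Algebra F Ω]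
  [LinearOrderedCommGroupWithZero Γ₀] {v : Valuation Ω Γ₀} {K : IntermediateField F Ω}
  {n : ℕ} {w z : Ω}

/-- `x` is a sum of two elements `z` for which `1 + w z ^ n` is an `n`-th power. Two summands
rather than one give the freedom to avoid cancellation in `1 + w z ^ n`. -/
def IsKummerSum {E : Type*} [Field E] (n : ℕ) (w x : E) : Prop :=
  ∃ z₁ z₂ u₁ u₂ : E, z₁ + z₂ = x ∧ u₁ ^ n = 1 + w * z₁ ^ n ∧ u₂ ^ n = 1 + w * z₂ ^ n

theorem IsKummerSum.map {E L : Type*} [Field E] [Field L] (f : E →+* L) {w x : E}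
    (h : IsKummerSum n w x) : IsKummerSum n (f w) (f x) := by
  obtain ⟨z₁, z₂, u₁, u₂, rfl, h₁, h₂⟩ := h
  exact ⟨f z₁, f z₂, f u₁, f u₂, (map_add f _ _).symm, by simpa using congrArg f h₁,
    by simpa using congrArg f h₂⟩

theorem ValueDvd.of_pow_eq_one_add {u : Ω} (hz : z ∈ K) (hz0 : z ≠ 0) (hu : u ∈ K)
    (h : u ^ n = 1 + w * z ^ n) (hle : 1 ≤ v (w * z ^ n)) : ValueDvd v K n w := by
  have hvz : v z ^ n ≠ 0 := pow_ne_zero _ (v.ne_zero_iff.2 hz0)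
  have hvw : v w = v (w * z ^ n) / v z ^ n := by
    rw [map_mul, map_pow, mul_div_cancel_right₀ _ hvz]
  rcases hle.eq_or_lt with h1 | h1
  · exact ⟨z⁻¹, inv_mem hz, by rw [hvw, ← h1, map_inv₀, inv_pow, one_div]⟩
  · refine ⟨u / z, div_mem hu hz, ?_⟩
    rw [hvw, map_div₀, div_pow, ← map_pow v u, h, v.map_add_eq_of_lt_right (by rwa [map_one])]

theorem IsKummerSum.valueDvd (hn : n ≠ 0) {w x : K} (h : IsKummerSum n w x)
    (hle : 1 ≤ v (w * x ^ n : Ω)) : ValueDvd v K n (w : Ω) := by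
  obtain ⟨z₁, z₂, u₁, u₂, hx, h₁, h₂⟩ := h
  have of_le (z u : K) (hu : u ^ n = 1 + w * z ^ n) (hxz : v (x : Ω) ≤ v (z : Ω)) :
      ValueDvd v K n (w : Ω) := by
    have hle' : 1 ≤ v (w * z ^ n : Ω) := by
      rw [map_mul, map_pow] at hle ⊢
      exact hle.trans (by gcongr)
    refine .of_pow_eq_one_add z.2 ?_ u.2 (congrArg Subtype.val hu) hle'
    intro h0
    simp [h0, hn] at hle'
  have hmax : v (x : Ω) ≤ v (z₁ : Ω) ∨ v (x : Ω) ≤ v (z₂ : Ω) :=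
    hx ▸ le_max_iff.1 (v.map_add _ _)
  exact hmax.elim (of_le z₁ u₁ h₁) (of_le z₂ u₂ h₂)

theorem ValueDvd.one_add (hz : z ∈ K) (hw : 1 ≤ v (w * z ^ n) → ValueDvd v K n w)
    (hle : 1 ≤ v (1 + w * z ^ n)) : ValueDvd v K n (1 + w * z ^ n) := by
  rcases le_or_gt (v (w * z ^ n)) 1 with h | h
  · refine ⟨1, K.one_mem, ?_⟩
    rw [map_one, one_pow]
    exact hle.antisymm ((v.map_add _ _).trans (max_le v.map_one.le h))
  · obtain ⟨y, hy, hyw⟩ := hw h.le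
    refine ⟨y * z, mul_mem hy hz, ?_⟩
    rw [v.map_add_eq_of_lt_right (by rwa [map_one]), map_mul, mul_pow, hyw, map_mul, map_pow]

theorem finite_setOf_valuation_one_add_lt_one [hv : v.IsTrivialOn F] (hn : n ≠ 0) (g : Ω) :
    {e : F | v (1 + g * algebraMap F Ω e ^ n) < 1}.Finite := by
  classical
  rcases Set.eq_empty_or_nonempty {e : F | v (1 + g * algebraMap F Ω e ^ n) < 1} with
    hempty | ⟨e₀, he₀⟩
  · exact hempty ▸ Set.finite_empty
  refine (nthRoots n (e₀ ^ n)).toFinset.finite_toSet.subset fun e he => ?_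
  rw [Finset.mem_coe, Multiset.mem_toFinset, mem_nthRoots hn.bot_lt]
  by_contra hne
  have hvg : v g < 1 := by
    have hdiff : v (g * algebraMap F Ω (e ^ n - e₀ ^ n)) < 1 := by
      have : g * algebraMap F Ω (e ^ n - e₀ ^ n) =
          (1 + g * algebraMap F Ω e ^ n) - (1 + g * algebraMap F Ω e₀ ^ n) := by
        rw [map_sub, map_pow, map_pow]
        ring
      exact this ▸ (v.map_sub _ _).trans_lt (max_lt he he₀)
    rwa [map_mul, hv.eq_one _ (sub_ne_zero.2 hne), mul_one] at hdiff
  have hlt : v (g * algebraMap F Ω e ^ n) < 1 := by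
    rw [map_mul, map_pow]
    exact mul_lt_one_of_lt_of_le hvg
      (pow_le_one' (Valuation.IsTrivialOn.valuation_algebraMap_le_one v e) n)
  exact he.ne (by rw [v.map_one_add_of_lt hlt])

theorem finite_setOf_not_valueDvd_one_add [v.IsTrivialOn F] (hn : n ≠ 0) (hz : z ∈ K)
    (hw : 1 ≤ v (w * z ^ n) → ValueDvd v K n w) :
    {e : F | ¬ValueDvd v K n (1 + w * (algebraMap F Ω e * z) ^ n)}.Finite := by
  refine (finite_setOf_valuation_one_add_lt_one (v := v) hn (w * z ^ n)).subset fun e he => ?_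
  rw [Set.mem_ofPred_eq, ← not_le]
  intro hle
  refine he (.one_add (mul_mem (K.algebraMap_mem e) hz) (fun h => hw (h.trans ?_)) ?_)
  · rw [map_mul, map_mul, map_pow, map_pow, map_mul]
    gcongr
    exact mul_le_of_le_one_left' (Valuation.IsTrivialOn.valuation_algebraMap_le_one v e)
  · rwa [mul_pow, mul_comm (_ ^ n) (z ^ n), ← mul_assoc]

-- At a pole of `π` the denominator wins, so the value can only be `≥ 1` where `π` is a unit.
theorem ValueDvd.div_one_sub_pow (hn : 2 ≤ n) {π : Ω} (hπ : π ∈ K)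
    (hle : 1 ≤ v (π / (1 - π) ^ n)) : ValueDvd v K n (π / (1 - π) ^ n) := by
  rw [map_div₀, map_pow] at hle
  rcases lt_trichotomy (v π) 1 with h | h | h
  · rw [v.map_one_sub_of_lt h, one_pow, div_one] at hle
    exact absurd h hle.not_gt
  · refine ⟨(1 - π)⁻¹, inv_mem (sub_mem K.one_mem hπ), ?_⟩
    rw [map_div₀, h, map_inv₀, inv_pow, map_pow, one_div]
  · rw [v.map_sub_eq_of_lt_right (by rwa [map_one]), one_le_div₀ (pow_pos (zero_lt_one.trans h) _)]
      at hle
    exact absurd hle (lt_self_pow₀ h hn).not_ge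

end KummerSum

section Place

variable {F Ω : Type*} [Field F] [Field Ω] [Algebra F Ω]

/-- A place of `Ω` over `F`: a valuation ring of `Ω` containing `F` and different from `Ω`. -/
structure Place (F Ω : Type*) [Field F] [Field Ω] [Algebra F Ω] extends ValuationSubring Ω where
  algebraMap_mem : ∀ c : F, algebraMap F Ω c ∈ toValuationSubring
  ne_top : toValuationSubring ≠ ⊤

instance (V : Place F Ω) : V.valuation.IsTrivialOn F where
  eq_one c hc := by
    refine le_antisymm ((V.valuation_le_one_iff _).2 (V.algebraMap_mem c)) ?_
    have hinv := (V.valuation_le_one_iff _).2 (V.algebraMap_mem c⁻¹)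
    rw [map_inv₀, map_inv₀] at hinv
    exact (inv_le_one₀ (V.valuation.pos_iff.2 (by simpa using hc))).1 hinv

instance (V : Place F Ω) : V.valuation.IsNontrivial :=
  not_not.1 (mt V.eq_top_iff.2 V.ne_top)

theorem exists_place_valuation_lt_one {x : Ω} (hx : Transcendental F x) :
    ∃ V : Place F Ω, V.valuation x < 1 := by
  have hx0 : x ≠ 0 := fun h => hx (h ▸ isAlgebraic_zero)
  have hxR : x⁻¹ ∉ (integralClosure F Ω).toSubring := fun h =>
    hx (IsAlgebraic.inv_iff.1 (IsIntegral.isAlgebraic h))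
  have : IsIntegrallyClosedIn (integralClosure F Ω).toSubring Ω :=
    (.of_isIntegralClosure F : IsIntegrallyClosedIn (integralClosure F Ω) Ω)
  obtain ⟨V, hV, hxV⟩ := Subring.exists_le_valuationSubring_of_isIntegrallyClosedIn hxR
  refine ⟨⟨V, fun c => hV ((integralClosure F Ω).algebraMap_mem c),
    fun h => hxV (h ▸ ValuationSubring.mem_top _)⟩, ?_⟩
  rw [← V.valuation_le_one_iff, not_le, map_inv₀] at hxV
  exact (one_lt_inv₀ (V.valuation.pos_iff.2 hx0)).1 hxV

end Place

theorem exists_ideal_forall_exists {α ι : Type*} [Preorder α] [Nonempty α] [Countable ι]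
    {P Q : ι → α → Prop} (hP : ∀ i ⦃c d⦄, c ≤ d → P i c → P i d)
    (hPQ : ∀ i c, P i c → ∃ d, c ≤ d ∧ Q i d) :
    ∃ 𝓘 : Order.Ideal α, ∀ i, ∀ c ∈ 𝓘, P i c → ∃ d ∈ 𝓘, Q i d := by
  have : Encodable ι := Encodable.ofCountable ι
  let 𝒟 (i : ι) : Order.Cofinal α :=
    { carrier := {c | Q i c ∨ ∀ d, c ≤ d → ¬P i d}
      isCofinal := fun c => by
        by_cases h : ∃ d, c ≤ d ∧ P i d
        · obtain ⟨d, hcd, hd⟩ := h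
          obtain ⟨e, hde, he⟩ := hPQ i d hd
          exact ⟨e, Or.inl he, hcd.trans hde⟩
        · exact ⟨c, Or.inr fun d hcd hd => h ⟨d, hcd, hd⟩, le_rfl⟩ }
  refine ⟨Order.idealOfCofinals (Classical.arbitrary α) 𝒟, fun i c hc hPc => ?_⟩
  obtain ⟨d, hd, hdI⟩ := Order.cofinal_meets_idealOfCofinals (Classical.arbitrary α) 𝒟 i
  refine ⟨d, hdI, hd.resolve_right fun hforce => ?_⟩
  obtain ⟨e, -, hce, hde⟩ := Order.Ideal.directed _ c hc d hdI
  exact hforce e hde (hP i hce hPc)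

section Generic

variable {F Ω ι : Type*} [Field F] [Field Ω] [Algebra F Ω]

/-- The data of the construction: a transcendental element `t` of a field `Ω` of transcendence
degree one, and the sets `A i` which are to become definable. The prime `ℓ` serves to define the
constants, the prime `r i` to define `A i` among them, and the prime `p` to make the degree over
`F(t)` infinite. -/
structure Setup (F Ω ι : Type*) [Field F] [Field Ω] [Algebra F Ω] where
  t : Ω
  A : ι → Set F
  ℓ : ℕ
  p : ℕ
  r : ι → ℕ
  trdeg_le_one : Algebra.trdeg F Ω ≤ 1
  transcendental : Transcendental F t
  prime_ℓ : ℓ.Prime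
  prime_p : p.Prime
  prime_r : ∀ i, (r i).Prime
  cast_ℓ_ne_zero : (ℓ : F) ≠ 0
  cast_p_ne_zero : (p : F) ≠ 0
  cast_r_ne_zero : ∀ i, (r i : F) ≠ 0
  p_ne_ℓ : p ≠ ℓ
  r_ne_ℓ : ∀ i, r i ≠ ℓ
  r_ne_p : ∀ i, r i ≠ p
  r_injective : Function.Injective r

theorem Setup.transcendental_sub (S : Setup F Ω ι) (a : F) :
    Transcendental F (S.t - algebraMap F Ω a) :=
  fun h => S.transcendental (by simpa using h.add (isAlgebraic_algebraMap a))

theorem Setup.sub_ne_zero (S : Setup F Ω ι) (a : F) : S.t - algebraMap F Ω a ≠ 0 :=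
  fun h => S.transcendental_sub a (h ▸ isAlgebraic_zero)

/-- A finitely generated approximation `K` of the field under construction, with finitely many
places at which elements of `K` of value not divisible by `ℓ` have to stay so. -/
structure Condition (S : Setup F Ω ι) where
  K : IntermediateField F Ω
  J : Set (Place F Ω)
  fg : K.FG
  finite : J.Finite
  t_mem : S.t ∈ K
  not_valueDvd : ∀ i, ∀ a ∈ S.A i, ∀ V : Place F Ω, V.valuation (S.t - algebraMap F Ω a) < 1 →
    ¬ValueDvd V.valuation K (S.r i) (S.t - algebraMap F Ω a)

/-- A field with the properties which the union of a sufficiently generic ideal of conditions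
has. -/
structure IsGeneric (S : Setup F Ω ι) (K : IntermediateField F Ω) : Prop where
  t_mem : S.t ∈ K
  exists_pole : ∀ x ∈ K, Transcendental F x → ∃ V : Place F Ω, ∃ π ∈ K, V.valuation π < 1 ∧
    1 ≤ V.valuation (π * x ^ S.ℓ) ∧ ¬ValueDvd V.valuation K S.ℓ π
  isKummerSum : ∀ w z : K, (∀ V : Place F Ω, 1 ≤ V.valuation (w * z ^ S.ℓ : Ω) →
    ValueDvd V.valuation K S.ℓ w) → IsKummerSum S.ℓ w z
  exists_pow_eq_sub : ∀ i, ∀ a ∉ S.A i, ∃ y ∈ K, y ^ S.r i = S.t - algebraMap F Ω a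
  exists_pow_eq : ∀ x ∈ K, ∃ y ∈ K, y ^ S.p = x
  not_valueDvd : ∀ i, ∀ a ∈ S.A i, ∀ V : Place F Ω, V.valuation (S.t - algebraMap F Ω a) < 1 →
    ¬ValueDvd V.valuation K (S.r i) (S.t - algebraMap F Ω a)

variable {S : Setup F Ω ι}

namespace Condition

instance : Preorder (Condition S) where
  le c d := c.K ≤ d.K ∧ c.J ⊆ d.J ∧ ∀ V ∈ c.J, ∀ g ∈ c.K,
    ValueDvd V.valuation d.K S.ℓ g → ValueDvd V.valuation c.K S.ℓ g
  le_refl _ := ⟨le_rfl, subset_rfl, fun _ _ _ _ h => h⟩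
  le_trans _ _ _ h₁ h₂ := ⟨h₁.1.trans h₂.1, h₁.2.1.trans h₂.2.1, fun V hV g hg h =>
    h₁.2.2 V hV g hg (h₂.2.2 V (h₁.2.1 hV) g (h₁.1 hg) h)⟩

instance : Nonempty (Condition S) := ⟨
  { K := F⟮S.t⟯
    J := ∅
    fg := fg_adjoin_of_finite (Set.finite_singleton S.t)
    finite := Set.finite_empty
    t_mem := mem_adjoin_simple_self F S.t
    not_valueDvd := fun i a _ V hV h => by
      have hle : F⟮S.t⟯ ≤ F⟮S.t - algebraMap F Ω a⟯ := adjoin_simple_le_iff.2 (by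
        simpa using add_mem (mem_adjoin_simple_self F (S.t - algebraMap F Ω a))
          (IntermediateField.algebraMap_mem _ a))
      exact (S.prime_r i).one_lt.not_ge ((h.mono hle).le_one_of_adjoin (S.sub_ne_zero a) hV) }⟩

theorem exists_adjoin_root [IsAlgClosed F] (c : Condition S) {s : ℕ} (hs : s.Prime)
    (hsF : (s : F) ≠ 0) {u : Ω} (hu : u ^ s ∈ c.K)
    (hℓ : s = S.ℓ → ∀ V ∈ c.J, ValueDvd V.valuation c.K s (u ^ s))
    (hr : ∀ i, s = S.r i → ∀ a ∈ S.A i, ∀ V : Place F Ω,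
      V.valuation (S.t - algebraMap F Ω a) < 1 → ValueDvd V.valuation c.K s (u ^ s)) :
    ∃ d, c ≤ d ∧ d.J = c.J ∧ u ∈ d.K := by
  have coprime_or {q : ℕ} (hq : q.Prime) {D : Prop} (h : s = q → D) : s.Coprime q ∨ D :=
    (em (s = q)).symm.imp (Nat.coprime_primes hs hq).2 h
  refine ⟨⟨c.K ⊔ F⟮u⟯, c.J, fg_sup c.fg (fg_adjoin_of_finite (Set.finite_singleton u)), c.finite,
    le_sup_left (b := F⟮u⟯) c.t_mem, fun i a ha V hV h => ?_⟩, ⟨le_sup_left, subset_rfl,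
    fun V hV g hg h => ?_⟩, rfl, le_sup_right (a := c.K) (mem_adjoin_simple_self F u)⟩
  · exact c.not_valueDvd i a ha V hV (h.of_sup_adjoin S.trdeg_le_one hs hsF hu
      (sub_mem c.t_mem (c.K.algebraMap_mem a)) (S.sub_ne_zero a)
      (coprime_or (S.prime_r i) fun hsr => hr i hsr a ha V hV))
  · by_cases hg0 : g = 0
    · exact ⟨0, c.K.zero_mem, by simp [hg0, S.prime_ℓ.ne_zero]⟩
    · exact h.of_sup_adjoin S.trdeg_le_one hs hsF hu hg hg0
        (coprime_or S.prime_ℓ fun hsℓ => hℓ hsℓ V hV)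

/-- A place of the condition where `x` has a pole, witnessed by `π` of positive value which is not
divisible by `ℓ`. This keeps `IsKummerSum ℓ (π / (1 - π) ^ ℓ) x` false in every extension. -/
def HasPole (c : Condition S) (x : Ω) : Prop :=
  ∃ V ∈ c.J, ∃ π ∈ c.K, V.valuation π < 1 ∧ 1 ≤ V.valuation (π * x ^ S.ℓ) ∧
    ¬ValueDvd V.valuation c.K S.ℓ π

theorem exists_hasPole (c : Condition S) {x : Ω} (hxK : x ∈ c.K) (hx : Transcendental F x) :
    ∃ d, c ≤ d ∧ d.HasPole x := by
  have hx0 : x ≠ 0 := fun h => hx (h ▸ isAlgebraic_zero)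
  obtain ⟨V, hV⟩ := exists_place_valuation_lt_one (mt IsAlgebraic.inv_iff.1 hx)
  obtain ⟨π, hπ, hxπ, hπ1, hπℓ⟩ :=
    exists_forall_not_valueDvd S.trdeg_le_one c.fg (inv_mem hxK) (inv_ne_zero hx0) hV
  have hle : 1 ≤ V.valuation (π * x ^ S.ℓ) := by
    have hx1 : 1 ≤ V.valuation x := by
      rw [map_inv₀] at hV
      exact ((inv_lt_one₀ (V.valuation.pos_iff.2 hx0)).1 hV).le
    calc 1 = V.valuation x⁻¹ * V.valuation x := by rw [← map_mul, inv_mul_cancel₀ hx0, map_one]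
      _ ≤ V.valuation π * V.valuation x ^ S.ℓ := by
        gcongr
        exact le_self_pow₀ hx1 S.prime_ℓ.ne_zero
      _ = V.valuation (π * x ^ S.ℓ) := by rw [map_mul, map_pow]
  exact ⟨⟨c.K, insert V c.J, c.fg, c.finite.insert V, c.t_mem, c.not_valueDvd⟩,
    ⟨le_rfl, Set.subset_insert _ _, fun _ _ _ _ h => h⟩, V, Set.mem_insert _ _, π, hπ, hπ1, hle,
    hπℓ S.ℓ S.prime_ℓ.two_le⟩

/-- Either `w` has a value not divisible by `ℓ` at some place of the condition where `w z ^ ℓ` does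
not vanish, which forbids `IsKummerSum ℓ w z` in every extension, or `IsKummerSum ℓ w z` holds. -/
def Decides (c : Condition S) (w z : Ω) : Prop :=
  ∃ (hw : w ∈ c.K) (hz : z ∈ c.K),
    (∃ V ∈ c.J, ¬ValueDvd V.valuation c.K S.ℓ w ∧ 1 ≤ V.valuation (w * z ^ S.ℓ)) ∨
      IsKummerSum S.ℓ (⟨w, hw⟩ : c.K) ⟨z, hz⟩

theorem exists_constant_valueDvd [Infinite F] (c : Condition S) {w z : Ω} (hz : z ∈ c.K)
    (hw : ∀ V ∈ c.J, 1 ≤ V.valuation (w * z ^ S.ℓ) → ValueDvd V.valuation c.K S.ℓ w) :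
    ∃ e : F, ∀ V ∈ c.J,
      ValueDvd V.valuation c.K S.ℓ (1 + w * (algebraMap F Ω e * z) ^ S.ℓ) ∧
      ValueDvd V.valuation c.K S.ℓ (1 + w * (algebraMap F Ω (1 - e) * z) ^ S.ℓ) := by
  let bad : Set F := ⋃ V ∈ c.J,
    {e | ¬ValueDvd V.valuation c.K S.ℓ (1 + w * (algebraMap F Ω e * z) ^ S.ℓ)}
  have hbad : bad.Finite := c.finite.biUnion fun V hV =>
    finite_setOf_not_valueDvd_one_add S.prime_ℓ.ne_zero hz (hw V hV)
  have notMem_bad {e : F} (he : e ∉ bad) (V : Place F Ω) (hV : V ∈ c.J) :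
      ValueDvd V.valuation c.K S.ℓ (1 + w * (algebraMap F Ω e * z) ^ S.ℓ) :=
    of_not_not fun h => he (Set.mem_biUnion hV h)
  obtain ⟨e, he⟩ :=
    (hbad.union (hbad.preimage (f := fun e => 1 - e) sub_right_injective.injOn)).exists_notMem
  rw [Set.mem_union, not_or] at he
  exact ⟨e, fun V hV => ⟨notMem_bad he.1 V hV, notMem_bad he.2 V hV⟩⟩

theorem exists_decides [IsAlgClosed F] [IsAlgClosed Ω] (c : Condition S) {w z : Ω} (hw : w ∈ c.K)
    (hz : z ∈ c.K) : ∃ d, c ≤ d ∧ d.Decides w z := by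
  by_cases hcase : ∃ V ∈ c.J, ¬ValueDvd V.valuation c.K S.ℓ w ∧ 1 ≤ V.valuation (w * z ^ S.ℓ)
  · exact ⟨c, le_rfl, hw, hz, Or.inl hcase⟩
  have : Infinite F := IsAlgClosed.instInfinite
  obtain ⟨e, he⟩ := c.exists_constant_valueDvd hz fun V hV h =>
    of_not_not fun hV' => hcase ⟨V, hV, hV', h⟩
  have hmem (e : F) : 1 + w * (algebraMap F Ω e * z) ^ S.ℓ ∈ c.K :=
    add_mem c.K.one_mem (mul_mem hw (pow_mem (mul_mem (c.K.algebraMap_mem e) hz) _))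
  obtain ⟨u₁, hu₁⟩ := IsAlgClosed.exists_pow_nat_eq
    (1 + w * (algebraMap F Ω e * z) ^ S.ℓ) S.prime_ℓ.pos
  obtain ⟨u₂, hu₂⟩ := IsAlgClosed.exists_pow_nat_eq
    (1 + w * (algebraMap F Ω (1 - e) * z) ^ S.ℓ) S.prime_ℓ.pos
  obtain ⟨d₁, hcd₁, hJ, hud₁⟩ := c.exists_adjoin_root S.prime_ℓ S.cast_ℓ_ne_zero (hu₁ ▸ hmem e)
    (fun _ V hV => hu₁ ▸ (he V hV).1) fun i hi => (S.r_ne_ℓ i hi.symm).elim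
  obtain ⟨d₂, hd₁d₂, -, hud₂⟩ := d₁.exists_adjoin_root S.prime_ℓ S.cast_ℓ_ne_zero
    (hcd₁.1 (hu₂ ▸ hmem (1 - e))) (fun _ V hV => hu₂ ▸ (he V (hJ ▸ hV)).2.mono hcd₁.1)
    fun i hi => (S.r_ne_ℓ i hi.symm).elim
  have hcd₂ := hcd₁.trans hd₁d₂
  let z' : d₂.K := ⟨z, hcd₂.1 hz⟩
  refine ⟨d₂, hcd₂, hcd₂.1 hw, hcd₂.1 hz, Or.inr ⟨algebraMap F d₂.K e * z',
    algebraMap F d₂.K (1 - e) * z', ⟨u₁, hd₁d₂.1 hud₁⟩, ⟨u₂, hud₂⟩, ?_,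
    Subtype.ext hu₁, Subtype.ext hu₂⟩⟩
  rw [← add_mul, ← map_add, add_sub_cancel, map_one, one_mul]

theorem exists_pow_eq_sub [IsAlgClosed F] [IsAlgClosed Ω] (c : Condition S) {i : ι} {b : F}
    (hb : b ∉ S.A i) : ∃ d, c ≤ d ∧ ∃ y ∈ d.K, y ^ S.r i = S.t - algebraMap F Ω b := by
  obtain ⟨u, hu⟩ := IsAlgClosed.exists_pow_nat_eq (S.t - algebraMap F Ω b) (S.prime_r i).pos
  have valueDvd (a : F) (ha : a ∈ S.A i) (V : Place F Ω)
      (hV : V.valuation (S.t - algebraMap F Ω a) < 1) :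
      ValueDvd V.valuation c.K (S.r i) (u ^ S.r i) := by
    have hab : V.valuation (algebraMap F Ω (a - b)) = 1 :=
      Valuation.IsTrivialOn.eq_one _ (_root_.sub_ne_zero.2 fun h => hb (h ▸ ha))
    refine ⟨1, c.K.one_mem, ?_⟩
    rw [hu, map_one, one_pow, ← sub_add_sub_cancel _ (algebraMap F Ω a), ← map_sub,
      V.valuation.map_add_eq_of_lt_right (hV.trans_eq hab.symm), hab]
  obtain ⟨d, hcd, -, hud⟩ := c.exists_adjoin_root (S.prime_r i) (S.cast_r_ne_zero i)
    (hu ▸ sub_mem c.t_mem (c.K.algebraMap_mem b)) (fun h => (S.r_ne_ℓ i h).elim)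
    fun j hij => S.r_injective hij ▸ valueDvd
  exact ⟨d, hcd, u, hud, hu⟩

theorem exists_pow_eq [IsAlgClosed F] [IsAlgClosed Ω] (c : Condition S) {x : Ω} (hx : x ∈ c.K) :
    ∃ d, c ≤ d ∧ ∃ y ∈ d.K, y ^ S.p = x := by
  obtain ⟨u, hu⟩ := IsAlgClosed.exists_pow_nat_eq x S.prime_p.pos
  obtain ⟨d, hcd, -, hud⟩ := c.exists_adjoin_root S.prime_p S.cast_p_ne_zero (hu ▸ hx)
    (fun h => (S.p_ne_ℓ h).elim) fun i hi => (S.r_ne_p i hi.symm).elim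
  exact ⟨d, hcd, u, hud, hu⟩

theorem exists_ideal [IsAlgClosed F] [IsAlgClosed Ω] [Countable Ω] [Countable ι]
    (S : Setup F Ω ι) : ∃ 𝓘 : Order.Ideal (Condition S),
      (∀ x, Transcendental F x → ∀ c ∈ 𝓘, x ∈ c.K → ∃ d ∈ 𝓘, d.HasPole x) ∧
      (∀ w z, ∀ c ∈ 𝓘, w ∈ c.K → z ∈ c.K → ∃ d ∈ 𝓘, d.Decides w z) ∧
      (∀ i, ∀ b ∉ S.A i, ∃ d ∈ 𝓘, ∃ y ∈ d.K, y ^ S.r i = S.t - algebraMap F Ω b) ∧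
      ∀ x, ∀ c ∈ 𝓘, x ∈ c.K → ∃ d ∈ 𝓘, ∃ y ∈ d.K, y ^ S.p = x := by
  have : Countable F := (algebraMap F Ω).injective.countable
  obtain ⟨𝓘, h𝓘⟩ := exists_ideal_forall_exists (α := Condition S)
    (ι := {x : Ω // Transcendental F x} ⊕ (Ω × Ω) ⊕ {q : ι × F // q.2 ∉ S.A q.1} ⊕ Ω)
    (P := fun
      | .inl x, c => x.1 ∈ c.K
      | .inr (.inl (w, z)), c => w ∈ c.K ∧ z ∈ c.K
      | .inr (.inr (.inl _)), _ => True
      | .inr (.inr (.inr x)), c => x ∈ c.K)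
    (Q := fun
      | .inl x, d => d.HasPole x.1
      | .inr (.inl (w, z)), d => d.Decides w z
      | .inr (.inr (.inl ⟨(i, b), _⟩)), d => ∃ y ∈ d.K, y ^ S.r i = S.t - algebraMap F Ω b
      | .inr (.inr (.inr x)), d => ∃ y ∈ d.K, y ^ S.p = x)
    (by rintro (x | ⟨w, z⟩ | ⟨⟨i, b⟩, hb⟩ | x) c d hcd h
        exacts [hcd.1 h, ⟨hcd.1 h.1, hcd.1 h.2⟩, trivial, hcd.1 h])
    (by rintro (x | ⟨w, z⟩ | ⟨⟨i, b⟩, hb⟩ | x) c h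
        exacts [c.exists_hasPole h x.2, c.exists_decides h.1 h.2, c.exists_pow_eq_sub hb,
          c.exists_pow_eq h])
  obtain ⟨c₀, hc₀⟩ := 𝓘.nonempty
  exact ⟨𝓘, fun x hx c hc hxc => h𝓘 (.inl ⟨x, hx⟩) c hc hxc,
    fun w z c hc hw hz => h𝓘 (.inr (.inl (w, z))) c hc ⟨hw, hz⟩,
    fun i b hb => h𝓘 (.inr (.inr (.inl ⟨(i, b), hb⟩))) c₀ hc₀ trivial,
    fun x c hc hxc => h𝓘 (.inr (.inr (.inr x))) c hc hxc⟩

/-- The union of the fields of an ideal of conditions. -/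
def union (𝓘 : Order.Ideal (Condition S)) : IntermediateField F Ω :=
  ⨆ c : 𝓘, c.1.K

theorem le_union {𝓘 : Order.Ideal (Condition S)} {c : Condition S} (hc : c ∈ 𝓘) :
    c.K ≤ union 𝓘 :=
  le_iSup (fun c : 𝓘 => c.1.K) ⟨c, hc⟩

theorem mem_union {𝓘 : Order.Ideal (Condition S)} {x : Ω} :
    x ∈ union 𝓘 ↔ ∃ c ∈ 𝓘, x ∈ c.K := by
  have : Nonempty 𝓘 := 𝓘.nonempty.to_subtype
  have directed : Directed (· ≤ ·) fun c : 𝓘 => c.1.K := fun c d => by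
    obtain ⟨e, he, hce, hde⟩ := 𝓘.directed c c.2 d d.2
    exact ⟨⟨e, he⟩, hce.1, hde.1⟩
  rw [union, ← SetLike.mem_coe, coe_iSup_of_directed directed]
  simp

theorem exists_mem_mem {𝓘 : Order.Ideal (Condition S)} {w z : Ω} (hw : w ∈ union 𝓘)
    (hz : z ∈ union 𝓘) : ∃ c ∈ 𝓘, w ∈ c.K ∧ z ∈ c.K := by
  obtain ⟨c, hc, hwc⟩ := mem_union.1 hw
  obtain ⟨d, hd, hzd⟩ := mem_union.1 hz
  obtain ⟨e, he, hce, hde⟩ := 𝓘.directed c hc d hd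
  exact ⟨e, he, hce.1 hwc, hde.1 hzd⟩

theorem valueDvd_of_union {𝓘 : Order.Ideal (Condition S)} {c : Condition S} (hc : c ∈ 𝓘)
    {V : Place F Ω} (hV : V ∈ c.J) {g : Ω} (hg : g ∈ c.K)
    (h : ValueDvd V.valuation (union 𝓘) S.ℓ g) : ValueDvd V.valuation c.K S.ℓ g := by
  obtain ⟨y, hy, hyg⟩ := h
  obtain ⟨d, hd, hyd⟩ := mem_union.1 hy
  obtain ⟨e, -, hce, hde⟩ := 𝓘.directed c hc d hd
  exact hce.2.2 V hV g hg ⟨y, hde.1 hyd, hyg⟩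

theorem exists_isGeneric [IsAlgClosed F] [IsAlgClosed Ω] [Countable Ω] [Countable ι]
    (S : Setup F Ω ι) : ∃ K, IsGeneric S K := by
  obtain ⟨𝓘, hpole, hdecides, hpow_sub, hpow⟩ := exists_ideal S
  refine ⟨union 𝓘, ?_, fun x hx hxF => ?_, fun w z h => ?_, fun i a ha => ?_, fun x hx => ?_,
    fun i a ha V hV => ?_⟩
  · obtain ⟨c, hc⟩ := 𝓘.nonempty
    exact le_union hc c.t_mem
  · obtain ⟨c, hc, hxc⟩ := mem_union.1 hx
    obtain ⟨d, hd, V, hV, π, hπ, hπ1, hπx, hdvd⟩ := hpole x hxF c hc hxc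
    exact ⟨V, π, le_union hd hπ, hπ1, hπx, fun h => hdvd (valueDvd_of_union hd hV hπ h)⟩
  · obtain ⟨c, hc, hwc, hzc⟩ := exists_mem_mem w.2 z.2
    obtain ⟨d, hd, hw, hz, ⟨V, hV, hdvd, hle⟩ | hsum⟩ := hdecides w z c hc hwc hzc
    · exact (hdvd (valueDvd_of_union hd hV hw (h V hle))).elim
    · exact hsum.map (inclusion (le_union hd)).toRingHom
  · obtain ⟨d, hd, y, hy, hya⟩ := hpow_sub i a ha
    exact ⟨y, le_union hd hy, hya⟩
  · obtain ⟨c, hc, hxc⟩ := mem_union.1 hx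
    obtain ⟨d, hd, y, hy, hyx⟩ := hpow x c hc hxc
    exact ⟨y, le_union hd hy, hyx⟩
  · rintro ⟨y, hy, hya⟩
    obtain ⟨c, -, hyc⟩ := mem_union.1 hy
    exact c.not_valueDvd i a ha V hV ⟨y, hyc, hya⟩

end Condition

theorem transcendental_of_notMem_range [IsAlgClosed F] {x : Ω} (hx : x ∉ (algebraMap F Ω).range) :
    Transcendental F x := fun h => hx <|
  IsIntegral.mem_range_algebraMap_of_minpoly_splits h.isIntegral (IsAlgClosed.splits _)

namespace IsGeneric

variable {K : IntermediateField F Ω}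

theorem isKummerSum_algebraMap (hK : IsGeneric S K) {w : K} (hw : IsKummerSum S.ℓ w 1) (e : F) :
    IsKummerSum S.ℓ w (algebraMap F K e) := by
  refine hK.isKummerSum w _ fun V hV => hw.valueDvd S.prime_ℓ.ne_zero (hV.trans ?_)
  have he : V.valuation (algebraMap F Ω e) ≤ 1 :=
    (V.valuation_le_one_iff _).2 (V.algebraMap_mem e)
  change V.valuation ((w : Ω) * algebraMap F Ω e ^ S.ℓ) ≤ V.valuation ((w : Ω) * 1 ^ S.ℓ)
  rw [map_mul, map_mul, map_pow, one_pow, map_one]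
  gcongr
  exact pow_le_one₀ zero_le he

theorem exists_isKummerSum_one (hK : IsGeneric S K) {x : K} (hx : Transcendental F (x : Ω)) :
    ∃ w : K, IsKummerSum S.ℓ w 1 ∧ ¬IsKummerSum S.ℓ w x := by
  obtain ⟨V, π, hπ, hπ1, hπx, hdvd⟩ := hK.exists_pole x x.2 hx
  let w : K := ⟨π, hπ⟩ / (1 - ⟨π, hπ⟩) ^ S.ℓ
  have hwV : V.valuation (w : Ω) = V.valuation π := by
    change V.valuation (π / (1 - π) ^ S.ℓ) = V.valuation π
    rw [map_div₀, map_pow, V.valuation.map_one_sub_of_lt hπ1, one_pow, div_one]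
  refine ⟨w, hK.isKummerSum w 1 fun W hW => ?_, fun h => hdvd ?_⟩
  · exact ValueDvd.div_one_sub_pow S.prime_ℓ.two_le hπ (by simpa [w] using hW)
  · obtain ⟨y, hy, hyw⟩ := h.valueDvd (v := V.valuation) S.prime_ℓ.ne_zero
      (by rwa [map_mul, hwV, ← map_mul])
    exact ⟨y, hy, hyw.trans hwV⟩

theorem mem_range_iff [IsAlgClosed F] (hK : IsGeneric S K) {x : K} :
    x ∈ Set.range (algebraMap F K) ↔ ∀ w : K, IsKummerSum S.ℓ w 1 → IsKummerSum S.ℓ w x := by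
  refine ⟨?_, fun h => by_contra fun hx => ?_⟩
  · rintro ⟨e, rfl⟩ w hw
    exact hK.isKummerSum_algebraMap hw e
  · obtain ⟨w, hw, hwx⟩ := hK.exists_isKummerSum_one
      (transcendental_of_notMem_range fun ⟨e, he⟩ => hx ⟨e, Subtype.ext he⟩)
    exact hwx (h w hw)

theorem exists_pow_eq_sub_iff (hK : IsGeneric S K) (i : ι) (a : F) :
    (∃ y : K, y ^ S.r i = ⟨S.t, hK.t_mem⟩ - algebraMap F K a) ↔ a ∉ S.A i := by
  refine ⟨fun ⟨y, hy⟩ ha => ?_, fun ha => ?_⟩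
  · obtain ⟨V, hV⟩ := exists_place_valuation_lt_one (S.transcendental_sub a)
    exact hK.not_valueDvd i a ha V hV
      ⟨y, y.2, by rw [← map_pow]; exact congrArg (V.valuation ∘ Subtype.val) hy⟩
  · obtain ⟨y, hy, hya⟩ := hK.exists_pow_eq_sub i a ha
    exact ⟨⟨y, hy⟩, Subtype.ext hya⟩

theorem mem_image_iff [IsAlgClosed F] (hK : IsGeneric S K) {i : ι} {x : K} :
    x ∈ algebraMap F K '' S.A i ↔ (∀ w : K, IsKummerSum S.ℓ w 1 → IsKummerSum S.ℓ w x) ∧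
      ¬∃ y : K, y ^ S.r i = ⟨S.t, hK.t_mem⟩ - x := by
  rw [← hK.mem_range_iff]
  constructor
  · rintro ⟨a, ha, rfl⟩
    exact ⟨⟨a, rfl⟩, (hK.exists_pow_eq_sub_iff i a).not_left.2 ha⟩
  · rintro ⟨⟨a, rfl⟩, h⟩
    exact ⟨a, (hK.exists_pow_eq_sub_iff i a).not_left.1 h, rfl⟩

theorem not_fg (hK : IsGeneric S K) : ¬K.FG := by
  intro hfg
  obtain ⟨V, hV⟩ := exists_place_valuation_lt_one S.transcendental
  have ht0 : S.t ≠ 0 := fun h => S.transcendental (h ▸ isAlgebraic_zero)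
  obtain ⟨x, hx, -, -, hdvd⟩ := exists_forall_not_valueDvd S.trdeg_le_one hfg hK.t_mem ht0 hV
  obtain ⟨y, hy, hyx⟩ := hK.exists_pow_eq x hx
  exact hdvd S.p S.prime_p.two_le ⟨y, hy, by rw [← map_pow, hyx]⟩

end IsGeneric

end Generic

section Definability

open FirstOrder MvPolynomial

variable {K ι : Type*} [Field K]

theorem definable_eval_eq_zero [FirstOrder.Ring.CompatibleRing K] (p : MvPolynomial ι K) :
    (Set.univ : Set K).Definable Language.ring {v : ι → K | eval v p = 0} := by
  convert (FirstOrder.Ring.mvPolynomial_zeroLocus_definable {p}).mono (Set.subset_univ _) using 1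
  ext v
  rw [MvPolynomial.zeroLocus_span]
  simp [aeval_eq_eval]

theorem definable_isKummerSum [FirstOrder.Ring.CompatibleRing K] (n : ℕ)
    (p q : MvPolynomial ι K) :
    (Set.univ : Set K).Definable Language.ring
      {v : ι → K | IsKummerSum n (eval v p) (eval v q)} := by
  let P := rename (Sum.inl : ι → ι ⊕ Fin 4) p
  let Q := rename (Sum.inl : ι → ι ⊕ Fin 4) q
  let Y (i : Fin 4) : MvPolynomial (ι ⊕ Fin 4) K := X (Sum.inr i)
  convert (((definable_eval_eq_zero (Y 0 + Y 1 - Q)).inter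
    (definable_eval_eq_zero (Y 2 ^ n - (1 + P * Y 0 ^ n)))).inter
    (definable_eval_eq_zero (Y 3 ^ n - (1 + P * Y 1 ^ n)))).exists_of_finite using 1
  ext v
  simp only [P, Q, Y, Set.mem_ofPred_eq, Set.mem_inter_iff, map_sub, map_add, map_mul, map_pow,
    map_one, MvPolynomial.eval_X, eval_rename, Sum.elim_inr, Sum.elim_comp_inl, sub_eq_zero]
  constructor
  · rintro ⟨z₁, z₂, u₁, u₂, h, h₁, h₂⟩
    exact ⟨![z₁, z₂, u₁, u₂], ⟨h, h₁⟩, h₂⟩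
  · rintro ⟨u, ⟨h, h₁⟩, h₂⟩
    exact ⟨_, _, _, _, h, h₁, h₂⟩

theorem definableWithParams_setOf_isKummerSum_and_not_pow (n m : ℕ) (t : K) :
    definableWithParams K {x | (∀ w : K, IsKummerSum n w 1 → IsKummerSum n w x) ∧
      ¬∃ y : K, y ^ m = t - x} := by
  let := FirstOrder.Ring.compatibleRingOfRing K
  have h₁ := ((definable_isKummerSum (K := K) n (X (Sum.inr 0) : MvPolynomial (Fin 1 ⊕ Fin 1) K)
    1).himp (definable_isKummerSum n (X (Sum.inr 0)) (X (Sum.inl 0)))).forall_of_finite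
  have h₂ := (definable_eval_eq_zero (X (Sum.inr 0) ^ m - (MvPolynomial.C t - X (Sum.inl 0)) :
    MvPolynomial (Fin 1 ⊕ Fin 1) K)).exists_of_finite
  change (Set.univ : Set K).Definable Language.ring _
  convert h₁.inter h₂.compl using 1
  ext v
  simp only [himp_eq, Set.mem_ofPred_eq, Set.mem_inter_iff, Set.mem_compl_iff, map_sub, map_pow,
    map_one, MvPolynomial.eval_X, MvPolynomial.eval_C, Sum.elim_inr, Sum.elim_inl, sub_eq_zero]
  refine and_congr ⟨fun h u => ?_, fun h w hw => ?_⟩ (not_congr ⟨?_, ?_⟩)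
  · exact or_iff_not_imp_right.2 fun h' => by
      have := not_not.1 h'
      simpa using h _ (by simpa using this)
  · simpa [hw] using h fun _ => w
  · rintro ⟨y, hy⟩
    exact ⟨fun _ => y, hy⟩
  · rintro ⟨u, hu⟩
    exact ⟨u 0, hu⟩

end Definability

theorem infinite_setOf_prime_cast_ne_zero (F : Type*) [Field F] :
    {p : ℕ | p.Prime ∧ (p : F) ≠ 0}.Infinite := by
  refine (Nat.infinite_setOfPred_prime.sdiff (Set.finite_singleton (ringChar F))).mono ?_
  rintro p ⟨hp, hne⟩
  refine ⟨hp, fun h => hne ?_⟩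
  have hdvd := (ringChar.spec F p).1 h
  exact (((Nat.dvd_prime hp).1 hdvd).resolve_left CharP.ringChar_ne_one).symm

theorem exists_intermediateField_definable {F Ω ι : Type*} [Field F] [Field Ω] [Algebra F Ω]
    [IsAlgClosed F] [IsAlgClosed Ω] [Countable Ω] [Countable ι]
    (hd : Algebra.trdeg F Ω ≤ 1) {t : Ω} (ht : Transcendental F t) (A : ι → Set F) :
    ∃ K : IntermediateField F Ω, t ∈ K ∧ ¬K.FG ∧
      ∀ i, definableWithParams K (algebraMap F K '' A i) := by
  have hprimes := infinite_setOf_prime_cast_ne_zero F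
  obtain ⟨f, hf⟩ := exists_injective_nat ι
  let P : ℕ → ℕ := Nat.nth fun p => p.Prime ∧ (p : F) ≠ 0
  have hP (n : ℕ) : (P n).Prime ∧ (P n : F) ≠ 0 := Nat.nth_mem_of_infinite hprimes n
  have hPinj : Function.Injective P := Nat.nth_injective hprimes
  let S : Setup F Ω ι :=
    { t := t
      A := A
      ℓ := P 0
      p := P 1
      r := fun i => P (f i + 2)
      trdeg_le_one := hd
      transcendental := ht
      prime_ℓ := (hP 0).1
      prime_p := (hP 1).1
      prime_r := fun _ => (hP _).1
      cast_ℓ_ne_zero := (hP 0).2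
      cast_p_ne_zero := (hP 1).2
      cast_r_ne_zero := fun _ => (hP _).2
      p_ne_ℓ := hPinj.ne (by lia)
      r_ne_ℓ := fun _ => hPinj.ne (by lia)
      r_ne_p := fun _ => hPinj.ne (by lia)
      r_injective := fun i j h => hf (by simpa using hPinj h) }
  obtain ⟨K, hK⟩ := Condition.exists_isGeneric S
  refine ⟨K, hK.t_mem, hK.not_fg, fun i => ?_⟩
  convert definableWithParams_setOf_isKummerSum_and_not_pow S.ℓ (S.r i) (⟨t, hK.t_mem⟩ : K)
  exact Set.ext fun x => hK.mem_image_iff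

theorem not_finiteDimensional_adjoin_of_not_fg {F C Ω : Type*} [Field F] [Field C] [Field Ω]
    [Algebra F C] [Algebra C Ω] {K : IntermediateField C Ω} [Algebra F K] [IsScalarTower F C K]
    (hK : ¬K.FG) (s : K) : ¬FiniteDimensional F⟮s⟯ K := by
  intro hfin
  have : Algebra.EssFiniteType F F⟮s⟯ := essFiniteType_iff.2
    (fg_adjoin_of_finite (Set.finite_singleton s))
  have := Algebra.EssFiniteType.comp F F⟮s⟯ K
  exact hK (essFiniteType_iff.1 (Algebra.EssFiniteType.of_comp F C K))

theorem isAlgebraic_adjoin_simple_of_trdeg_le_one {F E : Type*} [Field F] [Field E] [Algebra F E]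
    (h : Algebra.trdeg F E ≤ 1) {x : E} (hx : Transcendental F x) :
    Algebra.IsAlgebraic F⟮x⟯ E :=
  ⟨fun z => isAlgebraic_adjoin_iff.2 (isAlgebraic_adjoin_of_trdeg_le_one h hx z)⟩

theorem countable_of_isAlgebraic (R E : Type*) [CommRing R] [IsDomain R] [Field E] [Algebra R E]
    [Module.IsTorsionFree R E] [Countable R] [Algebra.IsAlgebraic R E] : Countable E :=
  Set.countable_univ_iff.1 <| (Algebraic.countable R E).mono fun x _ =>
    Algebra.IsAlgebraic.isAlgebraic x

theorem exists_isAlgClosed_countable_trdeg_eq_one.{u} (F : Type u) [Field F] [Countable F] :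
    ∃ (Ω : Type u) (_ : Field Ω) (_ : Algebra F Ω),
      IsAlgClosed Ω ∧ Countable Ω ∧ Algebra.trdeg F Ω = 1 := by
  let Ω := AlgebraicClosure (RatFunc F)
  have : Algebra.IsAlgebraic F[X] (RatFunc F) :=
    IsLocalization.isAlgebraic _ (nonZeroDivisors F[X])
  have : Countable F[X] := Cardinal.mk_le_aleph0_iff.1 <|
    cardinalMk_le_max.trans (max_le Cardinal.mk_le_aleph0 le_rfl)
  have : Countable (RatFunc F) := countable_of_isAlgebraic F[X] (RatFunc F)
  refine ⟨Ω, inferInstance, inferInstance, inferInstance,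
    countable_of_isAlgebraic (RatFunc F) Ω, ?_⟩
  rw [← trdeg_add_eq F (RatFunc F), ← trdeg_add_eq F F[X] (A := RatFunc F),
    trdeg_of_isDomain, trdeg_eq_zero, trdeg_eq_zero, add_zero, add_zero]

end CountableDefinability

/-- Main Theorem: Let `F` be a countable field and let `A_i ⊆ F`,
`i ∈ I ⊆ ℤ_{>0}`, be a countable collection of countable subsets of `F`.  Then there is a
field `K ⊇ F` of transcendence degree `1` over `F` (i.e. some `t ∈ K` is transcendental
over `F` and `K` is algebraic over `F(t)`), such that `K` has infinite degree over `F(t)`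
for every `t ∈ K` transcendental over `F`, and every `A_i` is first-order definable
over `K` (as a subset of `K` via the embedding `F → K`). -/
theorem stmt_0 (F : Type) [Field F] [Countable F]
    (I : Set ℕ+) (A : ℕ+ → Set F) (hA : ∀ i ∈ I, (A i).Countable) :
    ∃ (K : Type) (_ : Field K) (_ : Algebra F K),
      (∃ t : K, Transcendental F t ∧
        Algebra.IsAlgebraic ↥(IntermediateField.adjoin F {t}) K) ∧
      (∀ t : K, Transcendental F t →
        ¬ FiniteDimensional ↥(IntermediateField.adjoin F {t}) K) ∧
      (∀ i ∈ I, definableWithParams K {x : K | ∃ a ∈ A i, algebraMap F K a = x}) := by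
  let C := AlgebraicClosure F
  have : Countable C := CountableDefinability.countable_of_isAlgebraic F C
  obtain ⟨Ω, _, _, _, _, trdeg_Ω⟩ :=
    CountableDefinability.exists_isAlgClosed_countable_trdeg_eq_one C
  obtain ⟨t, ht⟩ := trdeg_ne_zero_iff.1 (trdeg_Ω.trans_ne one_ne_zero)
  obtain ⟨K, htK, not_fg, definable⟩ := CountableDefinability.exists_intermediateField_definable
    trdeg_Ω.le ht fun i => algebraMap F C '' A i
  let : Algebra F K := Algebra.compHom K (algebraMap F C)
  have : IsScalarTower F C K := .of_algebraMap_eq' rfl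
  have transcendental_t : Transcendental F (⟨t, htK⟩ : K) := fun h =>
    ht ((h.tower_top C).algebraMap (A := Ω))
  have trdeg_K : Algebra.trdeg F K ≤ 1 := by
    rw [← trdeg_add_eq F C (A := K), trdeg_eq_zero, zero_add, ← trdeg_Ω]
    exact trdeg_le_of_injective K.val K.val.injective
  refine ⟨K, inferInstance, inferInstance, ⟨⟨t, htK⟩, transcendental_t, ?_⟩,
    fun s _ => ?_, fun i _ => ?_⟩
  · exact CountableDefinability.isAlgebraic_adjoin_simple_of_trdeg_le_one trdeg_K transcendental_t
  · exact CountableDefinability.not_finiteDimensional_adjoin_of_not_fg not_fg s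
  · simpa only [Set.image_image] using! definable i
end

section
/- Assume: F is a countable field; for each u ∈ ℤ_{>0}, A_u ⊆ F is countable and for every finite set B ⊆ F the complement in F of {a+b : a ∈ A_u, b ∈ B} is infinite; M is a countable field extension of F of transcendence degree at least one over F and t ∈ M is transcendental over F; (q_u)_{u∈ℤ_{>0}} is a sequence of distinct primes, all different from the characteristic of M; for each u, R_u(S) = C_u(S)/B_u(S) ∈ F(S) where C_u(S) = ∏_{i=1}^{m_u}(S−c_{u,i})^{n_{u,i}} and B_u(S) = ∏_{i=1}^{k_u}(S−b_{u,i})^{j_{u,i}} with the c_{u,i}, b_{u,i} ∈ F pairwise distinct and the n_{u,i}, j_{u,i} positive integers, n_{u,1} ≢ 0 (mod q_u) and 0 < deg C_u − deg B_u ≢ 0 (mod q_u); and for every u and every x ∈ M there is y ∈ M with y^{q_u} = R_u(x). Then there exists a field K with F(t) ⊆ K ⊆ M such that: (1) [K : F(t)] is infinite; (2) for every u, the set A_u is definable in K by a first-order formula in the language of rings with parameters from K; (3) F is definable in K by a first-order formula in the language of rings with parameters from K; and (4) for every field H with K ⊆ H ⊆ M and [H : K] finite, either [H : K] = 1 or q_u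 divides [H : K] for some u. -/
/-- Evaluation of the rational function `R(T) = ∏ (T - cᵢ)^{nᵢ} / ∏ (T - bᵢ)^{jᵢ}`
(with coefficients in a subfield `F`) at a point `x` of a field extension `M` of `F`. -/
noncomputable def ratEval {F M : Type*} [Field F] [Field M] [Algebra F M] {m k : ℕ}
    (c : Fin m → F) (b : Fin k → F) (n : Fin m → ℕ) (j : Fin k → ℕ) (x : M) : M :=
  (∏ i, (x - algebraMap F M (c i)) ^ n i) / (∏ i, (x - algebraMap F M (b i)) ^ j i)

/-!
The field `K` is the union of a generic chain of finite extensions of `P = F(t)` inside `M`, each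
carrying finitely many places of types `i = 0, 1, 2, …` which are trivial on `F` and have to survive
in all later fields. A place is an embedding over `F` into an algebraic closure of `F((X))` together
with a field `L` maximal among those in whose value group a fixed value of the given field is not a
`q i`-th power. Such an `L` contains a root of each of its polynomials of degree prime to `q i` and
the `q i`-th roots of its elements whose values are `q i`-th powers, so a place of type `i` survives
extensions of degree prime to `q i` and the adjunction of these roots.

If `y` has a pole at a place, the value of `R i (y)` is that of `y ^ deg (R i)`. Hence, if the value
of `y` is not a `q i`-th power, neither is that of `R i (y + a)` for any integral `a`. If, on the
other hand, the value at each pole of type `i` is a `q i`-th power, then `R i (y + a)` becomes a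
`q i`-th power in a further extension, for almost all `a` in `F`. In the generic field, the
multipliers `x ^ q i` of the set of all `y` for which `R i (y + α)` and `R i (y + α⁻¹)` are
`q i`-th powers for some `α ≠ 0` are therefore given by the `x` without poles of type `i`. All
transcendental elements have poles of type `0`, while the places of type `i ≠ 0` are centred on
`A i`: an element `x` lies in `A i` exactly if it has no pole of type `0` and `(t - x)⁻¹` has a pole
of type `i`.
-/

open Polynomial

section Nonarchimedean

variable {E : Type*} [Field E] {w : AbsoluteValue E ℝ} {r : ℝ}

theorem map_add_lt_of_isNonarchimedean (hw : IsNonarchimedean w) {x y : E} (hx : w x < r)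
    (hy : w y < r) : w (x + y) < r :=
  (hw x y).trans_lt (max_lt hx hy)

theorem map_sub_lt_of_isNonarchimedean (hw : IsNonarchimedean w) {x y : E} (hx : w x < r)
    (hy : w y < r) : w (x - y) < r := by
  rw [sub_eq_add_neg]
  exact map_add_lt_of_isNonarchimedean hw hx (by rwa [w.map_neg])

theorem map_sub_le_of_isNonarchimedean (hw : IsNonarchimedean w) {x y : E} (hx : w x ≤ r)
    (hy : w y ≤ r) : w (x - y) ≤ r := by
  rw [sub_eq_add_neg]
  exact (hw x (-y)).trans (max_le hx (by rwa [w.map_neg]))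

theorem map_sum_lt_of_isNonarchimedean (hw : IsNonarchimedean w) {ι : Type*} {s : Finset ι}
    {f : ι → E} (hr : 0 < r) (h : ∀ i ∈ s, w (f i) < r) : w (∑ i ∈ s, f i) < r := by
  rcases s.eq_empty_or_nonempty with rfl | hs
  · simpa using hr
  · obtain ⟨i, hi, hle⟩ := hw.finset_image_add_of_nonempty f hs
    exact hle.trans_lt (h i hi)

theorem exists_map_sum_eq_of_distinct_values (hw : IsNonarchimedean w) {ι : Type*} {s : Finset ι}
    (hs : s.Nonempty) {f : ι → E}
    (h : ∀ i ∈ s, ∀ k ∈ s, f i ≠ 0 → w (f i) = w (f k) → i = k) :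
    ∃ i ∈ s, w (∑ k ∈ s, f k) = w (f i) := by
  obtain ⟨i, hi, hmax⟩ := s.exists_max_image (fun k => w (f k)) hs
  refine ⟨i, hi, ?_⟩
  by_cases hfi : f i = 0
  · have hzero : ∀ k ∈ s, f k = 0 := fun k hk =>
      w.nonpos_iff.1 ((hmax k hk).trans_eq (by rw [hfi, map_zero]))
    rw [Finset.sum_eq_zero hzero, hfi]
  · exact hw.apply_sum_eq_of_lt (fun a => (w.map_neg a).symm) hi fun k hk hki =>
      (hmax k hk).lt_of_ne fun heq => hki (h i hi k hk hfi heq.symm).symm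

theorem map_eq_one_of_pow_eq {x y : E} {q : ℕ} (hq : q ≠ 0) (h : x ^ q = y) (hy : w y = 1) :
    w x = 1 :=
  (pow_eq_one_iff_of_nonneg (w.nonneg x) hq).1 (by rw [← map_pow, h, hy])

theorem eq_one_of_pow_eq_one_of_map_sub_one_lt (hw : IsNonarchimedean w) {q : ℕ}
    (hq : w (q : E) = 1) {ζ : E} (hζq : ζ ^ q = 1) (hζ : w (ζ - 1) < 1) : ζ = 1 := by
  by_contra hne
  have hq0 : q ≠ 0 := by rintro rfl; simp at hq
  have hζw : w ζ = 1 := map_eq_one_of_pow_eq hq0 hζq (map_one w)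
  have hpow : ∀ i, w (1 - ζ ^ i) < 1 := by
    intro i
    induction i with
    | zero => simp
    | succ i ih =>
      rw [show 1 - ζ ^ (i + 1) = (1 - ζ ^ i) - ζ ^ i * (ζ - 1) by ring]
      refine map_sub_lt_of_isNonarchimedean hw ih ?_
      rwa [map_mul, map_pow, hζw, one_pow, one_mul]
  have hgeom : ∑ i ∈ Finset.range q, ζ ^ i = 0 := by
    refine (mul_eq_zero.1 ?_).resolve_right (sub_ne_zero.2 hne)
    rw [geom_sum_mul, hζq, sub_self]
  have hsum : (q : E) = ∑ i ∈ Finset.range q, (1 - ζ ^ i) := by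
    rw [Finset.sum_sub_distrib, hgeom]; simp
  refine hq.not_lt ?_
  rw [hsum]
  exact map_sum_lt_of_isNonarchimedean hw one_pos fun i _ => hpow i

end Nonarchimedean

/-- `w` makes the field `Ω`, algebraic over `Λ`, behave as an algebraic closure of the field
`Λ = F((T))` with its canonical absolute value. -/
structure IsLaurentModel (F : Type*) {Λ Ω : Type*} [Field F] [Field Λ] [Field Ω] [Algebra F Λ]
    [Algebra Λ Ω] [Algebra F Ω] (w : AbsoluteValue Ω ℝ) (T : Λ) : Prop where
  nonarch : IsNonarchimedean w
  conj : ∀ x y, minpoly Λ x = minpoly Λ y → w x = w y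
  const : ∀ a : F, a ≠ 0 → w (algebraMap F Ω a) = 1
  uniformizer_ne_zero : T ≠ 0
  uniformizer_lt_one : w (algebraMap Λ Ω T) < 1
  value : ∀ z : Λ, z ≠ 0 → ∃ n : ℤ, w (algebraMap Λ Ω z) = w (algebraMap Λ Ω T) ^ n
  dense : ∀ z : Λ, ∀ ε > 0, ∃ r ∈ IntermediateField.adjoin F {T}, w (algebraMap Λ Ω (z - r)) < ε

section LaurentModel

open LaurentSeries WithZero
open scoped RatFunc

theorem algebraMap_ratFunc_mem_adjoin_single (F : Type*) [Field F] (Q : RatFunc F) :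
    algebraMap (RatFunc F) F⸨X⸩ Q ∈
      IntermediateField.adjoin F {(HahnSeries.single 1 1 : F⸨X⸩)} := by
  have hQ : Q ∈ IntermediateField.adjoin F {(RatFunc.X : RatFunc F)} := by
    rw [RatFunc.adjoin_X]; trivial
  let φ : RatFunc F →ₐ[F] F⸨X⸩ :=
    { algebraMap (RatFunc F) F⸨X⸩ with
      commutes' := fun a => by
        change algebraMap (RatFunc F) F⸨X⸩ (algebraMap F (RatFunc F) a) = _
        rw [IsScalarTower.algebraMap_apply F F[X] (RatFunc F),
          ← IsScalarTower.algebraMap_apply F[X] (RatFunc F) F⸨X⸩]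
        simp [LaurentSeries.algebraMap_apply] }
  have hφX : φ RatFunc.X = HahnSeries.single 1 1 := RatFunc.coe_X
  rw [← hφX, ← Set.image_singleton, ← IntermediateField.adjoin_map]
  exact (IntermediateField.mem_map _).2 ⟨Q, hQ, rfl⟩

theorem valued_algebraMap_laurentSeries {F : Type*} [Field F] {a : F} (ha : a ≠ 0) :
    Valued.v (algebraMap F F⸨X⸩ a) = 1 := by
  have hle : ∀ b : F, Valued.v (algebraMap F F⸨X⸩ b) ≤ 1 := fun b => by
    rw [val_le_one_iff_eq_coe]
    exact ⟨PowerSeries.C b, by simp [LaurentSeries.algebraMap_apply]⟩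
  refine le_antisymm (hle a) ?_
  have hinv := hle a⁻¹
  rwa [map_inv₀, map_inv₀, inv_le_one₀ (by simpa [zero_lt_iff] using ha)] at hinv

theorem nonempty_rankOne_laurentSeries (F : Type*) [Field F] :
    Nonempty (Valued.v (R := F⸨X⸩)).RankOne := by
  have hX : Valued.v (HahnSeries.single 1 1 : F⸨X⸩) = exp (-1 : ℤ) := valuation_single_zpow F 1
  have : (Valued.v (R := F⸨X⸩)).IsNontrivial :=
    ⟨HahnSeries.single 1 1, by simp, by rw [hX, ← exp_zero]; exact exp_injective.ne (by decide)⟩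
  rw [Valuation.nonempty_rankOne_iff_mulArchimedean]
  exact MulArchimedean.comap
    (MonoidWithZeroHom.ValueGroup₀.embedding (f := .ofClass (Valued.v (R := F⸨X⸩)))).toMonoidHom
    MonoidWithZeroHom.ValueGroup₀.embedding_strictMono

theorem exists_absoluteValue_of_rankOne {Λ Γ₀ : Type*} [Field Λ]
    [LinearOrderedCommGroupWithZero Γ₀] [Valued Λ Γ₀] [(Valued.v (R := Λ)).RankOne]
    [CompleteSpace Λ] (Ω : Type*) [Field Ω] [Algebra Λ Ω] [Algebra.IsAlgebraic Λ Ω] :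
    ∃ w : AbsoluteValue Ω ℝ, IsNonarchimedean w ∧
      (∀ x y, minpoly Λ x = minpoly Λ y → w x = w y) ∧
      ∀ x y : Λ, w (algebraMap Λ Ω x) ≤ w (algebraMap Λ Ω y) ↔ Valued.v x ≤ Valued.v y := by
  let _ : NontriviallyNormedField Λ := Valued.toNontriviallyNormedField Λ Γ₀
  have : IsUltrametricDist Λ := by open Valued in exact inferInstanceAs (IsUltrametricDist Λ)
  let w : AbsoluteValue Ω ℝ :=
    letI := spectralNorm.normedField Λ Ω
    NormedField.toAbsoluteValue Ω
  refine ⟨w, isNonarchimedean_spectralNorm, fun x y hxy => congrArg spectralValue hxy, ?_⟩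
  have hw : ∀ z : Λ, w (algebraMap Λ Ω z) = ‖z‖ := fun z => spectralNorm_extends z
  intro x y
  rw [hw, hw]
  exact Valued.toNormedField.norm_le_iff

theorem exists_isLaurentModel (F : Type*) [Field F] :
    ∃ w : AbsoluteValue (AlgebraicClosure F⸨X⸩) ℝ,
      IsLaurentModel F w (HahnSeries.single 1 1 : F⸨X⸩) := by
  let Ω := AlgebraicClosure F⸨X⸩
  let _ := (nonempty_rankOne_laurentSeries F).some
  obtain ⟨w, hna, hconj, hle⟩ := exists_absoluteValue_of_rankOne (Λ := F⸨X⸩) Ω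
  have hlt : ∀ x y : F⸨X⸩, w (algebraMap _ Ω x) < w (algebraMap _ Ω y) ↔
      Valued.v x < Valued.v y := fun x y => by simpa only [not_le] using (hle y x).not
  have heq : ∀ x y : F⸨X⸩, Valued.v x = Valued.v y → w (algebraMap _ Ω x) = w (algebraMap _ Ω y) :=
    fun x y h => le_antisymm ((hle x y).2 h.le) ((hle y x).2 h.ge)
  set T : F⸨X⸩ := HahnSeries.single 1 1
  have hT0 : T ≠ 0 := by simp [T]
  have hvT : Valued.v T = exp (-1 : ℤ) := valuation_single_zpow F 1
  have hwT : w (algebraMap _ Ω T) < 1 := by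
    have h1 := (hlt T 1).2 (by rw [hvT, map_one, ← exp_zero, exp_lt_exp]; decide)
    rwa [map_one, map_one] at h1
  refine ⟨w, hna, hconj, fun a ha => ?_, hT0, hwT, fun z hz => ?_, fun z ε hε => ?_⟩
  · rw [IsScalarTower.algebraMap_apply F F⸨X⸩ Ω,
      heq _ 1 (by rw [valued_algebraMap_laurentSeries ha, map_one]), map_one, map_one]
  · refine ⟨-log (Valued.v z), ?_⟩
    rw [← map_zpow₀, ← map_zpow₀]
    refine heq _ _ ?_
    rw [map_zpow₀, hvT, ← exp_zsmul]
    simp [exp_log, hz]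
  · obtain ⟨n, hn⟩ := exists_pow_lt_of_lt_one hε hwT
    obtain ⟨Q, hQ⟩ := exists_ratFunc_val_lt z (Units.mk0 (Valued.v (T ^ n)) (by simp [hT0]))
    refine ⟨Q, algebraMap_ratFunc_mem_adjoin_single F Q, ((hlt _ (T ^ n)).2 hQ).trans ?_⟩
    rwa [map_pow, map_pow]

end LaurentModel

section ConjugateValues

variable {F Λ Ω : Type*} [Field F] [Field Λ] [Field Ω] [Algebra F Λ] [Algebra Λ Ω] [Algebra F Ω]
  [Algebra.IsAlgebraic Λ Ω] {w : AbsoluteValue Ω ℝ} {T : Λ}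
  (L : Type*) [Field L] [Algebra Λ L] [Algebra L Ω] [IsScalarTower Λ L Ω]

theorem IsLaurentModel.map_eq_of_minpoly_eq (hw : IsLaurentModel F w T) {x y : Ω}
    (h : minpoly L x = minpoly L y) : w x = w y := by
  apply hw.conj
  have hx : IsIntegral Λ x := Algebra.IsIntegral.isIntegral x
  refine minpoly.eq_of_irreducible_of_monic (minpoly.irreducible hx) ?_ (minpoly.monic hx)
  rw [← aeval_map_algebraMap L]
  exact aeval_eq_zero_of_dvd_aeval_eq_zero (minpoly.dvd_map_of_isScalarTower Λ L x)
    (by rw [h, minpoly.aeval])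

theorem IsLaurentModel.map_coeff_zero_minpoly [IsAlgClosed Ω] (hw : IsLaurentModel F w T)
    (x : Ω) : w (algebraMap L Ω ((minpoly L x).coeff 0)) = w x ^ (minpoly L x).natDegree := by
  have hx : IsIntegral L x := (Algebra.IsIntegral.isIntegral (R := Λ) x).tower_top
  have hsplit := IsAlgClosed.splits ((minpoly L x).map (algebraMap L Ω))
  have hmonic := (minpoly.monic hx).map (algebraMap L Ω)
  have hroots : ∀ y ∈ ((minpoly L x).map (algebraMap L Ω)).roots, w y = w x := by
    intro y hy
    rw [mem_roots hmonic.ne_zero, IsRoot.def, eval_map_algebraMap] at hy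
    exact hw.map_eq_of_minpoly_eq L
      (minpoly.eq_of_irreducible_of_monic (minpoly.irreducible hx) hy (minpoly.monic hx)).symm
  rw [← coeff_map, hsplit.coeff_zero_eq_prod_roots_of_monic hmonic, map_mul, map_pow, w.map_neg,
    map_one, one_pow, one_mul, map_multiset_prod, Multiset.map_congr rfl hroots,
    Multiset.map_const', Multiset.prod_replicate, ← hsplit.natDegree_eq_card_roots, natDegree_map]

end ConjugateValues

section Degrees

variable {K E : Type*} [Field K] [Field E] [Algebra K E]

theorem natDegree_minpoly_dvd_of_mem_adjoin {x y : E} (hx : IsIntegral K x)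
    (hy : y ∈ IntermediateField.adjoin K {x}) :
    (minpoly K y).natDegree ∣ (minpoly K x).natDegree := by
  have := IntermediateField.adjoin.finiteDimensional hx
  rw [← IntermediateField.adjoin.finrank hx, ← IntermediateField.minpoly_eq (⟨y, hy⟩ : _)]
  exact minpoly.degree_dvd (IsIntegral.of_finite K _)

theorem mem_adjoin_of_natDegree_minpoly_eq {x y : E} (hx : IsIntegral K x)
    (hy : y ∈ IntermediateField.adjoin K {x})
    (h : (minpoly K y).natDegree = (minpoly K x).natDegree) :
    x ∈ IntermediateField.adjoin K {y} := by
  have := IntermediateField.adjoin.finiteDimensional hx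
  have hyint : IsIntegral K y := by
    simpa using (IsIntegral.of_finite K
      (⟨y, hy⟩ : IntermediateField.adjoin K {x})).map (IntermediateField.adjoin K {x}).val
  rw [IntermediateField.eq_of_le_of_finrank_eq (IntermediateField.adjoin_simple_le_iff.2 hy)
    (by rw [IntermediateField.adjoin.finrank hx, IntermediateField.adjoin.finrank hyint, h])]
  exact IntermediateField.mem_adjoin_simple_self K x

theorem exists_eq_sum_of_mem_adjoin {x y : E} (hx : IsIntegral K x)
    (hy : y ∈ IntermediateField.adjoin K {x}) :
    ∃ c : ℕ → K, y = ∑ i ∈ Finset.range (minpoly K x).natDegree, algebraMap K E (c i) * x ^ i := by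
  obtain ⟨p, hpdeg, hp⟩ := (IntermediateField.adjoin.powerBasis hx).exists_eq_aeval ⟨y, hy⟩
  rw [IntermediateField.adjoin.powerBasis_dim] at hpdeg
  refine ⟨p.coeff, ?_⟩
  have hval := congrArg (algebraMap _ E) hp
  rw [← aeval_algebraMap_apply, IntermediateField.adjoin.powerBasis_gen,
    IntermediateField.AdjoinSimple.algebraMap_gen, aeval_eq_sum_range' hpdeg] at hval
  simp only [Algebra.smul_def] at hval
  exact hval

theorem exists_irreducible_dvd_not_dvd_natDegree {q : ℕ} {p : K[X]} (hp : ¬ q ∣ p.natDegree) :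
    ∃ g : K[X], Irreducible g ∧ g ∣ p ∧ ¬ q ∣ g.natDegree := by
  by_contra! hdvd
  have hdeg : ∀ r : K[X], r ≠ 0 → r ∣ p → q ∣ r.natDegree := by
    intro r
    induction r using WfDvdMonoid.induction_on_irreducible with
    | zero => exact fun h => absurd rfl h
    | unit u hu => intro _ _; simp [natDegree_eq_zero_of_isUnit hu]
    | mul a i ha hi ih =>
      intro _ hai
      rw [natDegree_mul hi.ne_zero ha]
      exact dvd_add (hdvd i hi (dvd_of_mul_right_dvd hai)) (ih ha (dvd_of_mul_left_dvd hai))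
  exact hp (hdeg p (by rintro rfl; simp at hp) dvd_rfl)

end Degrees

section PowValue

variable {Λ Ω : Type*} [Field Λ] [Field Ω] [Algebra Λ Ω] {w : AbsoluteValue Ω ℝ}
  {L : IntermediateField Λ Ω} {q : ℕ}

/-- The absolute value of `x` is a `q`-th power in the value group of `L`. The element `x` need
not lie in `L`, and `x = 0` qualifies as soon as `q ≠ 0`. -/
def HasPowValue (w : AbsoluteValue Ω ℝ) (L : IntermediateField Λ Ω) (q : ℕ) (x : Ω) : Prop :=
  ∃ h ∈ L, w h ^ q = w x

theorem hasPowValue_zero (hq : q ≠ 0) : HasPowValue w L q 0 :=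
  ⟨0, L.zero_mem, by rw [map_zero, zero_pow hq]⟩

theorem hasPowValue_of_map_eq_one {x : Ω} (hx : w x = 1) : HasPowValue w L q x :=
  ⟨1, L.one_mem, by rw [map_one, one_pow, hx]⟩

theorem hasPowValue_congr {x y : Ω} (h : w x = w y) :
    HasPowValue w L q x ↔ HasPowValue w L q y := by
  rw [HasPowValue, HasPowValue, h]

theorem HasPowValue.mul_pow {x y : Ω} (hx : HasPowValue w L q x) (hy : y ∈ L) :
    HasPowValue w L q (x * y ^ q) := by
  obtain ⟨h, hh, hhx⟩ := hx
  exact ⟨h * y, L.mul_mem hh hy, by rw [map_mul, _root_.mul_pow, hhx, map_mul, map_pow]⟩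

theorem hasPowValue_mul_pow_iff {x y : Ω} (hy : y ∈ L) (hy0 : y ≠ 0) :
    HasPowValue w L q (x * y ^ q) ↔ HasPowValue w L q x := by
  have hwy : w y ^ q ≠ 0 := pow_ne_zero _ (w.ne_zero hy0)
  refine ⟨fun ⟨h, hh, hhx⟩ => ⟨h / y, L.div_mem hh hy, ?_⟩, fun hx => hx.mul_pow hy⟩
  rw [map_div₀, div_pow, hhx, map_mul, map_pow, mul_div_cancel_right₀ _ hwy]

theorem hasPowValue_of_zpow {x : Ω} (hx : x ∈ L) (hx0 : x ≠ 0) {e : ℤ} (he : IsCoprime e q)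
    (h : HasPowValue w L q (x ^ e)) : HasPowValue w L q x := by
  obtain ⟨a, b, hab⟩ := he
  obtain ⟨y, hy, hyx⟩ := h
  refine ⟨y ^ a * x ^ b, L.mul_mem (zpow_mem hy a) (zpow_mem hx b), ?_⟩
  calc w (y ^ a * x ^ b) ^ q = (w y ^ q) ^ a * w x ^ (b * q) := by
        rw [map_mul, map_zpow₀, map_zpow₀, mul_pow, zpow_mul, zpow_natCast,
          ← zpow_natCast (w y ^ a), ← zpow_natCast (w y) q, zpow_comm]
    _ = w x ^ (a * e + b * q) := by
        rw [hyx, map_zpow₀, ← zpow_mul, mul_comm e, zpow_add₀ (w.ne_zero hx0)]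
    _ = w x := by rw [hab, zpow_one]

theorem dvd_of_map_eq_zpow (hq : q.Prime) {s h a : Ω} (hs : s ∈ L) (hsL : ¬ HasPowValue w L q s)
    (hhs : w h ^ q = w s) (ha : a ∈ L) {e : ℤ} (hae : w a = w h ^ e) : (q : ℤ) ∣ e := by
  by_contra hdvd
  have hs0 : s ≠ 0 := by rintro rfl; exact hsL (hasPowValue_zero hq.ne_zero)
  have hcop : IsCoprime e q :=
    ((Nat.prime_iff_prime_int.1 hq).coprime_iff_not_dvd.2 hdvd).symm
  refine hsL (hasPowValue_of_zpow hs hs0 hcop ⟨a, ha, ?_⟩)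
  rw [hae, map_zpow₀, ← hhs, ← zpow_natCast, ← zpow_natCast, zpow_comm]

-- The terms of the sum have distinct values, as `1, w h, …, w h ^ (q - 1)` represent distinct
-- classes modulo the value group of `L`.
theorem map_sum_ne_map_of_independent (hna : IsNonarchimedean w) {h : Ω} (h0 : h ≠ 0)
    (hind : ∀ a ∈ L, ∀ e : ℤ, w a = w h ^ e → (q : ℤ) ∣ e) (c : ℕ → L)
    (hsum : ∑ i ∈ Finset.Ico 1 q, (c i : Ω) * h ^ i ≠ 0) {a : Ω} (ha : a ∈ L) :
    w (∑ i ∈ Finset.Ico 1 q, (c i : Ω) * h ^ i) ≠ w a := by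
  have hwh : w h ≠ 0 := w.ne_zero h0
  have hdvd : ∀ i b, b ∈ L → ∀ k : ℕ, (c i : Ω) * h ^ i ≠ 0 →
      w ((c i : Ω) * h ^ i) = w (b * h ^ k) → (q : ℤ) ∣ i - k := by
    intro i b hb k hi hik
    have hci : w (c i : Ω) ≠ 0 := w.ne_zero (left_ne_zero_of_mul hi)
    refine hind (b / c i) (L.div_mem hb (c i).2) _ ?_
    rw [map_mul, map_mul, map_pow, map_pow] at hik
    rw [map_div₀, zpow_sub₀ hwh, zpow_natCast, zpow_natCast,
      div_eq_div_iff hci (pow_ne_zero _ hwh), ← hik, mul_comm]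
  have hne : (Finset.Ico 1 q).Nonempty := Finset.nonempty_of_sum_ne_zero hsum
  obtain ⟨i, hi, heq⟩ := exists_map_sum_eq_of_distinct_values hna hne
    (f := fun i => (c i : Ω) * h ^ i) fun i hi k hk hfi hik => by
      have hmod := (Int.natCast_dvd_natCast.2 dvd_rfl).trans (hdvd i _ (c k).2 k hfi hik)
      rw [Finset.mem_Ico] at hi hk
      have := Int.eq_zero_of_abs_lt_dvd hmod (by rw [abs_lt]; omega)
      omega
  intro hwa
  have hfi : (c i : Ω) * h ^ i ≠ 0 := by
    rw [← map_ne_zero w] at hsum ⊢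
    rwa [← heq]
  have hqi := hdvd i a ha 0 hfi (by rw [pow_zero, mul_one, ← hwa, heq])
  rw [Finset.mem_Ico] at hi
  have := Int.eq_zero_of_abs_lt_dvd hqi (by rw [abs_lt]; omega)
  omega

end PowValue

section Maximal

variable {Λ Ω : Type*} [Field Λ] [Field Ω] [Algebra Λ Ω] {w : AbsoluteValue Ω ℝ}
  {L : IntermediateField Λ Ω} {q : ℕ} {s : Ω}

/-- `L` contains `s` and is maximal among the fields in whose value group the absolute value of
`s` is not a `q`-th power. Such a field contains roots of all its polynomials of degree prime to
`q`, and the `q`-th roots of those elements whose values are `q`-th powers. -/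
def IsPowValueMaximal (w : AbsoluteValue Ω ℝ) (q : ℕ) (s : Ω) (L : IntermediateField Λ Ω) : Prop :=
  s ∈ L ∧ Maximal (fun L' : IntermediateField Λ Ω => ¬ HasPowValue w L' q s) L

theorem exists_isPowValueMaximal (hs : s ∈ L) (hsL : ¬ HasPowValue w L q s) :
    ∃ L', L ≤ L' ∧ IsPowValueMaximal w q s L' := by
  obtain ⟨L', hLL', hmax⟩ := zorn_le_nonempty₀
    {L' : IntermediateField Λ Ω | ¬ HasPowValue w L' q s} (fun c hc hchain L₀ hL₀ => by
      refine ⟨sSup c, ?_, fun _ => le_sSup⟩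
      rintro ⟨h, hh, hhs⟩
      have : Nonempty c := ⟨L₀, hL₀⟩
      rw [sSup_eq_iSup', ← SetLike.mem_coe, IntermediateField.coe_iSup_of_directed
        hchain.directedOn.directed_val, Set.mem_iUnion] at hh
      obtain ⟨L₁, hL₁⟩ := hh
      exact hc L₁.2 ⟨h, hL₁, hhs⟩) L hsL
  exact ⟨L', hLL', hLL' hs, hmax⟩

theorem IsPowValueMaximal.exists_mem_adjoin (hL : IsPowValueMaximal w q s L) {α : Ω} (hα : α ∉ L) :
    ∃ h ∈ IntermediateField.adjoin L {α}, w h ^ q = w s := by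
  by_contra hcon
  refine hα (hL.2.2 (y := (IntermediateField.adjoin L {α}).restrictScalars Λ) hcon
    (fun x hx => (IntermediateField.adjoin L {α}).algebraMap_mem ⟨x, hx⟩) ?_)
  exact IntermediateField.mem_adjoin_simple_self L α

theorem IsPowValueMaximal.dvd_of_map_eq_zpow (hL : IsPowValueMaximal w q s L) (hq : q.Prime)
    {h : Ω} (hhs : w h ^ q = w s) {a : Ω} (ha : a ∈ L) {e : ℤ} (hae : w a = w h ^ e) :
    (q : ℤ) ∣ e :=
  _root_.dvd_of_map_eq_zpow hq hL.1 hL.2.1 hhs ha hae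

theorem IsPowValueMaximal.ne_zero (hL : IsPowValueMaximal w q s L) (hq : q ≠ 0) : s ≠ 0 := by
  rintro rfl
  exact hL.2.1 (hasPowValue_zero hq)

section LaurentModel

variable {F : Type*} [Field F] [Algebra F Λ] [Algebra F Ω] {T : Λ} [Algebra.IsAlgebraic Λ Ω]
  [IsAlgClosed Ω]

theorem IsPowValueMaximal.dvd_natDegree_minpoly_of_map_pow_eq (hw : IsLaurentModel F w T)
    (hL : IsPowValueMaximal w q s L) (hq : q.Prime) {h : Ω} (hhs : w h ^ q = w s) :
    q ∣ (minpoly L h).natDegree :=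
  Int.natCast_dvd_natCast.1 <| hL.dvd_of_map_eq_zpow hq hhs (SetLike.coe_mem _)
    ((hw.map_coeff_zero_minpoly L h).trans (zpow_natCast _ _).symm)

theorem IsPowValueMaximal.dvd_natDegree_minpoly (hw : IsLaurentModel F w T)
    (hL : IsPowValueMaximal w q s L) (hq : q.Prime) {α : Ω} (hα : α ∉ L) :
    q ∣ (minpoly L α).natDegree := by
  obtain ⟨h, hh, hhs⟩ := hL.exists_mem_adjoin hα
  exact (hL.dvd_natDegree_minpoly_of_map_pow_eq hw hq hhs).trans
    (natDegree_minpoly_dvd_of_mem_adjoin (Algebra.IsIntegral.isIntegral α) hh)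

theorem IsPowValueMaximal.exists_root (hw : IsLaurentModel F w T)
    (hL : IsPowValueMaximal w q s L) (hq : q.Prime) {p : L[X]} (hp : ¬ q ∣ p.natDegree) :
    ∃ x : L, p.IsRoot x := by
  obtain ⟨g, hg, hgp, hgq⟩ := exists_irreducible_dvd_not_dvd_natDegree hp
  obtain ⟨α, hα⟩ := IsAlgClosed.exists_aeval_eq_zero Ω g (degree_pos_of_irreducible hg).ne'
  have hαL : α ∈ L := by
    by_contra hαL
    have hdvd := hL.dvd_natDegree_minpoly hw hq hαL
    rw [← minpoly.eq_of_irreducible hg hα, natDegree_mul_C (by simpa using hg.ne_zero)] at hdvd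
    exact hgq hdvd
  have hroot : aeval (algebraMap L Ω ⟨α, hαL⟩) g = 0 := hα
  rw [aeval_algebraMap_apply_eq_algebraMap_eval, map_eq_zero] at hroot
  exact ⟨⟨α, hαL⟩, IsRoot.dvd hroot hgp⟩

theorem IsPowValueMaximal.exists_map_sub_lt_one (hw : IsLaurentModel F w T)
    (hL : IsPowValueMaximal w q s L) (hq : q.Prime) {ρ : Ω} (hρ : w ρ = 1)
    (hdeg : (minpoly L ρ).natDegree = q) : ∃ a : L, w (ρ - a) < 1 := by
  have hρL : ρ ∉ L := fun h => hq.ne_one <| by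
    rw [← hdeg]; exact minpoly.natDegree_eq_one_iff.2 ⟨⟨ρ, h⟩, rfl⟩
  have hint : ∀ x : Ω, IsIntegral L x := Algebra.IsIntegral.isIntegral
  obtain ⟨h, hh, hhs⟩ := hL.exists_mem_adjoin hρL
  have h0 : h ≠ 0 := by
    rintro rfl
    rw [map_zero, zero_pow hq.ne_zero] at hhs
    exact w.ne_zero (hL.ne_zero hq.ne_zero) hhs.symm
  have hhdeg : (minpoly L h).natDegree = q :=
    Nat.dvd_antisymm (hdeg ▸ natDegree_minpoly_dvd_of_mem_adjoin (hint ρ) hh)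
      (hL.dvd_natDegree_minpoly_of_map_pow_eq hw hq hhs)
  obtain ⟨c, hc⟩ := exists_eq_sum_of_mem_adjoin (hint h)
    (mem_adjoin_of_natDegree_minpoly_eq (hint ρ) hh (hhdeg.trans hdeg.symm))
  rw [hhdeg, Finset.range_eq_Ico, Finset.sum_eq_sum_Ico_succ_bot hq.pos, pow_zero, mul_one] at hc
  have hsub : ρ - c 0 = ∑ i ∈ Finset.Ico 1 q, (c i : Ω) * h ^ i :=
    sub_eq_of_eq_add' hc
  have hne : ∀ a ∈ L, w (ρ - c 0) ≠ w a := fun a ha => by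
    have h1 := map_sum_ne_map_of_independent hw.nonarch h0
      (fun b hb e => hL.dvd_of_map_eq_zpow hq hhs hb (e := e)) c
      (by rw [← hsub, sub_ne_zero]; rintro rfl; exact hρL (c 0).2) ha
    rwa [← hsub] at h1
  refine ⟨c 0, lt_of_not_ge fun hge => ?_⟩
  have hgt : w ρ < w (c 0 - ρ) := by
    rw [hρ, w.map_sub]
    exact hge.lt_of_ne fun h1 => hne 1 L.one_mem (by rw [map_one, h1])
  refine hne (c 0) (c 0).2 ?_
  rw [w.map_sub, ← hw.nonarch.add_eq_left_of_lt hgt, sub_add_cancel]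

theorem IsPowValueMaximal.exists_pow_eq_of_map_eq_one (hw : IsLaurentModel F w T)
    (hL : IsPowValueMaximal w q s L) (hq : q.Prime) (hqF : (q : F) ≠ 0) {u : Ω} (hu : u ∈ L)
    (hu1 : w u = 1) : ∃ z ∈ L, z ^ q = u := by
  by_contra! hcon
  have hirr : Irreducible (X ^ q - C (⟨u, hu⟩ : L)) :=
    X_pow_sub_C_irreducible_of_prime hq fun b hb => hcon b b.2 (congrArg Subtype.val hb)
  have hminpoly : ∀ ρ : Ω, ρ ^ q = u → minpoly L ρ = X ^ q - C (⟨u, hu⟩ : L) := fun ρ hρ => by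
    refine (minpoly.eq_of_irreducible_of_monic hirr ?_ (monic_X_pow_sub_C _ hq.ne_zero)).symm
    rw [map_sub, map_pow, aeval_X, aeval_C, hρ]
    exact sub_self u
  obtain ⟨ρ, hρ⟩ := IsAlgClosed.exists_pow_nat_eq u hq.pos
  have hρ1 : w ρ = 1 := map_eq_one_of_pow_eq hq.ne_zero hρ hu1
  obtain ⟨a, ha⟩ := hL.exists_map_sub_lt_one hw hq hρ1
    (by rw [hminpoly ρ hρ, natDegree_X_pow_sub_C])
  have hconj : ∀ ρ' : Ω, ρ' ^ q = u → w (ρ' - ρ) < 1 := fun ρ' hρ' => by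
    have hsub : w (ρ' - a) = w (ρ - a) := hw.map_eq_of_minpoly_eq L <|
      (minpoly.sub_algebraMap ρ' a).trans <| by
        rw [hminpoly ρ' hρ', ← hminpoly ρ hρ]; exact (minpoly.sub_algebraMap ρ a).symm
    rw [← sub_sub_sub_cancel_right ρ' ρ (a : Ω)]
    exact map_sub_lt_of_isNonarchimedean hw.nonarch (hsub.trans_lt ha) ha
  have hqΩ : w (q : Ω) = 1 := by simpa using hw.const q hqF
  have : NeZero (q : Ω) := ⟨fun h0 => by simp [h0] at hqΩ⟩
  obtain ⟨ζ, hζ⟩ := HasEnoughRootsOfUnity.exists_primitiveRoot Ω q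
  refine hζ.ne_one hq.one_lt
    (eq_one_of_pow_eq_one_of_map_sub_one_lt hw.nonarch hqΩ hζ.pow_eq_one ?_)
  have hζρ := hconj (ζ * ρ) (by rw [mul_pow, hζ.pow_eq_one, one_mul, hρ])
  rwa [← sub_one_mul, map_mul, hρ1, mul_one] at hζρ

theorem IsPowValueMaximal.exists_pow_eq (hw : IsLaurentModel F w T)
    (hL : IsPowValueMaximal w q s L) (hq : q.Prime) (hqF : (q : F) ≠ 0) {y : Ω} (hy : y ∈ L)
    (hpow : HasPowValue w L q y) : ∃ z ∈ L, z ^ q = y := by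
  by_cases hy0 : y = 0
  · exact ⟨0, L.zero_mem, by rw [hy0, zero_pow hq.ne_zero]⟩
  obtain ⟨h, hh, hhy⟩ := hpow
  have hwy : w y ≠ 0 := w.ne_zero hy0
  have h0 : h ≠ 0 := by
    rintro rfl
    rw [map_zero, zero_pow hq.ne_zero] at hhy
    exact hwy hhy.symm
  obtain ⟨z, hz, hzq⟩ := hL.exists_pow_eq_of_map_eq_one hw hq hqF
    (L.div_mem hy (pow_mem hh q)) (by rw [map_div₀, map_pow, hhy, div_self hwy])
  exact ⟨z * h, L.mul_mem hz hh, by rw [mul_pow, hzq, div_mul_cancel₀ _ (pow_ne_zero _ h0)]⟩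

end LaurentModel

end Maximal

section Constants

variable {F Λ Ω : Type*} [Field F] [Field Λ] [Field Ω] [Algebra F Λ] [Algebra Λ Ω] [Algebra F Ω]
  {w : AbsoluteValue Ω ℝ} {T : Λ}

theorem IsLaurentModel.map_const_le_one (hw : IsLaurentModel F w T) (a : F) :
    w (algebraMap F Ω a) ≤ 1 := by
  rcases eq_or_ne a 0 with rfl | ha
  · simp
  · exact (hw.const a ha).le

theorem IsLaurentModel.map_le_one_of_isAlgebraic (hw : IsLaurentModel F w T) {z : Ω}
    (hz : IsAlgebraic F z) : w z ≤ 1 := by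
  by_contra! hlt
  have hroot := minpoly.aeval F z
  rw [aeval_eq_sum_range, Finset.sum_range_succ, (minpoly.monic hz.isIntegral).coeff_natDegree,
    one_smul, add_eq_zero_iff_eq_neg] at hroot
  have hsum : w (∑ i ∈ Finset.range (minpoly F z).natDegree, (minpoly F z).coeff i • z ^ i) <
      w z ^ (minpoly F z).natDegree := by
    refine map_sum_lt_of_isNonarchimedean hw.nonarch (by positivity) fun i hi => ?_
    rw [Algebra.smul_def, map_mul, map_pow]
    calc _ ≤ 1 * w z ^ i := by gcongr; exact hw.map_const_le_one _
      _ < _ := by rw [one_mul]; exact pow_lt_pow_right₀ hlt (Finset.mem_range.1 hi)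
  rw [hroot, w.map_neg, map_pow] at hsum
  exact hsum.false

theorem IsLaurentModel.map_eq_one_of_isAlgebraic (hw : IsLaurentModel F w T) {z : Ω}
    (hz : IsAlgebraic F z) (hz0 : z ≠ 0) : w z = 1 := by
  refine le_antisymm (hw.map_le_one_of_isAlgebraic hz) ?_
  have h := hw.map_le_one_of_isAlgebraic hz.inv
  rwa [map_inv₀, inv_le_one₀ (w.pos hz0)] at h

theorem IsLaurentModel.map_uniformizer_ne_zero (hw : IsLaurentModel F w T) :
    w (algebraMap Λ Ω T) ≠ 0 :=
  w.ne_zero (by simpa using hw.uniformizer_ne_zero)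

theorem IsLaurentModel.one_lt_map_inv_uniformizer (hw : IsLaurentModel F w T) :
    1 < w (algebraMap Λ Ω T)⁻¹ := by
  rw [map_inv₀]
  exact (one_lt_inv₀ ((w.nonneg _).lt_of_ne' hw.map_uniformizer_ne_zero)).2 hw.uniformizer_lt_one

theorem IsLaurentModel.transcendental_inv_uniformizer [IsScalarTower F Λ Ω]
    (hw : IsLaurentModel F w T) : Transcendental F T⁻¹ := fun halg => by
  have hle := hw.map_le_one_of_isAlgebraic (halg.algebraMap (A := Ω))
  rw [map_inv₀] at hle
  exact hle.not_gt hw.one_lt_map_inv_uniformizer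

theorem IsLaurentModel.exists_map_pow_eq_zpow [Algebra.IsAlgebraic Λ Ω] [IsAlgClosed Ω]
    (hw : IsLaurentModel F w T) {y : Ω} (hy0 : y ≠ 0) :
    ∃ k : ℤ, w y ^ (minpoly Λ y).natDegree = w (algebraMap Λ Ω T) ^ k := by
  rw [← hw.map_coeff_zero_minpoly Λ y]
  exact hw.value _ (minpoly.coeff_zero_ne_zero (Algebra.IsIntegral.isIntegral y) hy0)

end Constants

section Approximation

variable {F Λ Ω : Type*} [Field F] [Field Λ] [Field Ω] [Algebra F Λ] [Algebra Λ Ω] [Algebra F Ω]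
  [Algebra.IsAlgebraic Λ Ω] [IsScalarTower F Λ Ω] {w : AbsoluteValue Ω ℝ} {T : Λ}
  {E : Type*} [Field E] [Algebra F E]

theorem IsLaurentModel.exists_map_sub_lt (hw : IsLaurentModel F w T) (σ : E →ₐ[F] Ω)
    (hT : algebraMap Λ Ω T ∈ σ.fieldRange) {y : Ω}
    (hy : y ∈ IntermediateField.adjoin Λ (Set.range σ)) : ∀ ε > 0, ∃ e : E, w (y - σ e) < ε := by
  rw [← IntermediateField.mem_toSubalgebra, IntermediateField.adjoin_toSubalgebra] at hy
  induction hy using Algebra.adjoin_induction with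
  | mem x hx =>
    obtain ⟨e, rfl⟩ := hx
    exact fun ε hε => ⟨e, by simpa using hε⟩
  | algebraMap z =>
    intro ε hε
    obtain ⟨r, hr, hzr⟩ := hw.dense z ε hε
    have hle : IntermediateField.adjoin F {T} ≤
        σ.fieldRange.comap (IsScalarTower.toAlgHom F Λ Ω) :=
      IntermediateField.adjoin_simple_le_iff.2 hT
    obtain ⟨e, he : σ e = algebraMap Λ Ω r⟩ := hle hr
    exact ⟨e, by rwa [he, ← map_sub]⟩
  | add x y _ _ hx hy =>
    intro ε hε
    obtain ⟨e, he⟩ := hx ε hε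
    obtain ⟨f, hf⟩ := hy ε hε
    refine ⟨e + f, ?_⟩
    rw [map_add, add_sub_add_comm]
    exact map_add_lt_of_isNonarchimedean hw.nonarch he hf
  | mul x y _ _ hx hy =>
    intro ε hε
    have hmul : ∀ {a b : Ω}, w b < ε / (w a + 1) → w (a * b) < ε := fun {a b} hb => by
      rw [lt_div_iff₀ (by have := w.nonneg a; positivity)] at hb
      rw [map_mul]
      linarith [w.nonneg b]
    have hpos : ∀ a, 0 < ε / (w a + 1) := fun a => by have := w.nonneg a; positivity
    obtain ⟨f, hf⟩ := hy _ (hpos x)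
    obtain ⟨e, he⟩ := hx _ (hpos (σ f))
    refine ⟨e * f, ?_⟩
    rw [map_mul, show x * y - σ e * σ f = x * (y - σ f) + σ f * (x - σ e) by ring]
    exact map_add_lt_of_isNonarchimedean hw.nonarch (hmul hf) (hmul he)

theorem IsLaurentModel.exists_map_eq (hw : IsLaurentModel F w T) (σ : E →ₐ[F] Ω)
    (hT : algebraMap Λ Ω T ∈ σ.fieldRange) {y : Ω}
    (hy : y ∈ IntermediateField.adjoin Λ (Set.range σ)) : ∃ e : E, w (σ e) = w y := by
  rcases eq_or_ne y 0 with rfl | hy0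
  · exact ⟨0, by rw [map_zero]⟩
  obtain ⟨e, he⟩ := hw.exists_map_sub_lt σ hT hy (w y) (w.pos hy0)
  refine ⟨e, ?_⟩
  have hlt : w (σ e - y) < w y := by rwa [← w.map_neg, neg_sub]
  rw [← sub_add_cancel (σ e) y]
  exact IsNonarchimedean.add_eq_right_of_lt hw.nonarch hlt

end Approximation

section Places

variable {F Λ Ω : Type*} [Field F] [Field Λ] [Field Ω] [Algebra Λ Ω] [Algebra F Ω]
  {w : AbsoluteValue Ω ℝ} {q : ℕ} {L : IntermediateField Λ Ω}
  {E : Type*} [Field E] [Algebra F E]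

/-- `σ` embeds the field `E` in the field `L`, which is maximal among those in whose value group
some value of `E` is not a `q`-th power. It plays the role of a place of `E` over `F`, together
with its completion, passed to a large extension. -/
structure IsPlace (w : AbsoluteValue Ω ℝ) (q : ℕ) (L : IntermediateField Λ Ω)
    (σ : E →ₐ[F] Ω) : Prop where
  map_mem : ∀ e, σ e ∈ L
  exists_isPowValueMaximal : ∃ s, IsPowValueMaximal w q (σ s) L

theorem IsPlace.exists_not_hasPowValue_of_one_lt (hq : q ≠ 0) {σ : E →ₐ[F] Ω}
    (h : IsPlace w q L σ) {x : E} (hx : 1 < w (σ x)) :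
    ∃ s, w (σ s) < 1 ∧ 1 < w (σ (s * x ^ q)) ∧ ¬ HasPowValue w L q (σ s) := by
  obtain ⟨s, hs⟩ := h.exists_isPowValueMaximal
  have hσs : σ s ≠ 0 := hs.ne_zero hq
  have hσx : σ x ≠ 0 := w.pos_iff.1 (one_pos.trans hx)
  have hnot : ∀ e ≠ 0, ¬ HasPowValue w L q (σ (s * e ^ q)) := fun e he => by
    rw [map_mul, map_pow, hasPowValue_mul_pow_iff (h.map_mem e) ((map_ne_zero σ).2 he)]
    exact hs.2.1
  obtain ⟨n, hle, hlt⟩ := exists_mem_Ico_zpow (w.pos hσs) (one_lt_pow₀ hx hq)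
  have hx0 : x ≠ 0 := by rintro rfl; simp at hσx
  have hval : ∀ m : ℤ, w (σ (s * (x ^ (-m)) ^ q)) = w (σ s) / (w (σ x) ^ q) ^ m := fun m => by
    rw [map_mul, map_pow, map_zpow₀, map_mul, map_pow, map_zpow₀, zpow_neg, inv_pow, ← zpow_natCast,
      ← zpow_natCast (w _), ← zpow_mul, ← zpow_mul, mul_comm m, div_eq_mul_inv]
  have hpos : ∀ m : ℤ, 0 < (w (σ x) ^ q) ^ m := fun m => zpow_pos (by positivity) m
  have hnext : s * (x ^ (-(n + 1))) ^ q * x ^ q = s * (x ^ (-n)) ^ q := by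
    rw [mul_assoc, ← mul_pow, ← zpow_add_one₀ hx0, neg_add, neg_add_cancel_right]
  refine ⟨s * (x ^ (-(n + 1))) ^ q, ?_, ?_, hnot _ (zpow_ne_zero _ hx0)⟩
  · rwa [hval, div_lt_one (hpos _)]
  · rw [hnext]
    refine lt_of_le_of_ne ?_ fun heq =>
      hnot _ (zpow_ne_zero _ hx0) (hasPowValue_of_map_eq_one heq.symm)
    rwa [hval, one_le_div (hpos _)]

theorem natDegree_minpoly_algHom_le {P : Type*} [Field P] [Algebra P E] [FiniteDimensional P E]
    [Algebra P Λ] [Algebra P Ω] [IsScalarTower P Λ Ω] (σ : E →ₐ[P] Ω) (e : E) :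
    (minpoly Λ (σ e)).natDegree ≤ Module.finrank P E := by
  have hint : IsIntegral P (σ e) := (IsIntegral.of_finite P e).map σ
  have hle := natDegree_le_of_dvd (minpoly.dvd_map_of_isScalarTower P Λ (σ e))
    ((minpoly.monic hint).map _).ne_zero
  rw [natDegree_map, minpoly.algHom_eq σ σ.injective] at hle
  exact hle.trans (minpoly.natDegree_le e)

variable [Algebra F Λ] [IsScalarTower F Λ Ω] [Algebra.IsAlgebraic Λ Ω] [IsAlgClosed Ω] {T : Λ}

theorem IsLaurentModel.exists_not_hasPowValue_map (hw : IsLaurentModel F w T) (hq : 1 < q)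
    (σ : E →ₐ[F] Ω) (hT : algebraMap Λ Ω T ∈ σ.fieldRange) {N : ℕ}
    (hN : ∀ e, (minpoly Λ (σ e)).natDegree ≤ N) :
    ∃ s, ¬ HasPowValue w (IntermediateField.adjoin Λ (Set.range σ)) q (σ s) := by
  by_contra! hpow
  have hiter : ∀ j : ℕ, ∃ e, w (σ e) ^ q ^ j = w (algebraMap Λ Ω T) := by
    intro j
    induction j with
    | zero =>
      obtain ⟨e, he⟩ := hT
      exact ⟨e, by rw [pow_zero, pow_one, ← he]; rfl⟩
    | succ j ih =>
      obtain ⟨e, he⟩ := ih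
      obtain ⟨h, hh, hhe⟩ := hpow e
      obtain ⟨e', he'⟩ := hw.exists_map_eq σ hT hh
      exact ⟨e', by rw [he', pow_succ', pow_mul, hhe, he]⟩
  obtain ⟨e, he⟩ := hiter N
  have hσe0 : σ e ≠ 0 := by
    rintro h0
    rw [h0, map_zero, zero_pow (by positivity)] at he
    exact hw.map_uniformizer_ne_zero he.symm
  obtain ⟨k, hk⟩ := hw.exists_map_pow_eq_zpow hσe0
  have hzpow : w (algebraMap Λ Ω T) ^ ((minpoly Λ (σ e)).natDegree : ℤ) =
      w (algebraMap Λ Ω T) ^ (k * (q ^ N : ℕ)) := by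
    rw [zpow_mul, ← hk, zpow_natCast, zpow_natCast, ← he, ← pow_mul, ← pow_mul, mul_comm]
  have hdvd : q ^ N ∣ (minpoly Λ (σ e)).natDegree := Int.natCast_dvd_natCast.1 <|
    zpow_right_injective₀ ((w.nonneg _).lt_of_ne' hw.map_uniformizer_ne_zero)
      hw.uniformizer_lt_one.ne hzpow ▸ dvd_mul_left _ _
  have hle := Nat.le_of_dvd (minpoly.natDegree_pos (Algebra.IsIntegral.isIntegral _)) hdvd
  exact (hle.trans (hN e)).not_gt (Nat.lt_pow_self hq)

theorem IsLaurentModel.exists_isPlace_of_algHom (hw : IsLaurentModel F w T) (hq : 1 < q)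
    {P : Type*} [Field P] [Algebra F P] [Algebra P E] [IsScalarTower F P E] [FiniteDimensional P E]
    (φ : P →ₐ[F] Λ) {x : P} (hφ : φ x = T⁻¹) :
    ∃ (L : IntermediateField Λ Ω) (σ : E →ₐ[F] Ω),
      IsPlace w q L σ ∧ 1 < w (σ (algebraMap P E x)) := by
  let _ : Algebra P Λ := φ.toRingHom.toAlgebra
  let _ : Algebra P Ω := ((algebraMap Λ Ω).comp φ.toRingHom).toAlgebra
  have : IsScalarTower P Λ Ω := IsScalarTower.of_algebraMap_eq fun _ => rfl
  have : IsScalarTower F P Ω := IsScalarTower.of_algebraMap_eq fun a => by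
    change algebraMap F Ω a = algebraMap Λ Ω (φ (algebraMap F P a))
    rw [φ.commutes, ← IsScalarTower.algebraMap_apply]
  let σP : E →ₐ[P] Ω := IsAlgClosed.lift
  let σ : E →ₐ[F] Ω := σP.restrictScalars F
  have hσx : σ (algebraMap P E x) = (algebraMap Λ Ω T)⁻¹ := by
    rw [← map_inv₀, ← hφ]
    exact σP.commutes x
  have hT : algebraMap Λ Ω T ∈ σ.fieldRange :=
    inv_inv (algebraMap Λ Ω T) ▸ inv_mem ⟨algebraMap P E x, hσx⟩
  obtain ⟨s, hs⟩ := hw.exists_not_hasPowValue_map hq σ hT (natDegree_minpoly_algHom_le σP)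
  have hmem : ∀ e, σ e ∈ IntermediateField.adjoin Λ (Set.range σ) :=
    fun e => IntermediateField.subset_adjoin _ _ ⟨e, rfl⟩
  obtain ⟨L, hL, hmax⟩ := exists_isPowValueMaximal (hmem s) hs
  exact ⟨L, σ, ⟨fun e => hL (hmem e), s, hmax⟩, by
    rw [hσx, ← map_inv₀, map_inv₀]; exact hw.one_lt_map_inv_uniformizer⟩

theorem IsLaurentModel.exists_isPlace (hw : IsLaurentModel F w T) (hq : 1 < q) {x : E}
    (hx : Transcendental F x) [FiniteDimensional (IntermediateField.adjoin F {x}) E] :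
    ∃ (L : IntermediateField Λ Ω) (σ : E →ₐ[F] Ω), IsPlace w q L σ ∧ 1 < w (σ x) := by
  have hgen := RatFunc.algEquivOfTranscendental_symm_aeval x hx X
  rw [aeval_X] at hgen
  exact hw.exists_isPlace_of_algHom hq (P := IntermediateField.adjoin F {x})
    ((IntermediateField.adjoin F {T⁻¹}).val.comp
      ((RatFunc.algEquivOfTranscendental T⁻¹ hw.transcendental_inv_uniformizer).toAlgHom.comp
        (RatFunc.algEquivOfTranscendental x hx).symm.toAlgHom))
    (x := IntermediateField.AdjoinSimple.gen F x) (by simp [hgen])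

end Places

section RationalFunctions

universe u

theorem map_ratFunc_eval {F E E' : Type u} [Field F] [Field E] [Field E'] [Algebra F E]
    [Algebra F E'] (σ : E →ₐ[F] E') (R : RatFunc F) (x : E) :
    σ (R.eval (algebraMap F E) x) = R.eval (algebraMap F E') (σ x) := by
  simp only [RatFunc.eval, map_div₀, ← aeval_def, aeval_algHom_apply]

theorem ratFunc_eval_mem {F E : Type u} [Field F] [Field E] [Algebra F E]
    {L : IntermediateField F E} (R : RatFunc F) {y : E} (hy : y ∈ L) :
    R.eval (algebraMap F E) y ∈ L := by
  rw [show y = L.val ⟨y, hy⟩ from rfl, ← map_ratFunc_eval]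
  exact SetLike.coe_mem _

section Values

variable {F Λ Ω : Type u} [Field F] [Field Λ] [Field Ω] [Algebra F Λ] [Algebra Λ Ω] [Algebra F Ω]
  {w : AbsoluteValue Ω ℝ} {T : Λ}

theorem IsLaurentModel.map_add_const (hw : IsLaurentModel F w T) {y : Ω} (hy : 1 < w y) (a : F) :
    w (y + algebraMap F Ω a) = w y :=
  IsNonarchimedean.add_eq_left_of_lt hw.nonarch ((hw.map_const_le_one a).trans_lt hy)

theorem IsLaurentModel.finite_map_add_const_lt_one (hw : IsLaurentModel F w T) (y : Ω) :
    {a : F | w (y + algebraMap F Ω a) < 1}.Finite := by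
  refine Set.Subsingleton.finite fun a ha a' ha' => ?_
  by_contra hne
  refine (hw.const _ (sub_ne_zero.2 hne)).not_lt ?_
  simpa using map_sub_lt_of_isNonarchimedean hw.nonarch ha ha'

theorem IsLaurentModel.map_aeval_of_one_lt (hw : IsLaurentModel F w T) {p : F[X]} (hp : p ≠ 0)
    {y : Ω} (hy : 1 < w y) : w (aeval y p) = w y ^ p.natDegree := by
  have hlead : w (p.coeff p.natDegree • y ^ p.natDegree) = w y ^ p.natDegree := by
    rw [coeff_natDegree, Algebra.smul_def, map_mul, hw.const _ (leadingCoeff_ne_zero.2 hp),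
      one_mul, map_pow]
  rw [aeval_eq_sum_range, ← hlead]
  refine hw.nonarch.apply_sum_eq_of_lt (fun a => (w.map_neg a).symm) (Finset.self_mem_range_succ _)
    fun i hi hne => ?_
  have hlt : i < p.natDegree := (Nat.lt_succ_iff.1 (Finset.mem_range.1 hi)).lt_of_ne hne
  calc w (p.coeff i • y ^ i) ≤ 1 * w y ^ i := by
        rw [Algebra.smul_def, map_mul, map_pow]; gcongr; exact hw.map_const_le_one _
    _ < w y ^ p.natDegree := by rw [one_mul]; exact pow_lt_pow_right₀ hy hlt
    _ = _ := hlead.symm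

theorem IsLaurentModel.finite_map_aeval_add_const_ne_one [IsAlgClosed Ω]
    (hw : IsLaurentModel F w T) {p : F[X]} (hp : p ≠ 0) {y : Ω} (hy : w y ≤ 1) :
    {a : F | w (aeval (y + algebraMap F Ω a) p) ≠ 1}.Finite := by
  refine ((p.rootSet Ω).toFinite.biUnion fun r _ =>
    hw.finite_map_add_const_lt_one (y - r)).subset fun a ha => ?_
  contrapose! ha
  simp only [Set.mem_iUnion, Set.mem_ofPred_eq, not_exists, not_lt] at ha
  have hroot : ∀ r ∈ p.aroots Ω, w (y + algebraMap F Ω a - r) = 1 := fun r hr => by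
    have halg : IsAlgebraic F r := ⟨p, hp, (mem_aroots.1 hr).2⟩
    refine le_antisymm (map_sub_le_of_isNonarchimedean hw.nonarch
      ((hw.nonarch _ _).trans (max_le hy (hw.map_const_le_one a)))
      (hw.map_le_one_of_isAlgebraic halg)) ?_
    rw [add_sub_right_comm]
    exact ha r (mem_rootSet.2 (mem_aroots.1 hr))
  rw [Set.notMem_ofPred_iff, not_not, (IsAlgClosed.splits _).aeval_eq_prod_aroots, map_mul,
    hw.const _ (leadingCoeff_ne_zero.2 hp), one_mul, map_multiset_prod, Multiset.map_map]
  exact Multiset.prod_eq_one fun _ h => by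
    obtain ⟨r, hr, rfl⟩ := Multiset.mem_map.1 h
    exact hroot r hr

theorem IsLaurentModel.map_ratFunc_eval_of_one_lt (hw : IsLaurentModel F w T) {R : RatFunc F}
    (hR : R ≠ 0) {y : Ω} (hy : 1 < w y) :
    w (R.eval (algebraMap F Ω) y) = w y ^ R.intDegree := by
  rw [RatFunc.eval, ← aeval_def, ← aeval_def, map_div₀,
    hw.map_aeval_of_one_lt (RatFunc.num_ne_zero hR) hy, hw.map_aeval_of_one_lt R.denom_ne_zero hy,
    RatFunc.intDegree, zpow_sub₀ (one_pos.trans hy).ne', zpow_natCast, zpow_natCast]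

theorem IsLaurentModel.finite_map_ratFunc_eval_add_const_ne_one [IsAlgClosed Ω]
    (hw : IsLaurentModel F w T) {R : RatFunc F} (hR : R ≠ 0) {y : Ω} (hy : w y ≤ 1) :
    {a : F | w (R.eval (algebraMap F Ω) (y + algebraMap F Ω a)) ≠ 1}.Finite := by
  refine ((hw.finite_map_aeval_add_const_ne_one (RatFunc.num_ne_zero hR) hy).union
    (hw.finite_map_aeval_add_const_ne_one R.denom_ne_zero hy)).subset fun a ha => ?_
  contrapose! ha
  simp only [Set.mem_union, Set.mem_ofPred_eq, not_or, not_not] at ha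
  rw [Set.notMem_ofPred_iff, not_not, RatFunc.eval, ← aeval_def, ← aeval_def, map_div₀, ha.1, ha.2,
    div_one]

theorem IsLaurentModel.finite_one_lt_map_div (hw : IsLaurentModel F w T) (y : Ω) :
    {a : F | 1 < w (y / (1 + algebraMap F Ω a * y ^ 2))}.Finite := by
  rcases eq_or_ne y 0 with rfl | hy0
  · simp [not_lt.2 zero_le_one]
  refine ((Set.finite_singleton (0 : F)).union
    (hw.finite_map_add_const_lt_one (y ^ 2)⁻¹)).subset fun a ha => ?_
  contrapose! ha
  simp only [Set.mem_union, Set.mem_singleton_iff, Set.mem_ofPred_eq, not_or, not_lt] at ha ⊢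
  have hwy : 0 < w y := w.pos hy0
  rcases lt_or_ge (w y) 1 with hlt | hge
  · have hden : w (1 + algebraMap F Ω a * y ^ 2) = 1 := by
      rw [IsNonarchimedean.add_eq_left_of_lt hw.nonarch, map_one]
      rw [map_mul, map_pow, map_one, hw.const a ha.1, one_mul]
      exact pow_lt_one₀ hwy.le hlt two_ne_zero
    rw [map_div₀, hden, div_one]
    exact hlt.le
  · have hden : 1 + algebraMap F Ω a * y ^ 2 = y ^ 2 * ((y ^ 2)⁻¹ + algebraMap F Ω a) := by
      field_simp
    rw [map_div₀, hden, map_mul, map_pow]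
    refine div_le_one_of_le₀ ?_ (by positivity)
    nlinarith [ha.2, mul_le_mul hge ha.2 zero_le_one hwy.le]

end Values

section Powers

variable {F Λ Ω : Type u} [Field F] [Field Λ] [Field Ω] [Algebra F Λ] [Algebra Λ Ω] [Algebra F Ω]
  {w : AbsoluteValue Ω ℝ} {T : Λ} {q : ℕ} {L : IntermediateField Λ Ω} {R : RatFunc F} {y : Ω}

theorem ratFunc_ne_zero_of_not_dvd_intDegree (hR : ¬ (q : ℤ) ∣ R.intDegree) : R ≠ 0 := by
  rintro rfl
  exact hR (by rw [RatFunc.intDegree_zero]; exact dvd_zero _)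

theorem IsLaurentModel.pow_ne_ratFunc_eval (hw : IsLaurentModel F w T) (hq : q.Prime)
    (hR : ¬ (q : ℤ) ∣ R.intDegree) (hyL : y ∈ L) (hy : 1 < w y) (hpow : ¬ HasPowValue w L q y)
    {z : Ω} (hz : z ∈ L) : z ^ q ≠ R.eval (algebraMap F Ω) y := fun hzq => by
  refine hpow (hasPowValue_of_zpow hyL (w.pos_iff.1 (one_pos.trans hy))
    ((Nat.prime_iff_prime_int.1 hq).coprime_iff_not_dvd.2 hR).symm ⟨z, hz, ?_⟩)
  rw [← map_pow, hzq, hw.map_ratFunc_eval_of_one_lt (ratFunc_ne_zero_of_not_dvd_intDegree hR) hy,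
    map_zpow₀]

theorem IsPowValueMaximal.finite_not_exists_pow_eq_ratFunc_eval [IsScalarTower F Λ Ω]
    [Algebra.IsAlgebraic Λ Ω] [IsAlgClosed Ω] (hw : IsLaurentModel F w T) {s : Ω}
    (hL : IsPowValueMaximal w q s L) (hq : q.Prime) (hqF : (q : F) ≠ 0) (hR : R ≠ 0) (hyL : y ∈ L)
    (hy : 1 < w y → HasPowValue w L q y) :
    {a : F | ¬ ∃ z ∈ L, z ^ q = R.eval (algebraMap F Ω) (y + algebraMap F Ω a)}.Finite := by
  have hmem : ∀ a : F, R.eval (algebraMap F Ω) (y + algebraMap F Ω a) ∈ L := fun a =>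
    ratFunc_eval_mem (L := L.restrictScalars F) R <| L.add_mem hyL <| by
      rw [IsScalarTower.algebraMap_apply F Λ Ω]; exact L.algebraMap_mem _
  rcases lt_or_ge 1 (w y) with hlt | hle
  · convert Set.finite_empty
    refine Set.eq_empty_of_forall_notMem fun a ha => ha (hL.exists_pow_eq hw hq hqF (hmem a) ?_)
    obtain ⟨h, hhL, hh⟩ := hy hlt
    refine ⟨h ^ R.intDegree, zpow_mem hhL _, ?_⟩
    rw [hw.map_ratFunc_eval_of_one_lt hR (by rwa [hw.map_add_const hlt]), hw.map_add_const hlt,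
      ← hh, map_zpow₀, ← zpow_natCast, ← zpow_natCast, zpow_comm]
  · refine (hw.finite_map_ratFunc_eval_add_const_ne_one hR hle).subset fun a ha hone => ha ?_
    exact hL.exists_pow_eq hw hq hqF (hmem a) (hasPowValue_of_map_eq_one hone)

end Powers

end RationalFunctions

section Extension

universe v

theorem finiteDimensional_adjoin_of_transcendental {F : Type*} {P E : Type v} [Field F] [Field P]
    [Field E] [Algebra F P] [Algebra P E] [Algebra F E] [IsScalarTower F P E] {τ : P}
    (hτ : IntermediateField.adjoin F {τ} = ⊤) [FiniteDimensional P E] {x : E}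
    (hx : Transcendental F x) : FiniteDimensional (IntermediateField.adjoin F {x}) E := by
  have halgP : Algebra.IsAlgebraic (Algebra.adjoin F {τ}) P := by
    have : Algebra.IsAlgebraic (IntermediateField.adjoin F {τ}) P :=
      ⟨fun y => isAlgebraic_algebraMap (⟨y, hτ ▸ IntermediateField.mem_top⟩ :
        IntermediateField.adjoin F {τ})⟩
    open scoped IntermediateField.algebraAdjoinAdjoin in
    exact (IsFractionRing.comap_isAlgebraic_iff (K := IntermediateField.adjoin F {τ})).2 this
  have htrdeg : Algebra.trdeg F E ≤ 1 := by
    rw [← trdeg_add_eq F P, trdeg_eq_zero (R := P), add_zero]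
    simpa using Algebra.IsAlgebraic.trdeg_le_cardinalMk F ({τ} : Set P)
  have hind : AlgebraicIndependent F fun _ : PUnit.{v + 1} => x :=
    algebraicIndependent_unique_type_iff.2 hx
  have halgE := (hind.isTranscendenceBasis_of_trdeg_le_of_finite
    (by simpa using htrdeg)).isAlgebraic_field
  rw [Set.range_const] at halgE
  have : Algebra.EssFiniteType F P :=
    IntermediateField.fg_top_iff.1
      (hτ ▸ IntermediateField.fg_adjoin_of_finite (Set.finite_singleton τ))
  have : Algebra.EssFiniteType F E := Algebra.EssFiniteType.comp F P E
  have := Algebra.EssFiniteType.of_comp F (IntermediateField.adjoin F {x}) E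
  exact Algebra.finite_of_essFiniteType_of_isAlgebraic

variable {F Λ Ω : Type*} [Field F] [Field Λ] [Field Ω] [Algebra Λ Ω] [Algebra F Ω]
  {w : AbsoluteValue Ω ℝ} {q : ℕ} {L : IntermediateField Λ Ω}
  {E : Type*} [Field E] [Algebra F E] {σ : E →ₐ[F] Ω}

theorem IsPlace.exists_extension (h : IsPlace w q L σ) {M : Type*} [Field M] [Algebra F M]
    [Algebra E M] [IsScalarTower F E M] {β : M} (hβ : IsIntegral E β) {ρ : Ω} (hρL : ρ ∈ L)
    (hρ : (minpoly E β).eval₂ σ.toRingHom ρ = 0) :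
    ∃ σ' : IntermediateField.adjoin E {β} →ₐ[F] Ω,
      IsPlace w q L σ' ∧ ∀ e, σ' (algebraMap E _ e) = σ e := by
  let _ : Algebra E Ω := σ.toRingHom.toAlgebra
  have : IsScalarTower F E Ω := IsScalarTower.of_algebraMap_eq fun a => (σ.commutes a).symm
  let χ : IntermediateField.adjoin E {β} →ₐ[E] Ω :=
    (IntermediateField.algHomAdjoinIntegralEquiv E hβ).symm
      ⟨ρ, (mem_aroots.2 ⟨minpoly.ne_zero hβ, hρ⟩)⟩
  have hχ : χ (IntermediateField.AdjoinSimple.gen E β) = ρ :=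
    IntermediateField.algHomAdjoinIntegralEquiv_symm_apply_gen E hβ _
  obtain ⟨s, hs⟩ := h.exists_isPowValueMaximal
  refine ⟨χ.restrictScalars F, ⟨fun e => ?_, algebraMap E _ s, ?_⟩, χ.commutes⟩
  · obtain ⟨g, rfl⟩ := (IntermediateField.adjoin.powerBasis hβ).exists_eq_aeval' e
    change χ _ ∈ L
    rw [IntermediateField.adjoin.powerBasis_gen, ← aeval_algHom_apply, hχ, aeval_eq_sum_range]
    exact sum_mem fun i _ => Algebra.smul_def (g.coeff i) (ρ ^ i) ▸
      mul_mem (h.map_mem _) (pow_mem hρL i)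
  · change IsPowValueMaximal w q (χ (algebraMap E _ s)) L
    rwa [χ.commutes]

theorem IsPlace.exists_root [Algebra F Λ] {T : Λ} (hw : IsLaurentModel F w T)
    [Algebra.IsAlgebraic Λ Ω] [IsAlgClosed Ω] (h : IsPlace w q L σ) (hq : q.Prime) {g : E[X]}
    (hg : ¬ q ∣ g.natDegree) : ∃ ρ ∈ L, g.eval₂ σ.toRingHom ρ = 0 := by
  obtain ⟨s, hs⟩ := h.exists_isPowValueMaximal
  let σL : E →+* L := σ.toRingHom.codRestrict L h.map_mem
  obtain ⟨ρ, hρ⟩ := hs.exists_root hw hq (p := g.map σL) (by rwa [natDegree_map])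
  refine ⟨ρ, ρ.2, ?_⟩
  rw [IsRoot.def, eval_map] at hρ
  have hρΩ := congrArg (algebraMap L Ω) hρ
  rwa [hom_eval₂, map_zero] at hρΩ

end Extension

section Conditions

/-- An embedding over `F` of `E` in `Ω`, together with a field `completion` between `Λ` and `Ω` and
an index `type` selecting one of the given primes. This is the underlying data of a place of `E`. -/
structure PlaceData (F Λ Ω E : Type*) [Field F] [Field Λ] [Field Ω] [Field E] [Algebra Λ Ω]
    [Algebra F Ω] [Algebra F E] where
  type : ℕ
  completion : IntermediateField Λ Ω
  hom : E →ₐ[F] Ω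

variable {F Λ Ω : Type*} [Field F] [Field Λ] [Field Ω] [Algebra Λ Ω] [Algebra F Ω]

/-- The restriction of a place of `E'` along `ι : E → E'`. -/
def PlaceData.restrict {E E' : Type*} [Field E] [Field E'] [Algebra F E] [Algebra F E']
    (v : PlaceData F Λ Ω E') (ι : E →ₐ[F] E') : PlaceData F Λ Ω E :=
  ⟨v.type, v.completion, v.hom.comp ι⟩

variable {P M : Type*} [Field P] [Field M] [Algebra F P] [Algebra P M] [Algebra F M]
  [IsScalarTower F P M]

/-- A finite approximation to the field to be constructed: a finite extension of `P = F(τ)` inside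
`M` together with finitely many places that have to survive in all further extensions. At the places
of type `i ≠ 0` the residue of `τ` is required to lie in `A i`. -/
structure Condition (M Λ : Type*) [Field M] [Field Λ] [Algebra P M] [Algebra F M]
    [IsScalarTower F P M] [Algebra Λ Ω] (w : AbsoluteValue Ω ℝ) (q : ℕ → ℕ) (A : ℕ → Set F)
    (τ : P) where
  field : IntermediateField P M
  finiteDimensional : FiniteDimensional P field
  places : Set (PlaceData F Λ Ω field)
  finite_places : places.Finite
  isPlace : ∀ v ∈ places, IsPlace w (q v.type) v.completion v.hom
  near : ∀ v ∈ places, v.type ≠ 0 →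
    ∃ a ∈ A v.type, w (v.hom (algebraMap P field τ) - algebraMap F Ω a) < 1

namespace Condition

variable {w : AbsoluteValue Ω ℝ} {q : ℕ → ℕ} {A : ℕ → Set F} {τ : P}
  {p p' : Condition M Λ w q A τ} {i : ℕ} {x : M}

/-- The inclusion of an intermediate field of `M / P` in a larger one, over the smaller ground
field `F`. -/
def inclusion (F : Type*) [Field F] {P M : Type*} [Field P] [Field M] [Algebra F P] [Algebra P M]
    [Algebra F M] [IsScalarTower F P M]
    {K K' : IntermediateField P M} (h : K ≤ K') : K →ₐ[F] K' :=
  (IntermediateField.inclusion h).restrictScalars F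

instance : Preorder (Condition M Λ w q A τ) where
  le p p' := ∃ h : p.field ≤ p'.field,
    p.places ⊆ (PlaceData.restrict · (inclusion F h)) '' p'.places
  le_refl p := ⟨le_rfl, fun v hv => ⟨v, hv, rfl⟩⟩
  le_trans p₁ p₂ p₃ := by
    rintro ⟨h₁, H₁⟩ ⟨h₂, H₂⟩
    refine ⟨h₁.trans h₂, fun v hv => ?_⟩
    obtain ⟨v₂, hv₂, rfl⟩ := H₁ hv
    obtain ⟨v₃, hv₃, rfl⟩ := H₂ hv₂
    exact ⟨v₃, hv₃, rfl⟩

/-- The element `x` has a pole at some place of type `i`. -/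
def Pole (p : Condition M Λ w q A τ) (i : ℕ) (x : M) : Prop :=
  ∃ hx : x ∈ p.field, ∃ v ∈ p.places, v.type = i ∧ 1 < w (v.hom ⟨x, hx⟩)

/-- The element `x` has a pole of order prime to `q i` at some place of type `i`. -/
def Bad (p : Condition M Λ w q A τ) (i : ℕ) (x : M) : Prop :=
  ∃ hx : x ∈ p.field, ∃ v ∈ p.places, v.type = i ∧ 1 < w (v.hom ⟨x, hx⟩) ∧
    ¬ HasPowValue w v.completion (q i) (v.hom ⟨x, hx⟩)

theorem Pole.mono (h : p.Pole i x) (hp : p ≤ p') : p'.Pole i x := by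
  obtain ⟨hx, v, hv, hvi, hpole⟩ := h
  obtain ⟨v', hv', rfl⟩ := hp.2 hv
  exact ⟨hp.1 hx, v', hv', hvi, hpole⟩

theorem Bad.mono (h : p.Bad i x) (hp : p ≤ p') : p'.Bad i x := by
  obtain ⟨hx, v, hv, hvi, hbad⟩ := h
  obtain ⟨v', hv', rfl⟩ := hp.2 hv
  exact ⟨hp.1 hx, v', hv', hvi, hbad⟩

/-- The condition with field `P` and no places. -/
def initial : Condition M Λ w q A τ where
  field := ⊥
  finiteDimensional := inferInstance
  places := ∅
  finite_places := Set.finite_empty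
  isPlace _ h := h.elim
  near _ h := h.elim

theorem finite_setOf_exists_place (p : Condition M Λ w q A τ)
    {S : PlaceData F Λ Ω p.field → F → Prop} (h : ∀ v ∈ p.places, {a | S v a}.Finite) :
    {a | ∃ v ∈ p.places, S v a}.Finite := by
  simpa only [← exists_prop, Set.ofPred_exists] using p.finite_places.biUnion h

theorem exists_forall_isPlace_extension (w : AbsoluteValue Ω ℝ) (K : IntermediateField P M)
    [FiniteDimensional P K] {β : M} (hβ : IsIntegral K β) :
    ∃ (K' : IntermediateField P M) (h : K ≤ K'), FiniteDimensional P K' ∧ β ∈ K' ∧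
      ∀ {q : ℕ} {L : IntermediateField Λ Ω} {σ : K →ₐ[F] Ω}, IsPlace w q L σ →
        (∃ ρ ∈ L, (minpoly K β).eval₂ σ.toRingHom ρ = 0) →
        ∃ σ' : K' →ₐ[F] Ω, IsPlace w q L σ' ∧ σ'.comp (inclusion F h) = σ := by
  have := IntermediateField.adjoin.finiteDimensional hβ
  have : IsScalarTower F K M := IsScalarTower.of_algebraMap_eq fun _ => rfl
  refine ⟨(IntermediateField.adjoin K {β}).restrictScalars P,
    fun y hy => (IntermediateField.adjoin K {β}).algebraMap_mem ⟨y, hy⟩,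
    FiniteDimensional.trans P K (IntermediateField.adjoin K {β}),
    (IntermediateField.mem_restrictScalars P).2 (IntermediateField.mem_adjoin_simple_self K β),
    fun hσ ⟨ρ, hρL, hρ⟩ => ?_⟩
  obtain ⟨σ', hσ', hcomp⟩ := hσ.exists_extension hβ hρL hρ
  exact ⟨σ', hσ', AlgHom.ext hcomp⟩

theorem exists_extension (p : Condition M Λ w q A τ) {β : M} (hβ : IsIntegral p.field β)
    (hroot : ∀ v ∈ p.places, ∃ ρ ∈ v.completion,
      (minpoly p.field β).eval₂ v.hom.toRingHom ρ = 0) :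
    ∃ p' : Condition M Λ w q A τ, ∃ h : p.field ≤ p'.field, β ∈ p'.field ∧
      (PlaceData.restrict · (inclusion F h)) '' p'.places = p.places := by
  have := p.finiteDimensional
  obtain ⟨K', hK', hfin, hβK', hext⟩ :=
    exists_forall_isPlace_extension (F := F) (Λ := Λ) w p.field hβ
  choose σ hσ hσv using fun v : p.places => hext (p.isPlace v v.2) (hroot v v.2)
  have := p.finite_places.to_subtype
  refine ⟨⟨K', hfin, Set.range fun v => ⟨v.1.type, v.1.completion, σ v⟩, Set.finite_range _,
    Set.forall_mem_range.2 hσ, Set.forall_mem_range.2 fun v hv => ?_⟩, hK', hβK', ?_⟩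
  · obtain ⟨a, ha, hlt⟩ := p.near v v.2 hv
    rw [← hσv] at hlt
    exact ⟨a, ha, hlt⟩
  · rw [← Set.range_comp]
    refine Eq.trans (congrArg Set.range (funext fun v => ?_)) Subtype.range_coe
    exact congrArg (PlaceData.mk _ _) (hσv v)

theorem exists_pole_of_isPlace (p : Condition M Λ w q A τ) {v : PlaceData F Λ Ω p.field}
    (hv : IsPlace w (q v.type) v.completion v.hom)
    (hnear : v.type ≠ 0 →
      ∃ a ∈ A v.type, w (v.hom (algebraMap P p.field τ) - algebraMap F Ω a) < 1)
    {x : p.field} (hx : 1 < w (v.hom x)) : ∃ p' ≥ p, p'.Pole v.type x :=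
  ⟨{ p with
      places := insert v p.places
      finite_places := p.finite_places.insert _
      isPlace := Set.forall_mem_insert.2 ⟨hv, p.isPlace⟩
      near := Set.forall_mem_insert.2 ⟨hnear, p.near⟩ },
    ⟨le_rfl, fun v hv => ⟨v, .inr hv, rfl⟩⟩, x.2, v, .inl rfl, rfl, hx⟩

end Condition

end Conditions

section Density

universe u

/-- The set of all `s` in `E` for which there is an `α ≠ 0` such that `R (s + α)` and `R (s + α⁻¹)`
are both `q`-th powers. If `s` has a pole of order prime to `q` at a place of `E` with residue field
`F`, then so has `s + α` or `s + α⁻¹`, and `s` is not in the set. -/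
def shiftRootSet {F : Type u} [Field F] (R : RatFunc F) (q : ℕ) (E : Type u) [Field E]
    [Algebra F E] : Set E :=
  {s | ∃ α, α ≠ 0 ∧ (∃ z, z ^ q = R.eval (algebraMap F E) (s + α)) ∧
    ∃ z, z ^ q = R.eval (algebraMap F E) (s + α⁻¹)}

theorem map_mem_shiftRootSet {F E E' : Type u} [Field F] [Field E] [Field E'] [Algebra F E]
    [Algebra F E'] (σ : E →ₐ[F] E') {R : RatFunc F} {q : ℕ} {s : E} (hs : s ∈ shiftRootSet R q E) :
    σ s ∈ shiftRootSet R q E' := by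
  obtain ⟨α, hα, ⟨z, hz⟩, z', hz'⟩ := hs
  refine ⟨σ α, (map_ne_zero σ).2 hα, ⟨σ z, ?_⟩, σ z', ?_⟩
  · rw [← map_pow, hz, map_ratFunc_eval, map_add]
  · rw [← map_pow, hz', map_ratFunc_eval, map_add, map_inv₀]

theorem IsLaurentModel.notMem_shiftRootSet {F Λ Ω E : Type u} [Field F] [Field Λ] [Field Ω]
    [Algebra F Λ] [Algebra Λ Ω] [Algebra F Ω] {w : AbsoluteValue Ω ℝ} {T : Λ}
    (hw : IsLaurentModel F w T) [Field E] [Algebra F E] {R : RatFunc F} {q : ℕ} (hq : q.Prime)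
    (hR : ¬ (q : ℤ) ∣ R.intDegree) {L : IntermediateField Λ Ω} {σ : E →ₐ[F] Ω}
    (hσ : ∀ e, σ e ∈ L) {s : E} (hs : 1 < w (σ s)) (hpow : ¬ HasPowValue w L q (σ s)) :
    s ∉ shiftRootSet R q E := by
  have key : ∀ {α z : E}, w (σ α) ≤ 1 → z ^ q ≠ R.eval (algebraMap F E) (s + α) := by
    intro α z hα hz
    have hv : w (σ (s + α)) = w (σ s) := by
      rw [map_add]
      exact IsNonarchimedean.add_eq_left_of_lt hw.nonarch (hα.trans_lt hs)
    refine hw.pow_ne_ratFunc_eval hq hR (hσ (s + α)) (hv ▸ hs) ?_ (hσ z) ?_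
    · rwa [hasPowValue_congr hv]
    · rw [← map_pow, hz, map_ratFunc_eval]
  rintro ⟨α, -, ⟨z, hz⟩, z', hz'⟩
  rcases le_total (w (σ α)) 1 with h | h
  · exact key h hz
  · refine key ?_ hz'
    rw [map_inv₀, map_inv₀]
    exact inv_le_one_of_one_le₀ h

/-- The standing hypotheses of the construction: the `q u` are distinct primes not divisible by the
characteristic, the rational functions `R u` have degree prime to `q u`, and their values in `M` are
`q u`-th powers. -/
structure HasRadicalValues {F : Type u} [Field F] (M : Type u) [Field M] [Algebra F M] (q : ℕ → ℕ)
    (R : ℕ → RatFunc F) : Prop where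
  prime : ∀ i, (q i).Prime
  injective : Function.Injective q
  cast_ne_zero : ∀ i, (q i : F) ≠ 0
  not_dvd_intDegree : ∀ i, ¬ (q i : ℤ) ∣ (R i).intDegree
  exists_pow_eq : ∀ i (x : M), ∃ y, y ^ q i = (R i).eval (algebraMap F M) x

namespace Condition

variable {F Λ Ω P M : Type u} [Field F] [Field Λ] [Field Ω] [Algebra Λ Ω]
  [Algebra F Ω] [Field P] [Field M] [Algebra F P] [Algebra P M] [Algebra F M] [IsScalarTower F P M]
  {w : AbsoluteValue Ω ℝ} {T : Λ} {q : ℕ → ℕ} {R : ℕ → RatFunc F} {A : ℕ → Set F} {τ : P}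
  {p p' : Condition M Λ w q A τ} {i : ℕ} {s x : M}

/-- The element `s` has been put in `shiftRootSet (R i) (q i)` of the field. -/
def Committed (p : Condition M Λ w q A τ) (R : ℕ → RatFunc F) (i : ℕ) (s : M) : Prop :=
  ∃ hs : s ∈ p.field, ⟨s, hs⟩ ∈ shiftRootSet (R i) (q i) p.field

theorem Committed.mono (h : p.Committed R i s) (hp : p ≤ p') : p'.Committed R i s :=
  have ⟨hs, hmem⟩ := h
  ⟨hp.1 hs, map_mem_shiftRootSet (inclusion F hp.1) hmem⟩

variable [Algebra F Λ]

theorem Bad.not_committed (hw : IsLaurentModel F w T) (hq : (q i).Prime)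
    (hR : ¬ (q i : ℤ) ∣ (R i).intDegree) (h : p.Bad i s) : ¬ p.Committed R i s := by
  obtain ⟨hs, v, hv, rfl, hpole, hpow⟩ := h
  exact fun ⟨_, hmem⟩ => hw.notMem_shiftRootSet hq hR (p.isPlace v hv).map_mem hpole hpow hmem

variable [Algebra.IsAlgebraic Λ Ω] [IsAlgClosed Ω]

theorem exists_mem_field_of_not_dvd (hw : IsLaurentModel F w T) (hq : ∀ i, (q i).Prime)
    (p : Condition M Λ w q A τ) {β : M} (hβ : IsIntegral p.field β)
    (hdeg : ∀ i, ¬ q i ∣ (minpoly p.field β).natDegree) : ∃ p' ≥ p, β ∈ p'.field := by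
  obtain ⟨p', h, hβ', hplaces⟩ := p.exists_extension hβ fun v hv =>
    (p.isPlace v hv).exists_root hw (hq _) (hdeg _)
  exact ⟨p', ⟨h, hplaces.ge⟩, hβ'⟩

theorem exists_pow_eq_extension (hw : IsLaurentModel F w T) (hq : ∀ i, (q i).Prime)
    (hqinj : Function.Injective q) (p : Condition M Λ w q A τ) {y : p.field} {β : M}
    (hβ : β ^ q i = y) (hy : ∀ v ∈ p.places, v.type = i → ∃ z ∈ v.completion, z ^ q i = v.hom y) :
    ∃ p' : Condition M Λ w q A τ, ∃ h : p.field ≤ p'.field,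
      (∃ z : p'.field, z ^ q i = inclusion F h y) ∧
        (PlaceData.restrict · (inclusion F h)) '' p'.places = p.places := by
  by_cases hroot : ∃ z : p.field, z ^ q i = y
  · exact ⟨p, le_rfl, hroot, Set.image_id _⟩
  have hirr := X_pow_sub_C_irreducible_of_prime (hq i) (not_exists.1 hroot)
  have hmonic : (X ^ q i - C y).Monic := monic_X_pow_sub_C y (hq i).ne_zero
  have heval : aeval β (X ^ q i - C y) = 0 := by
    rw [map_sub, map_pow, aeval_X, aeval_C, hβ, sub_eq_zero]
    rfl
  have hmin := minpoly.eq_of_irreducible_of_monic hirr heval hmonic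
  obtain ⟨p', h, hβ', hplaces⟩ := p.exists_extension ⟨_, hmonic, heval⟩ fun v hv => by
    rw [← hmin]
    by_cases hvi : v.type = i
    · obtain ⟨z, hz, hzy⟩ := hy v hv hvi
      refine ⟨z, hz, ?_⟩
      rw [eval₂_sub, eval₂_pow, eval₂_X, eval₂_C, hzy]
      exact sub_self _
    · refine (p.isPlace v hv).exists_root hw (hq _) ?_
      rw [natDegree_X_pow_sub_C, Nat.prime_dvd_prime_iff_eq (hq _) (hq _)]
      exact fun hqq => hvi (hqinj hqq)
  exact ⟨p', h, ⟨⟨β, hβ'⟩, Subtype.ext hβ⟩, hplaces⟩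

theorem exists_pow_eq_ratFunc_eval_extension (hw : IsLaurentModel F w T)
    (hqR : HasRadicalValues M q R) (p : Condition M Λ w q A τ) {y : p.field}
    (hy : ∀ v ∈ p.places, v.type = i →
      ∃ z ∈ v.completion, z ^ q i = (R i).eval (algebraMap F Ω) (v.hom y)) :
    ∃ p' : Condition M Λ w q A τ, ∃ h : p.field ≤ p'.field,
      (∃ z, z ^ q i = (R i).eval (algebraMap F p'.field) (inclusion F h y)) ∧
        (PlaceData.restrict · (inclusion F h)) '' p'.places = p.places := by
  have : IsScalarTower F p.field M := IsScalarTower.of_algebraMap_eq fun _ => rfl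
  obtain ⟨β, hβ⟩ := hqR.exists_pow_eq i y
  simp only [← map_ratFunc_eval] at hy ⊢
  exact p.exists_pow_eq_extension hw hqR.prime hqR.injective
    (hβ.trans (map_ratFunc_eval (IsScalarTower.toAlgHom F p.field M) (R i) y).symm) hy

theorem finite_not_exists_pow_eq_ratFunc_eval [IsScalarTower F Λ Ω] (hw : IsLaurentModel F w T)
    (hqR : HasRadicalValues M q R) {s : p.field} (hs : ¬ p.Bad i s) :
    {a : F | ∃ v ∈ p.places, v.type = i ∧
      ¬ ∃ z ∈ v.completion, z ^ q i = (R i).eval (algebraMap F Ω)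
        (v.hom (s + algebraMap F p.field a))}.Finite := by
  refine p.finite_setOf_exists_place fun v hv => ?_
  by_cases hvi : v.type = i
  · subst hvi
    obtain ⟨_, hmax⟩ := (p.isPlace v hv).exists_isPowValueMaximal
    simp only [true_and, map_add, AlgHom.commutes]
    refine hmax.finite_not_exists_pow_eq_ratFunc_eval hw (hqR.prime _) (hqR.cast_ne_zero _)
      (ratFunc_ne_zero_of_not_dvd_intDegree (hqR.not_dvd_intDegree _))
      ((p.isPlace v hv).map_mem s) fun hpole => ?_
    by_contra hpow
    exact hs ⟨s.2, v, hv, rfl, hpole, hpow⟩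
  · simp only [hvi, false_and, Set.ofPred_false, Set.finite_empty]

theorem exists_committed [IsScalarTower F Λ Ω] [Infinite F] (hw : IsLaurentModel F w T)
    (hqR : HasRadicalValues M q R) (hs : s ∈ p.field) (hbad : ¬ p.Bad i s) :
    ∃ p' ≥ p, p'.Committed R i s := by
  have hfin := finite_not_exists_pow_eq_ratFunc_eval (s := ⟨s, hs⟩) hw hqR hbad
  obtain ⟨a, ha⟩ := ((hfin.union (hfin.preimage inv_injective.injOn)).union
    (Set.finite_singleton 0)).exists_notMem
  simp only [Set.mem_union, Set.mem_preimage, Set.mem_ofPred_eq, Set.mem_singleton_iff] at ha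
  push Not at ha
  obtain ⟨⟨ha, hainv⟩, ha0⟩ := ha
  obtain ⟨p₁, h₁, ⟨z, hz⟩, hp₁⟩ := p.exists_pow_eq_ratFunc_eval_extension hw hqR ha
  obtain ⟨p₂, h₂, ⟨z', hz'⟩, hp₂⟩ := p₁.exists_pow_eq_ratFunc_eval_extension hw hqR
    (y := inclusion F h₁ (⟨s, hs⟩ + algebraMap F p.field a⁻¹))
    fun v hv => hainv _ (hp₁.subset (Set.mem_image_of_mem _ hv))
  refine ⟨p₂, (show p ≤ p₁ from ⟨h₁, hp₁.ge⟩).trans ⟨h₂, hp₂.ge⟩, h₂ (h₁ hs),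
    algebraMap F _ a, (_root_.map_ne_zero _).2 ha0, ⟨inclusion F h₂ z, ?_⟩, z', ?_⟩
  · rw [← map_pow, hz, map_ratFunc_eval]
    rfl
  · rw [hz', ← map_inv₀]
    rfl

end Condition

end Density

section Poles

universe u

namespace Condition

variable {F Λ Ω P M : Type u} [Field F] [Field Λ] [Field Ω] [Algebra Λ Ω]
  [Algebra F Ω] [Field P] [Field M] [Algebra F P] [Algebra P M] [Algebra F M] [IsScalarTower F P M]
  {w : AbsoluteValue Ω ℝ} {T : Λ} {q : ℕ → ℕ} {R : ℕ → RatFunc F} {A : ℕ → Set F} {τ : P}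
  {p : Condition M Λ w q A τ} {i : ℕ} [Algebra F Λ]

theorem exists_map_eq_of_lt_one [Infinite F] (hw : IsLaurentModel F w T)
    (p : Condition M Λ w q A τ) {σ : p.field →ₐ[F] Ω} {s : p.field} (hs : w (σ s) < 1) :
    ∃ s', w (σ s') = w (σ s) ∧ ∀ v ∈ p.places, w (v.hom s') ≤ 1 := by
  obtain ⟨a, ha⟩ := (p.finite_setOf_exists_place fun v _ =>
    hw.finite_one_lt_map_div (v.hom s)).exists_notMem
  rw [Set.notMem_ofPred_iff] at ha
  push Not at ha
  have hmap : ∀ σ : p.field →ₐ[F] Ω, σ (s / (1 + algebraMap F _ a * s ^ 2)) =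
      σ s / (1 + algebraMap F Ω a * σ s ^ 2) := fun σ => by
    rw [map_div₀, map_add, map_one, map_mul, AlgHom.commutes, map_pow]
  have hlt : w (algebraMap F Ω a * σ s ^ 2) < w 1 := by
    rw [map_mul, map_one, map_pow]
    exact mul_lt_one_of_nonneg_of_lt_one_right (hw.map_const_le_one a) (by positivity)
      (pow_lt_one₀ (apply_nonneg w _) hs two_ne_zero)
  refine ⟨s / (1 + algebraMap F _ a * s ^ 2), ?_, fun v hv => hmap v.hom ▸ ha v hv⟩
  rw [hmap, map_div₀, IsNonarchimedean.add_eq_left_of_lt hw.nonarch hlt, map_one, div_one]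

theorem exists_integral_not_hasPowValue [Infinite F] (hw : IsLaurentModel F w T)
    (p : Condition M Λ w q A τ) {n : ℕ} (hn : n ≠ 0) {L : IntermediateField Λ Ω}
    {σ : p.field →ₐ[F] Ω} (hσ : IsPlace w n L σ) {x : p.field} (hx : 1 < w (σ x)) :
    ∃ s, (∀ v ∈ p.places, w (v.hom s) ≤ 1) ∧ 1 < w (σ (s * x ^ n)) ∧
      ¬ HasPowValue w L n (σ (s * x ^ n)) := by
  obtain ⟨s₀, hlt, hgt, hpow⟩ := hσ.exists_not_hasPowValue_of_one_lt hn hx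
  obtain ⟨s, hs, hint⟩ := p.exists_map_eq_of_lt_one hw hlt
  refine ⟨s, hint, ?_, ?_⟩
  · rwa [map_mul, map_mul, hs, ← map_mul, ← map_mul]
  · rwa [map_mul, map_pow, hasPowValue_mul_pow_iff (hσ.map_mem x) (w.pos_iff.1 (one_pos.trans hx)),
      hasPowValue_congr hs]

variable [Algebra.IsAlgebraic Λ Ω] [IsAlgClosed Ω] [IsScalarTower F Λ Ω]

theorem Pole.exists_committed_bad [Infinite F] (hw : IsLaurentModel F w T)
    (hqR : HasRadicalValues M q R) {x : M} (h : p.Pole i x) :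
    ∃ p' ≥ p, ∃ s, p'.Committed R i s ∧ p'.Bad i (s * x ^ q i) := by
  obtain ⟨hx, v, hv, rfl, hpole⟩ := h
  obtain ⟨s, hint, hgt, hpow⟩ := p.exists_integral_not_hasPowValue hw (hqR.prime _).ne_zero
    (p.isPlace v hv) hpole
  obtain ⟨p', hp, hs⟩ := exists_committed (i := v.type) hw hqR s.2
    fun ⟨_, v', hv', _, hgt', _⟩ => (hint v' hv').not_gt hgt'
  exact ⟨p', hp, s, hs, Bad.mono ⟨(s * ⟨x, hx⟩ ^ q v.type).2, v, hv, rfl, hgt, hpow⟩ hp⟩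

theorem exists_isPlace (hw : IsLaurentModel F w T) {n : ℕ} (hn : 1 < n)
    (hτ : IntermediateField.adjoin F {τ} = ⊤) (p : Condition M Λ w q A τ) {x : p.field}
    (hx : Transcendental F x) :
    ∃ (L : IntermediateField Λ Ω) (σ : p.field →ₐ[F] Ω), IsPlace w n L σ ∧ 1 < w (σ x) := by
  have := p.finiteDimensional
  have : IsScalarTower F P p.field :=
    IsScalarTower.of_algebraMap_eq fun a => Subtype.ext (IsScalarTower.algebraMap_apply F P M a)
  have := finiteDimensional_adjoin_of_transcendental hτ hx
  exact hw.exists_isPlace hn hx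

theorem exists_pole (hw : IsLaurentModel F w T) (hq : 1 < q 0)
    (hτ : IntermediateField.adjoin F {τ} = ⊤) (p : Condition M Λ w q A τ) {x : M}
    (hx : x ∈ p.field) (hxF : Transcendental F x) : ∃ p' ≥ p, p'.Pole 0 x := by
  have : IsScalarTower F p.field M := IsScalarTower.of_algebraMap_eq fun _ => rfl
  obtain ⟨L, σ, hσ, hpole⟩ := p.exists_isPlace hw hq hτ (x := ⟨x, hx⟩) fun h =>
    hxF (h.algHom (IsScalarTower.toAlgHom F p.field M))
  exact p.exists_pole_of_isPlace (v := ⟨0, L, σ⟩) hσ (fun h => (h rfl).elim) hpole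

theorem exists_isPlace_center (hw : IsLaurentModel F w T) {n : ℕ} (hn : 1 < n)
    (hτ : IntermediateField.adjoin F {τ} = ⊤) (ht : Transcendental F (algebraMap P M τ))
    (p : Condition M Λ w q A τ) (a : F) :
    ∃ (L : IntermediateField Λ Ω) (σ : p.field →ₐ[F] Ω), IsPlace w n L σ ∧
      1 < w (σ (algebraMap P p.field τ - algebraMap F _ a)⁻¹) := by
  have : IsScalarTower F p.field M := IsScalarTower.of_algebraMap_eq fun _ => rfl
  refine p.exists_isPlace hw hn hτ fun h => ht ?_
  have halg := (h.inv.add (isAlgebraic_algebraMap a)).algHom (IsScalarTower.toAlgHom F p.field M)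
  rwa [inv_inv, sub_add_cancel] at halg

theorem exists_pole_center (hw : IsLaurentModel F w T) (hq : 1 < q i)
    (hτ : IntermediateField.adjoin F {τ} = ⊤) (ht : Transcendental F (algebraMap P M τ))
    (p : Condition M Λ w q A τ) {a : F} (ha : a ∈ A i) :
    ∃ p' ≥ p, p'.Pole i (algebraMap P M τ - algebraMap F M a)⁻¹ := by
  obtain ⟨L, σ, hσ, hpole⟩ := p.exists_isPlace_center hw hq hτ ht a
  refine p.exists_pole_of_isPlace (v := ⟨i, L, σ⟩) hσ (fun _ => ⟨a, ha, ?_⟩) hpole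
  rw [map_inv₀, map_inv₀, map_sub, AlgHom.commutes] at hpole
  exact (one_lt_inv_iff₀.1 hpole).2

theorem exists_isPlace_integral [Infinite F] (hw : IsLaurentModel F w T) {n : ℕ} (hn : 1 < n)
    (hτ : IntermediateField.adjoin F {τ} = ⊤) (ht : Transcendental F (algebraMap P M τ))
    (p : Condition M Λ w q A τ) :
    ∃ (L : IntermediateField Λ Ω) (σ : p.field →ₐ[F] Ω) (x : p.field), IsPlace w n L σ ∧
      1 < w (σ x) ∧ ∀ v ∈ p.places, w (v.hom x) ≤ 1 := by
  obtain ⟨a, ha⟩ := (p.finite_setOf_exists_place fun v _ =>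
    hw.finite_map_add_const_lt_one (-v.hom (algebraMap P p.field τ))).exists_notMem
  rw [Set.notMem_ofPred_iff] at ha
  push Not at ha
  obtain ⟨L, σ, hσ, hpole⟩ := p.exists_isPlace_center hw hn hτ ht a
  refine ⟨L, σ, _, hσ, hpole, fun v hv => ?_⟩
  rw [map_inv₀, map_inv₀, map_sub, AlgHom.commutes, ← neg_sub, AbsoluteValue.map_neg,
    sub_eq_neg_add]
  exact inv_le_one_of_one_le₀ (ha v hv)

/- Adjoin a `q 0`-th root of `R 0 y`, where `y` is integral at the prescribed places and has a pole
of order prime to `q 0` elsewhere; the field has to grow because `R 0 y` is not a power there. -/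
theorem exists_field_lt [Infinite F] (hw : IsLaurentModel F w T) (hqR : HasRadicalValues M q R)
    (hτ : IntermediateField.adjoin F {τ} = ⊤) (ht : Transcendental F (algebraMap P M τ))
    (p : Condition M Λ w q A τ) : ∃ p' ≥ p, p.field < p'.field := by
  have hq := hqR.prime 0
  obtain ⟨L, σ, x, hσ, hpole, hx⟩ := p.exists_isPlace_integral hw hq.one_lt hτ ht
  obtain ⟨s, hs, hgt, hpow⟩ := p.exists_integral_not_hasPowValue hw hq.ne_zero hσ hpole
  set y := s * x ^ q 0
  have hy : ∀ v ∈ p.places, w (v.hom y) ≤ 1 := fun v hv => by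
    rw [map_mul, map_mul, map_pow, map_pow]
    exact mul_le_one₀ (hs v hv) (by positivity) (pow_le_one₀ (apply_nonneg _ _) (hx v hv))
  obtain ⟨a, ha⟩ := (finite_not_exists_pow_eq_ratFunc_eval (i := 0) (s := y) hw hqR
    fun ⟨_, v, hv, _, hgt', _⟩ => (hy v hv).not_gt hgt').exists_notMem
  rw [Set.notMem_ofPred_iff] at ha
  push Not at ha
  obtain ⟨p', h, ⟨z, hz⟩, hp⟩ := p.exists_pow_eq_ratFunc_eval_extension hw hqR ha
  refine ⟨p', ⟨h, hp.ge⟩, lt_of_le_of_ne h fun heq => ?_⟩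
  have hv : w (σ (y + algebraMap F _ a)) = w (σ y) := by
    rw [map_add, AlgHom.commutes, hw.map_add_const hgt]
  obtain ⟨z, rfl⟩ : ∃ z', inclusion F h z' = z := ⟨⟨z, heq.ge z.2⟩, rfl⟩
  rw [← map_pow, ← map_ratFunc_eval] at hz
  replace hz := (inclusion F h).injective hz
  refine hw.pow_ne_ratFunc_eval hq (hqR.not_dvd_intDegree 0) (hσ.map_mem _) (hv ▸ hgt) ?_
    (hσ.map_mem z) ?_
  · rwa [hasPowValue_congr hv]
  · rw [← map_pow, hz, map_ratFunc_eval]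

end Condition

end Poles

section Generic

universe u

/-- The requirements met by a generic set of conditions: deciding whether `y` is bad or committed,
witnessing that the element `x` with a pole does not multiply `shiftRootSet` into itself, giving
poles to transcendental elements and to `(τ - a)⁻¹` for `a ∈ A i`, containing the elements of degree
prime to all `q i`, and having large degree over `P`. -/
inductive Requirement (F M : Type*)
  | decide (i : ℕ) (y : M)
  | witness (i : ℕ) (x : M)
  | pole (x : M)
  | center (i : ℕ) (a : F)
  | adjoin (α : M)
  | degree (n : ℕ)
  deriving Countable

namespace Condition

variable {F Λ Ω P M : Type u} [Field F] [Field Λ] [Field Ω] [Algebra Λ Ω]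
  [Algebra F Ω] [Field P] [Field M] [Algebra F P] [Algebra P M] [Algebra F M] [IsScalarTower F P M]
  {w : AbsoluteValue Ω ℝ} {T : Λ} {q : ℕ → ℕ} {R : ℕ → RatFunc F} {A : ℕ → Set F} {τ : P}

/-- The requirement `r` calls for an extension of `p` meeting it. -/
def Applies (p : Condition M Λ w q A τ) : Requirement F M → Prop
  | .decide _ y => y ∈ p.field
  | .witness i x => p.Pole i x
  | .pole x => x ∈ p.field ∧ Transcendental F x
  | .center i a => a ∈ A i
  | .adjoin α => IsIntegral p.field α ∧ ∀ i, ¬ q i ∣ (minpoly p.field α).natDegree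
  | .degree _ => True

/-- The condition `p` meets the requirement `r`. -/
def Meets (p : Condition M Λ w q A τ) (R : ℕ → RatFunc F) : Requirement F M → Prop
  | .decide i y => p.Bad i y ∨ p.Committed R i y
  | .witness i x => ∃ s, p.Committed R i s ∧ p.Bad i (s * x ^ q i)
  | .pole x => p.Pole 0 x
  | .center i a => p.Pole i (algebraMap P M τ - algebraMap F M a)⁻¹
  | .adjoin α => α ∈ p.field
  | .degree n => n ≤ Module.finrank P p.field

/-- An ideal of conditions is generic if it meets each requirement that applies to all sufficiently
large conditions in the ideal. -/
def IsGeneric (R : ℕ → RatFunc F) (I : Order.Ideal (Condition M Λ w q A τ)) : Prop :=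
  ∀ r : Requirement F M, ∀ p ∈ I, (∀ p' ∈ I, p ≤ p' → p'.Applies r) → ∃ p' ∈ I, p'.Meets R r

variable [Algebra F Λ] [Algebra.IsAlgebraic Λ Ω] [IsAlgClosed Ω] [IsScalarTower F Λ Ω] [Infinite F]

theorem exists_le_finrank (hw : IsLaurentModel F w T) (hqR : HasRadicalValues M q R)
    (hτ : IntermediateField.adjoin F {τ} = ⊤) (ht : Transcendental F (algebraMap P M τ))
    (p : Condition M Λ w q A τ) (n : ℕ) : ∃ p' ≥ p, n ≤ Module.finrank P p'.field := by
  induction n with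
  | zero => exact ⟨p, le_rfl, Nat.zero_le _⟩
  | succ n ih =>
    obtain ⟨p₁, hp₁, hn⟩ := ih
    obtain ⟨p₂, hp₂, hlt⟩ := p₁.exists_field_lt hw hqR hτ ht
    have := p₂.finiteDimensional
    exact ⟨p₂, hp₁.trans hp₂, hn.trans_lt <| lt_of_not_ge fun h =>
      hlt.ne (IntermediateField.eq_of_le_of_finrank_le hlt.le h)⟩

theorem Applies.exists_meets (hw : IsLaurentModel F w T) (hqR : HasRadicalValues M q R)
    (hτ : IntermediateField.adjoin F {τ} = ⊤) (ht : Transcendental F (algebraMap P M τ))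
    {p : Condition M Λ w q A τ} {r : Requirement F M} (h : p.Applies r) :
    ∃ p' ≥ p, p'.Meets R r := by
  cases r with
  | decide i y =>
    by_cases hbad : p.Bad i y
    · exact ⟨p, le_rfl, .inl hbad⟩
    · exact (exists_committed hw hqR h hbad).imp fun _ => And.imp_right .inr
  | witness i x => exact Pole.exists_committed_bad hw hqR h
  | pole x => exact p.exists_pole hw (hqR.prime 0).one_lt hτ h.1 h.2
  | center i a => exact p.exists_pole_center hw (hqR.prime i).one_lt hτ ht h
  | adjoin α => exact p.exists_mem_field_of_not_dvd hw hqR.prime h.1 h.2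
  | degree n => exact p.exists_le_finrank hw hqR hτ ht n

theorem exists_isGeneric [Countable F] [Countable M] (hw : IsLaurentModel F w T)
    (hqR : HasRadicalValues M q R) (hτ : IntermediateField.adjoin F {τ} = ⊤)
    (ht : Transcendental F (algebraMap P M τ)) :
    ∃ I : Order.Ideal (Condition M Λ w q A τ), IsGeneric R I := by
  have := Encodable.ofCountable (Requirement F M)
  let D : Requirement F M → Order.Cofinal (Condition M Λ w q A τ) := fun r =>
    { carrier := {p | p.Meets R r ∨ ∀ p' ≥ p, ¬ p'.Applies r}
      isCofinal := fun p => by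
        by_cases h : ∃ p' ≥ p, p'.Applies r
        · obtain ⟨p₁, hp₁, h₁⟩ := h
          obtain ⟨p₂, hp₂, h₂⟩ := h₁.exists_meets hw hqR hτ ht
          exact ⟨p₂, .inl h₂, hp₁.trans hp₂⟩
        · exact ⟨p, .inr fun p' hp' h' => h ⟨p', hp', h'⟩, le_rfl⟩ }
  refine ⟨Order.idealOfCofinals initial D, fun r p hp h => ?_⟩
  obtain ⟨p₁, hr, hp₁⟩ := Order.cofinal_meets_idealOfCofinals initial D r
  refine ⟨p₁, hp₁, hr.resolve_right fun hnot => ?_⟩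
  obtain ⟨p₂, hp₂, hle, hle₁⟩ := Order.Ideal.directed _ p hp p₁ hp₁
  exact hnot p₂ hle₁ (h p₂ hp₂ hle)

end Condition

end Generic

section Definability

universe u

open FirstOrder FirstOrder.Ring Set

theorem inv_eq_iff_mul_mul_cancel {G : Type*} [GroupWithZero G] {x y : G} :
    x⁻¹ = y ↔ y * (y * x) = y ∧ x * (y * x) = x := by
  constructor
  · rintro rfl
    exact ⟨by simpa only [inv_inv, mul_assoc] using mul_self_mul_inv x⁻¹,
      by rw [← mul_assoc, mul_inv_mul_cancel]⟩
  · rintro ⟨hy, hx⟩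
    rcases eq_or_ne x 0 with rfl | hx0
    · simpa only [inv_zero, mul_zero] using hy
    · exact inv_eq_of_mul_eq_one_left (mul_left_cancel₀ hx0 (hx.trans (mul_one x).symm))

variable {K : Type u} [Field K] [CompatibleRing K] {A : Set K} {α β : Type} {f g : (α → K) → K}

theorem definable_exists {P : (α → K) → K → Prop}
    (h : A.Definable Language.ring {v : α ⊕ Unit → K | P (v ∘ Sum.inl) (v (Sum.inr ()))}) :
    A.Definable Language.ring {v : α → K | ∃ x, P v x} := by
  convert! h.exists_of_finite using 1
  ext v
  exact ⟨fun ⟨x, hx⟩ => ⟨fun _ => x, hx⟩, fun ⟨x, hx⟩ => ⟨x (), hx⟩⟩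

theorem definableFun_comp_left [Finite α] (hf : A.DefinableFun Language.ring f) (e : α → β) :
    A.DefinableFun Language.ring fun v : β → K => f (v ∘ e) :=
  DefinableFun.comp (g := fun v : β → K => v ∘ e) (fun _ => DefinableFun.proj _) hf

theorem definableFun_comp₁ {op : K → K}
    (hop : A.DefinableFun Language.ring fun v : Fin 1 → K => op (v 0))
    (hf : A.DefinableFun Language.ring f) : A.DefinableFun Language.ring fun v => op (f v) :=
  DefinableFun.comp (g := fun v _ => f v) (fun _ => hf) hop

theorem definableFun_comp₂ {op : K → K → K}
    (hop : A.DefinableFun Language.ring fun v : Fin 2 → K => op (v 0) (v 1))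
    (hf : A.DefinableFun Language.ring f) (hg : A.DefinableFun Language.ring g) :
    A.DefinableFun Language.ring fun v => op (f v) (g v) :=
  DefinableFun.comp (g := fun v => ![f v, g v]) (Fin.forall_fin_two.2 ⟨hf, hg⟩) hop

theorem definableFun_add (hf : A.DefinableFun Language.ring f)
    (hg : A.DefinableFun Language.ring g) : A.DefinableFun Language.ring fun v => f v + g v := by
  refine definableFun_comp₂ (op := (· + ·)) ?_ hf hg
  simpa only [← CompatibleRing.funMap_add] using
    DefinableFun.of_empty (A := A) (DefinableFun.fun_symbol (M := K) addFunc)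

theorem definableFun_mul (hf : A.DefinableFun Language.ring f)
    (hg : A.DefinableFun Language.ring g) : A.DefinableFun Language.ring fun v => f v * g v := by
  refine definableFun_comp₂ (op := (· * ·)) ?_ hf hg
  simpa only [← CompatibleRing.funMap_mul] using
    DefinableFun.of_empty (A := A) (DefinableFun.fun_symbol (M := K) mulFunc)

theorem definableFun_neg (hf : A.DefinableFun Language.ring f) :
    A.DefinableFun Language.ring fun v => -f v := by
  refine definableFun_comp₁ (op := (- ·)) ?_ hf
  simpa only [← CompatibleRing.funMap_neg] using
    DefinableFun.of_empty (A := A) (DefinableFun.fun_symbol (M := K) negFunc)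

theorem definableFun_zero : A.DefinableFun Language.ring fun _ : α → K => 0 := by
  refine DefinableFun.of_empty ?_
  simpa only [realize_zero] using (0 : Language.ring.Term α).definableFun_realize (M := K)

theorem definableFun_one : A.DefinableFun Language.ring fun _ : α → K => 1 := by
  refine DefinableFun.of_empty ?_
  simpa only [realize_one] using (1 : Language.ring.Term α).definableFun_realize (M := K)

theorem definableFun_sub (hf : A.DefinableFun Language.ring f)
    (hg : A.DefinableFun Language.ring g) : A.DefinableFun Language.ring fun v => f v - g v := by
  simpa only [sub_eq_add_neg] using definableFun_add hf (definableFun_neg hg)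

theorem definableFun_pow (hf : A.DefinableFun Language.ring f) (n : ℕ) :
    A.DefinableFun Language.ring fun v => f v ^ n := by
  induction n with
  | zero => simpa only [pow_zero] using definableFun_one
  | succ n ih => simpa only [pow_succ] using definableFun_mul ih hf

theorem definableFun_inv (hf : A.DefinableFun Language.ring f) :
    A.DefinableFun Language.ring fun v => (f v)⁻¹ := by
  refine definableFun_comp₁ (op := (·⁻¹)) ?_ hf
  have hx : A.DefinableFun Language.ring fun v : Option (Fin 1) → K => v (some 0) :=
    DefinableFun.proj _
  have hy : A.DefinableFun Language.ring fun v : Option (Fin 1) → K => v none :=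
    DefinableFun.proj _
  have hyx := definableFun_mul hy hx
  change A.Definable Language.ring _
  convert! ((definableFun_mul hy hyx).ofPred_eq hy).inter
    ((definableFun_mul hx hyx).ofPred_eq hx) using 1
  ext v
  exact inv_eq_iff_mul_mul_cancel

theorem definableFun_const (a : K) :
    (univ : Set K).DefinableFun Language.ring fun _ : α → K => a :=
  Language.definableFun_const _ _ (mem_univ a)

theorem definableFun_eval₂ {R : Type*} [CommSemiring R] (φ : R →+* K) (P : R[X])
    (hf : (univ : Set K).DefinableFun Language.ring f) :
    (univ : Set K).DefinableFun Language.ring fun v => P.eval₂ φ (f v) := by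
  induction P using Polynomial.induction_on' with
  | add P Q hP hQ => simpa only [eval₂_add] using definableFun_add hP hQ
  | monomial n a =>
    simpa only [eval₂_monomial] using
      definableFun_mul (definableFun_const (φ a)) (definableFun_pow hf n)

variable {F : Type u} [Field F] [Algebra F K]

theorem definableFun_ratFunc_eval (R : RatFunc F)
    (hf : (univ : Set K).DefinableFun Language.ring f) :
    (univ : Set K).DefinableFun Language.ring fun v => R.eval (algebraMap F K) (f v) := by
  simp only [RatFunc.eval, div_eq_mul_inv]
  exact definableFun_mul (definableFun_eval₂ _ _ hf) (definableFun_inv (definableFun_eval₂ _ _ hf))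

theorem definable_shiftRootSet [Finite α] (R : RatFunc F) (q : ℕ)
    (hf : (univ : Set K).DefinableFun Language.ring f) :
    (univ : Set K).Definable Language.ring {v | f v ∈ shiftRootSet R q K} := by
  have key {g : (α ⊕ Unit → K) → K} (hg : (univ : Set K).DefinableFun Language.ring g) :
      (univ : Set K).Definable Language.ring {v | ∃ z, z ^ q = R.eval (algebraMap F K) (g v)} :=
    definable_exists (P := fun v z => z ^ q = R.eval (algebraMap F K) (g v))
      ((definableFun_pow (DefinableFun.proj _) q).ofPred_eq
        (definableFun_comp_left (definableFun_ratFunc_eval R hg) Sum.inl))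
  have hα : (univ : Set K).DefinableFun Language.ring fun v : α ⊕ Unit → K => v (Sum.inr ()) :=
    DefinableFun.proj _
  have hs := definableFun_comp_left (β := α ⊕ Unit) hf Sum.inl
  exact definable_exists (P := fun v α => α ≠ 0 ∧
      (∃ z, z ^ q = R.eval (algebraMap F K) (f v + α)) ∧
      ∃ z, z ^ q = R.eval (algebraMap F K) (f v + α⁻¹))
    ((hα.ofPred_eq definableFun_zero).compl.inter
      ((key (definableFun_add hs hα)).inter (key (definableFun_add hs (definableFun_inv hα)))))

/-- The elements `x` such that multiplication by `x ^ q` preserves `shiftRootSet R q E`. In a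
generic field these are the elements without poles at the prescribed places. -/
def rootStabilizer {F : Type u} [Field F] (R : RatFunc F) (q : ℕ) (E : Type u) [Field E]
    [Algebra F E] : Set E :=
  {x | ∀ s ∈ shiftRootSet R q E, s * x ^ q ∈ shiftRootSet R q E}

theorem definable_rootStabilizer [Finite α] (R : RatFunc F) (q : ℕ)
    (hf : (univ : Set K).DefinableFun Language.ring f) :
    (univ : Set K).Definable Language.ring {v | f v ∈ rootStabilizer R q K} := by
  have hs : (univ : Set K).DefinableFun Language.ring fun v : α ⊕ Unit → K => v (Sum.inr ()) :=
    DefinableFun.proj _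
  have hx := definableFun_pow (definableFun_comp_left (β := α ⊕ Unit) hf Sum.inl) q
  convert! (definable_exists
    (P := fun v s => s ∈ shiftRootSet R q K ∧ s * f v ^ q ∉ shiftRootSet R q K)
    ((definable_shiftRootSet R q hs).inter
      (definable_shiftRootSet R q (definableFun_mul hs hx)).compl)).compl using 1
  ext v
  simp only [rootStabilizer, mem_ofPred_eq, mem_compl_iff, not_exists, not_and, not_not]

end Definability

open FirstOrder Set in
theorem definableWithParams_rootStabilizer.{u} {F K : Type u} [Field F] [Field K] [Algebra F K]
    (R R' : RatFunc F) (q q' : ℕ) (τ : K) :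
    definableWithParams K {x | x ∈ rootStabilizer R q K ∧ (τ - x)⁻¹ ∉ rootStabilizer R' q' K} := by
  let := Ring.compatibleRingOfRing K
  have hx : (univ : Set K).DefinableFun Language.ring fun v : Fin 1 → K => v 0 :=
    DefinableFun.proj _
  exact (definable_rootStabilizer R q hx).inter
    (definable_rootStabilizer R' q'
      (definableFun_inv (definableFun_sub (definableFun_const τ) hx))).compl

section GenericField

universe u

theorem isIntegral_and_map_minpoly_of_mem_lifts {k K M : Type*} [Field k] [Field K] [Field M]
    [Algebra k K] [Algebra K M] [Algebra k M] [IsScalarTower k K M] {α : M} (hα : IsIntegral K α)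
    (hlift : minpoly K α ∈ lifts (algebraMap k K)) :
    IsIntegral k α ∧ (minpoly k α).map (algebraMap k K) = minpoly K α := by
  obtain ⟨g, hg⟩ := (mem_lifts _).1 hlift
  have hmonic : g.Monic := monic_of_injective (algebraMap k K).injective (hg ▸ minpoly.monic hα)
  have hirr : Irreducible g :=
    hmonic.irreducible_of_irreducible_map _ g (hg ▸ minpoly.irreducible hα)
  have heval : aeval α g = 0 := by rw [← aeval_map_algebraMap K, hg, minpoly.aeval]
  exact ⟨⟨g, hmonic, heval⟩, by rw [← minpoly.eq_of_irreducible_of_monic hirr heval hmonic, hg]⟩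

namespace Condition

variable {F Λ Ω P M : Type u} [Field F] [Field Λ] [Field Ω] [Algebra Λ Ω]
  [Algebra F Ω] [Field P] [Field M] [Algebra F P] [Algebra P M] [Algebra F M] [IsScalarTower F P M]
  {w : AbsoluteValue Ω ℝ} {T : Λ} {q : ℕ → ℕ} {R : ℕ → RatFunc F} {A : ℕ → Set F} {τ : P}
  {p : Condition M Λ w q A τ} {i : ℕ}

/-- The union of the fields of the conditions in an ideal. -/
def genericField (I : Order.Ideal (Condition M Λ w q A τ)) : IntermediateField P M :=
  ⨆ p : I, p.1.field

variable {I : Order.Ideal (Condition M Λ w q A τ)}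

theorem field_le_genericField (hp : p ∈ I) : p.field ≤ genericField I :=
  le_iSup (fun p : I => p.1.field) ⟨p, hp⟩

theorem mem_genericField {x : M} : x ∈ genericField I ↔ ∃ p ∈ I, x ∈ p.field := by
  have : Nonempty I := I.nonempty.to_subtype
  have hdir : Directed (· ≤ ·) fun p : I => p.1.field :=
    I.directed.directed_val.mono_comp _ fun _ _ h => h.1
  rw [genericField, ← SetLike.mem_coe, IntermediateField.coe_iSup_of_directed hdir, Set.mem_iUnion]
  exact ⟨fun ⟨p, hx⟩ => ⟨p, p.2, hx⟩, fun ⟨p, hp, hx⟩ => ⟨⟨p, hp⟩, hx⟩⟩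

theorem exists_subset_field {S : Set M} (hS : S.Finite) (h : S ⊆ genericField I) :
    ∃ p ∈ I, S ⊆ p.field := by
  induction S, hS using Set.Finite.induction_on with
  | empty => exact I.nonempty.imp fun p hp => ⟨hp, Set.empty_subset _⟩
  | @insert x S _ _ ih =>
    obtain ⟨hx, hS⟩ := Set.insert_subset_iff.1 h
    obtain ⟨p₁, hp₁, hx⟩ := mem_genericField.1 hx
    obtain ⟨p₂, hp₂, hS⟩ := ih hS
    obtain ⟨p, hp, h₁, h₂⟩ := I.directed p₁ hp₁ p₂ hp₂
    exact ⟨p, hp, Set.insert_subset (h₁.1 hx) (hS.trans h₂.1)⟩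

theorem mem_shiftRootSet_genericField {y : genericField I} :
    y ∈ shiftRootSet (R i) (q i) (genericField I) ↔ ∃ p ∈ I, p.Committed R i (y : M) := by
  constructor
  · rintro ⟨α, hα, ⟨z, hz⟩, z', hz'⟩
    obtain ⟨p, hp, hsub⟩ := exists_subset_field (I := I) (S := {↑y, ↑α, ↑z, ↑z'})
      (Set.toFinite _) (by simp [Set.insert_subset_iff])
    simp only [Set.insert_subset_iff, Set.singleton_subset_iff] at hsub
    obtain ⟨hy, hαp, hzp, hzp'⟩ := hsub
    have hinj : Function.Injective (inclusion F (field_le_genericField hp)) :=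
      (inclusion F (field_le_genericField hp)).injective
    refine ⟨p, hp, hy, ⟨α, hαp⟩, fun h => hα (Subtype.ext (congrArg Subtype.val h :)),
      ⟨⟨z, hzp⟩, hinj ?_⟩, ⟨z', hzp'⟩, hinj ?_⟩
    · rw [map_pow, map_ratFunc_eval]
      exact hz
    · rw [map_pow, map_ratFunc_eval]
      exact hz'
  · rintro ⟨p, hp, hy, hmem⟩
    exact map_mem_shiftRootSet (inclusion F (field_le_genericField hp)) hmem

theorem Bad.of_mul_pow {x y : M} (h : p.Bad i (y * x ^ q i)) (hx : x ∈ p.field) (hy : y ∈ p.field)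
    (hpole : ¬ p.Pole i x) : p.Bad i y := by
  obtain ⟨_, v, hv, rfl, hgt, hpow⟩ := h
  have hle : w (v.hom ⟨x, hx⟩) ≤ 1 := not_lt.1 fun hlt => hpole ⟨hx, v, hv, rfl, hlt⟩
  change 1 < w (v.hom (⟨y, hy⟩ * ⟨x, hx⟩ ^ q v.type)) at hgt
  change ¬ HasPowValue w v.completion (q v.type) (v.hom (⟨y, hy⟩ * ⟨x, hx⟩ ^ q v.type)) at hpow
  rw [map_mul, map_pow] at hgt hpow
  refine ⟨hy, v, hv, rfl, hgt.trans_le ?_, fun h => hpow (h.mul_pow ((p.isPlace v hv).map_mem _))⟩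
  rw [map_mul, map_pow]
  exact mul_le_of_le_one_right (w.nonneg _) (pow_le_one₀ (w.nonneg _) hle)

namespace IsGeneric

theorem isAlgebraic_of_forall_not_pole (hI : IsGeneric R I) {x : M} (hx : x ∈ genericField I)
    (h : ∀ p ∈ I, ¬ p.Pole 0 x) : IsAlgebraic F x := by
  by_contra hxF
  obtain ⟨p, hp, hxp⟩ := mem_genericField.1 hx
  obtain ⟨p', hp', hpole⟩ := hI (.pole x) p hp fun _ _ hle => ⟨hle.1 hxp, hxF⟩
  exact h p' hp' hpole

theorem not_finiteDimensional (hI : IsGeneric R I) : ¬ FiniteDimensional P (genericField I) := by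
  intro hfin
  obtain ⟨p, hp⟩ := I.nonempty
  obtain ⟨p', hp', hle⟩ := hI (.degree (Module.finrank P (genericField I) + 1)) p hp
    fun _ _ _ => trivial
  exact (IntermediateField.finrank_le_of_le_right (field_le_genericField hp')).not_gt hle

theorem mem_genericField_of_not_dvd (hI : IsGeneric R I) {α : M}
    (hα : IsIntegral (genericField I) α)
    (hdeg : ∀ i, ¬ q i ∣ (minpoly (genericField I) α).natDegree) : α ∈ genericField I := by
  obtain ⟨p, hp, hcoeff⟩ := exists_subset_field (I := I)
    (S := Subtype.val '' ((minpoly (genericField I) α).coeffs : Set (genericField I)))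
    (Set.toFinite _) (Set.image_subset_iff.2 fun x _ => x.2)
  obtain ⟨p', hp', hmem⟩ := hI (.adjoin α) p hp fun p' hp' hle => by
    let := (IntermediateField.inclusion (field_le_genericField hp')).toRingHom.toAlgebra
    have : IsScalarTower p'.field (genericField I) M := IsScalarTower.of_algebraMap_eq fun _ => rfl
    have hlift : minpoly (genericField I) α ∈ lifts (algebraMap p'.field (genericField I)) := by
      rw [lifts_iff_coeffs_subset_range]
      exact fun c hc => ⟨⟨c, hle.1 (hcoeff ⟨c, hc, rfl⟩)⟩, rfl⟩
    obtain ⟨hint, hmap⟩ := isIntegral_and_map_minpoly_of_mem_lifts hα hlift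
    exact ⟨hint, by rwa [← hmap, natDegree_map] at hdeg⟩
  exact field_le_genericField hp' hmem

theorem finrank_eq_one_or_dvd (hI : IsGeneric R I) (H : IntermediateField (genericField I) M)
    [FiniteDimensional (genericField I) H] :
    Module.finrank (genericField I) H = 1 ∨ ∃ i, q i ∣ Module.finrank (genericField I) H := by
  refine or_iff_not_imp_right.2 fun hdvd => ?_
  push Not at hdvd
  rw [IntermediateField.finrank_eq_one_iff, eq_bot_iff]
  intro α hα
  have hint : IsIntegral (genericField I) (⟨α, hα⟩ : H) := .of_finite _ _
  have hmin : minpoly (genericField I) (⟨α, hα⟩ : H) = minpoly (genericField I) α :=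
    IntermediateField.minpoly_eq ..
  have hmem : α ∈ genericField I := hI.mem_genericField_of_not_dvd (hint.map H.val) fun i hi =>
    hdvd i (hi.trans (hmin ▸ minpoly.degree_dvd hint))
  exact IntermediateField.mem_bot.2 ⟨⟨α, hmem⟩, rfl⟩

end IsGeneric

variable [Algebra F Λ]

theorem Pole.exists_eq_algebraMap (hw : IsLaurentModel F w T) (hi : i ≠ 0) {x : M}
    (h : p.Pole i (algebraMap P M τ - x)⁻¹) (hx : x ∈ p.field) (halg : IsAlgebraic F x) :
    ∃ a ∈ A i, algebraMap F M a = x := by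
  obtain ⟨_, v, hv, rfl, hpole⟩ := h
  have : IsScalarTower F p.field M := IsScalarTower.of_algebraMap_eq fun _ => rfl
  obtain ⟨a, ha, hτa⟩ := p.near v hv hi
  change 1 < w (v.hom (algebraMap P p.field τ - ⟨x, hx⟩)⁻¹) at hpole
  rw [map_inv₀, map_inv₀, map_sub] at hpole
  have hτx := (one_lt_inv_iff₀.1 hpole).2
  have hxa : w (v.hom ⟨x, hx⟩ - algebraMap F Ω a) < 1 := by
    have := map_sub_lt_of_isNonarchimedean hw.nonarch hτa hτx
    rwa [sub_sub_sub_cancel_left] at this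
  have halg' : IsAlgebraic F (v.hom ⟨x, hx⟩ - algebraMap F Ω a) :=
    (((isAlgebraic_algebraMap_iff (A := M) Subtype.val_injective).1 halg).algHom v.hom).sub
      (isAlgebraic_algebraMap a)
  have hzero : v.hom ⟨x, hx⟩ - algebraMap F Ω a = 0 :=
    by_contra fun h0 => hxa.ne (hw.map_eq_one_of_isAlgebraic halg' h0)
  rw [← v.hom.commutes, sub_eq_zero] at hzero
  exact ⟨a, ha, (congrArg Subtype.val (v.hom.injective hzero)).symm⟩

theorem not_pole_algebraMap (hw : IsLaurentModel F w T) (a : F) :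
    ¬ p.Pole i (algebraMap F M a) := by
  rintro ⟨hx, v, _, rfl, hpole⟩
  change 1 < w (v.hom (algebraMap F p.field a)) at hpole
  rw [v.hom.commutes] at hpole
  exact hpole.not_ge (hw.map_const_le_one a)

namespace IsGeneric

theorem notMem_shiftRootSet_genericField (hI : IsGeneric R I) (hw : IsLaurentModel F w T)
    (hqR : HasRadicalValues M q R) {y : genericField I} :
    y ∉ shiftRootSet (R i) (q i) (genericField I) ↔ ∃ p ∈ I, p.Bad i (y : M) := by
  rw [mem_shiftRootSet_genericField]
  constructor
  · intro h
    obtain ⟨p, hp, hy⟩ := mem_genericField.1 y.2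
    obtain ⟨p', hp', hbad | hcomm⟩ := hI (.decide i y) p hp fun _ _ hle => hle.1 hy
    · exact ⟨p', hp', hbad⟩
    · exact (h ⟨p', hp', hcomm⟩).elim
  · rintro ⟨p₁, hp₁, hbad⟩ ⟨p₂, hp₂, hcomm⟩
    obtain ⟨p, -, h₁, h₂⟩ := I.directed p₁ hp₁ p₂ hp₂
    exact (hbad.mono h₁).not_committed hw (hqR.prime i) (hqR.not_dvd_intDegree i) (hcomm.mono h₂)

theorem mem_rootStabilizer (hI : IsGeneric R I) (hw : IsLaurentModel F w T)
    (hqR : HasRadicalValues M q R) {x : genericField I} :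
    x ∈ rootStabilizer (R i) (q i) (genericField I) ↔ ∀ p ∈ I, ¬ p.Pole i (x : M) := by
  constructor
  · intro h p hp hpole
    obtain ⟨p', hp', s, hcomm, hbad⟩ := hI (.witness i x) p hp fun _ _ hle => hpole.mono hle
    obtain ⟨s, rfl⟩ : ∃ s' : genericField I, (s' : M) = s :=
      ⟨⟨s, field_le_genericField hp' hcomm.1⟩, rfl⟩
    exact (hI.notMem_shiftRootSet_genericField hw hqR).2 ⟨p', hp', hbad⟩
      (h s (mem_shiftRootSet_genericField.2 ⟨p', hp', hcomm⟩))
  · intro h y hy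
    by_contra hyx
    obtain ⟨p₁, hp₁, hbad⟩ := (hI.notMem_shiftRootSet_genericField hw hqR).1 hyx
    obtain ⟨p₂, hp₂, hsub⟩ := exists_subset_field (I := I) (S := {↑x, ↑y})
      (Set.toFinite _) (by simp [Set.insert_subset_iff])
    obtain ⟨p, hp, h₁, h₂⟩ := I.directed p₁ hp₁ p₂ hp₂
    exact (hI.notMem_shiftRootSet_genericField hw hqR).2 ⟨p, hp, (hbad.mono h₁).of_mul_pow
      (h₂.1 (hsub (.inl rfl))) (h₂.1 (hsub (.inr rfl))) (h p hp)⟩ hy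

theorem mem_rootStabilizer_and_notMem (hI : IsGeneric R I) (hw : IsLaurentModel F w T)
    (hqR : HasRadicalValues M q R) (hi : i ≠ 0) {x : genericField I} :
    (x ∈ rootStabilizer (R 0) (q 0) (genericField I) ∧
      (algebraMap P (genericField I) τ - x)⁻¹ ∉ rootStabilizer (R i) (q i) (genericField I)) ↔
      ∃ a ∈ A i, algebraMap F M a = (x : M) := by
  rw [hI.mem_rootStabilizer hw hqR, hI.mem_rootStabilizer hw hqR]
  push Not
  constructor
  · rintro ⟨h0, p₁, hp₁, hpole⟩
    obtain ⟨p₂, hp₂, hx⟩ := mem_genericField.1 x.2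
    obtain ⟨p, -, h₁, h₂⟩ := I.directed p₁ hp₁ p₂ hp₂
    exact (hpole.mono h₁).exists_eq_algebraMap hw hi (h₂.1 hx)
      (hI.isAlgebraic_of_forall_not_pole x.2 h0)
  · rintro ⟨a, ha, hax⟩
    obtain ⟨p, hp⟩ := I.nonempty
    obtain ⟨p', hp', hpole⟩ := hI (.center i a) p hp fun _ _ _ => ha
    refine ⟨fun p _ => hax ▸ not_pole_algebraMap hw a, p', hp', ?_⟩
    rwa [Meets, hax] at hpole

end IsGeneric

end Condition

end GenericField

section Evaluation

universe u

theorem ratFunc_eval_div_of_isCoprime {K L : Type u} [Field K] [Field L] (f : K →+* L) {p q : K[X]}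
    (hpq : IsCoprime p q) (hq : q ≠ 0) (x : L) :
    (algebraMap K[X] (RatFunc K) p / algebraMap K[X] (RatFunc K) q).eval f x =
      p.eval₂ f x / q.eval₂ f x := by
  set r := algebraMap K[X] (RatFunc K) p / algebraMap K[X] (RatFunc K) q with hr
  have hcross : r.num.eval₂ f x * q.eval₂ f x = p.eval₂ f x * r.denom.eval₂ f x := by
    rw [← eval₂_mul, ← eval₂_mul, (RatFunc.num_mul_eq_mul_denom_iff hq).2 hr]
  have hne : ∀ {a b : K[X]}, IsCoprime a b → b.eval₂ f x = 0 → a.eval₂ f x ≠ 0 := by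
    rintro a b ⟨u, v, huv⟩ hb ha
    have := congrArg (eval₂ f x) huv
    simp [hb, ha] at this
  by_cases hqx : q.eval₂ f x = 0
  · have hdx : r.denom.eval₂ f x = 0 := by
      simpa [hqx, hne hpq hqx] using hcross
    rw [RatFunc.eval, hqx, hdx, div_zero, div_zero]
  · have hdx : r.denom.eval₂ f x ≠ 0 := fun hdx => by
      simp [hdx, hqx, hne r.isCoprime_num_denom hdx] at hcross
    rw [RatFunc.eval, div_eq_div_iff hdx hqx, hcross]

variable {F : Type u} [Field F] {m k : ℕ} (c : Fin m → F) (b : Fin k → F) (n : Fin m → ℕ)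
  (j : Fin k → ℕ)

/-- The rational function evaluated by `ratEval`. -/
noncomputable def ratEvalFunc : RatFunc F :=
  algebraMap F[X] (RatFunc F) (∏ i, (X - C (c i)) ^ n i) /
    algebraMap F[X] (RatFunc F) (∏ i, (X - C (b i)) ^ j i)

theorem monic_prod_X_sub_C_pow : (∏ i, (X - C (c i)) ^ n i).Monic :=
  monic_prod_of_monic _ _ fun i _ => (monic_X_sub_C (c i)).pow (n i)

theorem natDegree_prod_X_sub_C_pow : (∏ i, (X - C (c i)) ^ n i).natDegree = ∑ i, n i := by
  rw [natDegree_prod_of_monic _ _ fun i _ => (monic_X_sub_C (c i)).pow (n i)]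
  simp

theorem intDegree_ratEvalFunc :
    (ratEvalFunc c b n j).intDegree = ∑ i, (n i : ℤ) - ∑ i, (j i : ℤ) := by
  rw [ratEvalFunc, RatFunc.intDegree_div, RatFunc.intDegree_polynomial,
    RatFunc.intDegree_polynomial, natDegree_prod_X_sub_C_pow, natDegree_prod_X_sub_C_pow,
    Nat.cast_sum, Nat.cast_sum]
  all_goals exact RatFunc.algebraMap_ne_zero (monic_prod_X_sub_C_pow _ _).ne_zero

theorem eval_ratEvalFunc {M : Type u} [Field M] [Algebra F M]
    (h : Function.Injective (Sum.elim c b)) (x : M) :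
    (ratEvalFunc c b n j).eval (algebraMap F M) x = ratEval c b n j x := by
  have hcop : IsCoprime (∏ i, (X - C (c i)) ^ n i) (∏ i, (X - C (b i)) ^ j i) :=
    .prod_left fun i _ => .prod_right fun l _ => .pow <| isCoprime_X_sub_C_of_isUnit_sub <|
      (sub_ne_zero.2 fun hcb => Sum.inl_ne_inr (h (a₁ := .inl i) (a₂ := .inr l) hcb)).isUnit
  rw [ratEvalFunc, ratFunc_eval_div_of_isCoprime _ hcop (monic_prod_X_sub_C_pow b j).ne_zero,
    ratEval]
  simp only [eval₂_finsetProd, eval₂_pow, eval₂_sub, eval₂_X, eval₂_C]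

end Evaluation

theorem adjoin_adjoinSimple_gen (F : Type*) {M : Type*} [Field F] [Field M] [Algebra F M] (t : M) :
    IntermediateField.adjoin F {IntermediateField.AdjoinSimple.gen F t} = ⊤ := by
  apply IntermediateField.map_injective (IntermediateField.adjoin F {t}).val
  rw [IntermediateField.adjoin_map, ← AlgHom.fieldRange_eq_map, IntermediateField.fieldRange_val,
    Set.image_singleton]
  rfl

open Condition in
theorem stmt_1_general.{u} {F M : Type u} [Field F] [Infinite F] [Field M] [Countable M]
    [Algebra F M] (A : ℕ → Set F) {t : M} (ht : Transcendental F t) {q : ℕ → ℕ} {R : ℕ → RatFunc F}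
    (hqR : HasRadicalValues M q R) :
    ∃ K : IntermediateField (IntermediateField.adjoin F {t}) M,
      ¬ FiniteDimensional (IntermediateField.adjoin F {t}) K ∧
      (∀ u, definableWithParams K {x : K | ∃ a ∈ A u, algebraMap F M a = (x : M)}) ∧
      definableWithParams K {x : K | (x : M) ∈ Set.range (algebraMap F M)} ∧
      ∀ H : IntermediateField K M, FiniteDimensional K H →
        Module.finrank K H = 1 ∨ ∃ u, q u ∣ Module.finrank K H := by
  have : Countable F := (algebraMap F M).injective.countable
  obtain ⟨w, hw⟩ := exists_isLaurentModel F
  -- Type `0` is reserved for the poles of transcendental elements and type `1` for defining `F`.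
  let A' : ℕ → Set F := fun i => Nat.casesOn i ∅ fun i => Nat.casesOn i Set.univ A
  obtain ⟨I, hI⟩ := exists_isGeneric (A := A') (τ := IntermediateField.AdjoinSimple.gen F t) hw hqR
    (adjoin_adjoinSimple_gen F t) ht
  have hdef : ∀ i ≠ 0, definableWithParams (genericField I)
      {x : genericField I | ∃ a ∈ A' i, algebraMap F M a = (x : M)} := fun i hi => by
    simp only [← hI.mem_rootStabilizer_and_notMem hw hqR hi]
    exact definableWithParams_rootStabilizer _ _ _ _ _
  refine ⟨genericField I, hI.not_finiteDimensional, fun u => hdef (u + 2) (by omega), ?_,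
    fun H _ => hI.finrank_eq_one_or_dvd H⟩
  simpa [A'] using hdef 1 one_ne_zero

/-- Theorem `thm:main` together with Theorem `thm:properties`:
Let `F` be a countable field and, for each `u`, let `A_u ⊆ F` be a countable set such that
for every finite `B ⊆ F` the complement of `{a + b : a ∈ A_u, b ∈ B}` in `F` is infinite.
Let `M` be a countable field extension of `F`, `t ∈ M` transcendental over `F`, let
`(q_u)` be distinct primes different from the characteristic of `M`, and for each `u` let
`R_u(S) = ∏ᵢ (S - c_{u,i})^{n_{u,i}} / ∏ᵢ (S - b_{u,i})^{j_{u,i}}` with the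
`c_{u,i}, b_{u,i} ∈ F` pairwise distinct, the exponents positive,
`n_{u,1} ≢ 0 (mod q_u)`, `0 < deg C_u - deg B_u ≢ 0 (mod q_u)`, and suppose every value
`R_u(x)`, `x ∈ M`, is a `q_u`-th power in `M`.  Then there is a field `K` with
`F(t) ⊆ K ⊆ M` such that (1) `[K : F(t)]` is infinite; (2) each `A_u` is first-order
definable in `K`; (3) `F` is first-order definable in `K`; and (4) any finite extension
`H` of `K` inside `M` has `[H : K] = 1` or `q_u ∣ [H : K]` for some `u`. -/
theorem stmt_1 (F : Type) [Field F] [Countable F]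
    (M : Type) [Field M] [Countable M] [Algebra F M]
    (A : ℕ → Set F) (hAcnt : ∀ u, (A u).Countable)
    (hAcompl : ∀ u, ∀ B : Finset F,
      {x : F | ∃ a ∈ A u, ∃ b₀ ∈ B, x = a + b₀}ᶜ.Infinite)
    (t : M) (ht : Transcendental F t)
    (q : ℕ → ℕ) (hqprime : ∀ u, (q u).Prime) (hqdist : Function.Injective q)
    (hqchar : ∀ u, (q u : M) ≠ 0)
    (m k : ℕ → ℕ) (hm : ∀ u, 0 < m u)
    (c : (u : ℕ) → Fin (m u) → F) (b : (u : ℕ) → Fin (k u) → F)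
    (n : (u : ℕ) → Fin (m u) → ℕ) (j : (u : ℕ) → Fin (k u) → ℕ)
    (hdist : ∀ u, Function.Injective (Sum.elim (c u) (b u)))
    (hn : ∀ u i, 0 < n u i) (hj : ∀ u i, 0 < j u i)
    (hn1 : ∀ u, ¬ q u ∣ n u ⟨0, hm u⟩)
    (hdeg : ∀ u, (0 : ℤ) < (∑ i, (n u i : ℤ)) - ∑ i, (j u i : ℤ) ∧
      ¬ (q u : ℤ) ∣ ((∑ i, (n u i : ℤ)) - ∑ i, (j u i : ℤ)))
    (hroots : ∀ u, ∀ x : M, ∃ y : M, y ^ q u = ratEval (c u) (b u) (n u) (j u) x) :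
    ∃ K : IntermediateField ↥(IntermediateField.adjoin F {t}) M,
      (¬ FiniteDimensional ↥(IntermediateField.adjoin F {t}) ↥K) ∧
      (∀ u, definableWithParams ↥K
        {x : ↥K | ∃ a ∈ A u, algebraMap F M a = (x : M)}) ∧
      (definableWithParams ↥K
        {x : ↥K | (x : M) ∈ Set.range (algebraMap F M)}) ∧
      (∀ H : IntermediateField ↥K M, FiniteDimensional ↥K ↥H →
        Module.finrank ↥K ↥H = 1 ∨ ∃ u, q u ∣ Module.finrank ↥K ↥H) := by
  have : Infinite F :=
    Set.infinite_univ_iff.1 ((hAcompl 0 ∅).mono (Set.subset_univ _))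
  have hqR : HasRadicalValues M q fun u => ratEvalFunc (c u) (b u) (n u) (j u) :=
    { prime := hqprime
      injective := hqdist
      cast_ne_zero := fun u h => hqchar u (by rw [← map_natCast (algebraMap F M), h, map_zero])
      not_dvd_intDegree := fun u => by rw [intDegree_ratEvalFunc]; exact (hdeg u).2
      exists_pow_eq := fun u x => by rw [eval_ratEvalFunc _ _ _ _ (hdist u)]; exact hroots u x }
  exact stmt_1_general A ht hqR
end
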